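/- arXiv:2009.06189 — 2 statements merged into one kernel-verified Lean document; each statement's English description precedes it below -/
import Mathlib

section
/- If |λ| > (1 + |α|)², then for every θ ∈ ℝ and every E ∈ σ(H_{α,θ,b}), the Lyapunov exponent L(E) is strictly positive. -/
open scoped Real

/-- The quasi-periodic potential `v(x) = 2λcos(2πx)/(1 - αcos(2πx))`. -/
noncomputable def potV (α lam : ℝ) (x : ℝ) : ℝ :=
  2 * lam * Real.cos (2 * Real.pi * x) / (1 - α * Real.cos (2 * Real.pi * x))

/-- One-step transfer matrix `A(x,z) = [[z - V x, -1],[1,0]]`. -/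
noncomputable def tMat (V : ℝ → ℝ) (x : ℝ) (z : ℂ) : Matrix (Fin 2) (Fin 2) ℂ :=
  !![z - (V x : ℝ), -1; 1, 0]

/-- The `n`-step transfer matrix `A_n(x,z) = A(x+(n-1)b,z) ⋯ A(x+b,z) A(x,z)`. -/
noncomputable def tProd (V : ℝ → ℝ) (b : ℝ) (n : ℕ) (x : ℝ) (z : ℂ) :
    Matrix (Fin 2) (Fin 2) ℂ :=
  (((List.range n).reverse).map (fun j => tMat V (x + (j : ℝ) * b) z)).prod

/-- The operator norm of a 2×2 complex matrix, acting on the Euclidean space `ℂ²`. -/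
noncomputable def opNorm2 (M : Matrix (Fin 2) (Fin 2) ℂ) : ℝ :=
  ‖Matrix.toEuclideanCLM (𝕜 := ℂ) M‖

/-- The Lyapunov exponent `L(z) = lim_n (1/n)∫₀¹ log‖A_n(x,z)‖ dx`; the limit exists and
equals `inf_{n ≥ 1} (1/n)∫₀¹ log‖A_n(x,z)‖ dx` by subadditivity, so we take that as the
definition. -/
noncomputable def lyap (V : ℝ → ℝ) (b : ℝ) (z : ℂ) : ℝ :=
  ⨅ n : ℕ+, ((n : ℝ))⁻¹ * ∫ x in (0:ℝ)..(1:ℝ), Real.log (opNorm2 (tProd V b n x z))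

/-- `IsSchrodingerOp V b θ H` says that `H` is the bounded operator on `ℓ²(ℤ)` given by
`(Hu)ₙ = u_{n+1} + u_{n-1} + V(nb+θ)uₙ`. -/
def IsSchrodingerOp (V : ℝ → ℝ) (b θ : ℝ)
    (H : lp (fun _ : ℤ => ℂ) 2 →L[ℂ] lp (fun _ : ℤ => ℂ) 2) : Prop :=
  ∀ u : lp (fun _ : ℤ => ℂ) 2, ∀ n : ℤ,
    (H u : ∀ _ : ℤ, ℂ) n = (u : ∀ _ : ℤ, ℂ) (n + 1) + (u : ∀ _ : ℤ, ℂ) (n - 1)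
      + (V ((n : ℝ) * b + θ) : ℂ) * (u : ∀ _ : ℤ, ℂ) n

/-!
Herman's subharmonicity argument. On the circle `w = exp (2πix)` one has
`1 - α cos (2πx) = |1 - β w|² / (1 + β²)` for some `|β| < 1`, so multiplying `A(x, E)` by the
unimodular Blaschke factor `(w - β) / (1 - β w)` gives a matrix `B(w)` analytic on the closed
disc. The rotation by `b` fixes the centre, hence `A_n` continues, up to unimodular factors, to a
function with value `B(0)ⁿ` at `w = 0`, and subharmonicity of `log ‖·‖` yields
`L(E) ≥ log ρ(B(0))`. As `B(0)` has determinant `β²` and trace `-(1 + β²)(αE + 2λ) / 2`, it has an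
eigenvalue outside the closed unit disc as soon as `|αE + 2λ| > 2`. On the spectrum this holds:
the two shifts have total norm at most `2`, so `E` is at distance at most `2` from the closure of
the values of `v`, while `αv + 2λ = 2λ / (1 - α cos (2πx))` has modulus at least `2|λ| / (1 + |α|)`.
-/

open Complex Filter Metric
open scoped Matrix.Norms.L2Operator

section Subharmonicity

lemma circleAverage_eq_integral_zero_one {F : Type*} [NormedAddCommGroup F]
    [NormedSpace ℝ F] (f : ℂ → F) (c : ℂ) (R : ℝ) :
    Real.circleAverage f c R = ∫ x in (0 : ℝ)..1, f (circleMap c R (2 * π * x)) := by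
  rw [Real.circleAverage_def,
    intervalIntegral.integral_comp_mul_left (fun t => f (circleMap c R t)) Real.two_pi_pos.ne',
    mul_zero, mul_one]

variable {c : ℂ} {R : ℝ}

lemma circleAverage_mono_codiscreteWithin {f g : ℂ → ℝ} (hR : R ≠ 0)
    (hf : CircleIntegrable f c R) (hg : CircleIntegrable g c R)
    (hfg : f ≤ᶠ[codiscreteWithin (sphere c |R|)] g) :
    Real.circleAverage f c R ≤ Real.circleAverage g c R := by
  rw [Real.circleAverage_def, Real.circleAverage_def, smul_eq_mul, smul_eq_mul]
  gcongr
  refine intervalIntegral.integral_mono_ae_restrict Real.two_pi_pos.le hf hg ?_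
  exact ae_restrict_le_codiscreteWithin measurableSet_Icc <|
    codiscreteWithin_mono (Set.subset_univ _) (circleMap_preimage_codiscrete hR hfg)

lemma log_norm_le_circleAverage_log_norm_of_complex {f : ℂ → ℂ}
    (hf : AnalyticOnNhd ℂ f (closedBall c |R|)) (hfc : f c ≠ 0) :
    Real.log ‖f c‖ ≤ Real.circleAverage (fun z => Real.log ‖f z‖) c R := by
  rcases eq_or_ne R 0 with rfl | hR
  · rw [Real.circleAverage_zero]
  rw [AnalyticOnNhd.circleAverage_log_norm hR hf hfc, le_add_iff_nonneg_left]
  refine finsum_nonneg fun u => ?_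
  by_cases hu : u ∈ closedBall c |R|
  · refine mul_nonneg (mod_cast MeromorphicOn.AnalyticOnNhd.divisor_nonneg hf u) ?_
    rcases eq_or_ne c u with rfl | hcu
    · simp
    · rw [← Real.log_abs, abs_mul, abs_inv, abs_norm, ← div_eq_mul_inv]
      refine Real.log_nonneg ((one_le_div (norm_pos_iff.2 (sub_ne_zero.2 hcu))).2 ?_)
      rwa [← dist_eq_norm, dist_comm]
  · rw [Function.locallyFinsuppWithin.apply_eq_zero_of_notMem _ hu, Int.cast_zero, zero_mul]

variable {F : Type*} [NormedAddCommGroup F] [NormedSpace ℂ F]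

theorem log_norm_le_circleAverage_log_norm {f : ℂ → F}
    (hf : AnalyticOnNhd ℂ f (closedBall c |R|)) (hfc : f c ≠ 0) :
    Real.log ‖f c‖ ≤ Real.circleAverage (fun z => Real.log ‖f z‖) c R := by
  rcases eq_or_ne R 0 with rfl | hR
  · rw [Real.circleAverage_zero]
  -- A norming functional at `f c` reduces the claim to the scalar Jensen inequality.
  obtain ⟨φ, hφ, hφc⟩ := exists_dual_vector ℂ (f c) (norm_ne_zero_iff.2 hfc)
  have hφf : AnalyticOnNhd ℂ (fun z => φ (f z)) (closedBall c |R|) :=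
    fun z hz => (φ.analyticAt _).comp (hf z hz)
  have hφfc : φ (f c) ≠ 0 := by
    simpa [hφc] using hfc
  have hne : ∀ᶠ z in codiscreteWithin (sphere c |R|), φ (f z) ≠ 0 :=
    codiscreteWithin_mono sphere_subset_closedBall <|
      hφf.preimage_zero_mem_codiscreteWithin hφfc
        (mem_closedBall_self (abs_nonneg R))
        ((convex_closedBall c |R|).isConnected (nonempty_closedBall.2 (abs_nonneg R)))
  calc Real.log ‖f c‖ = Real.log ‖φ (f c)‖ := by rw [hφc]; simp
    _ ≤ Real.circleAverage (fun z => Real.log ‖φ (f z)‖) c R :=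
      log_norm_le_circleAverage_log_norm_of_complex hφf hφfc
    _ ≤ Real.circleAverage (fun z => Real.log ‖f z‖) c R := by
      refine circleAverage_mono_codiscreteWithin hR
        (MeromorphicOn.circleIntegrable_log_norm
          fun z hz => (hφf z (sphere_subset_closedBall hz)).meromorphicAt)
        (MeromorphicOn.circleIntegrable_log_norm
          fun z hz => (hf z (sphere_subset_closedBall hz)).meromorphicAt) ?_
      filter_upwards [hne] with z hz
      have hle : ‖φ (f z)‖ ≤ ‖f z‖ := by simpa [hφ] using φ.le_opNorm (f z)
      exact Real.log_le_log (norm_pos_iff.2 hz) hle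

end Subharmonicity

section Matrix

lemma exists_mem_spectrum_one_lt_norm {M : Matrix (Fin 2) (Fin 2) ℂ}
    (hM : 1 + ‖M.det‖ < ‖M.trace‖) : ∃ μ ∈ spectrum ℂ M, 1 < ‖μ‖ := by
  have hroot (μ : ℂ) : μ ∈ spectrum ℂ M ↔ μ * (M.trace - μ) = M.det := by
    rw [Matrix.mem_spectrum_iff_isRoot_charpoly, Polynomial.IsRoot.def, Matrix.charpoly_fin_two]
    simp only [Polynomial.eval_add, Polynomial.eval_sub, Polynomial.eval_pow, Polynomial.eval_mul,
      Polynomial.eval_X, Polynomial.eval_C]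
    constructor <;> intro h <;> linear_combination -h
  obtain ⟨μ, hμ⟩ := spectrum.nonempty_of_isAlgClosed_of_finiteDimensional ℂ M
  have hdet := (hroot μ).1 hμ
  by_contra! hle
  have hμ₁ : ‖μ‖ ≤ 1 := hle μ hμ
  have hμ₂ : ‖M.trace - μ‖ ≤ 1 := hle _ ((hroot _).2 (by linear_combination hdet))
  have htr : ‖M.trace‖ ≤ ‖μ‖ + ‖M.trace - μ‖ := by
    simpa using norm_add_le μ (M.trace - μ)
  rw [← hdet, norm_mul] at hM
  nlinarith

lemma analyticAt_matrix {𝕜 X m n : Type*} [RCLike 𝕜] [NormedAddCommGroup X] [NormedSpace 𝕜 X]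
    [Fintype m] [Fintype n] [DecidableEq n] {f : X → Matrix m n 𝕜} {x : X}
    (hf : ∀ i j, AnalyticAt 𝕜 (fun y => f y i j) x) : AnalyticAt 𝕜 f x := by
  classical
  have hsum : f = fun y => ∑ i, ∑ j, f y i j • Matrix.single i j (1 : 𝕜) := by
    funext y
    simpa [Matrix.smul_single] using Matrix.matrix_eq_sum_single (f y)
  rw [hsum]
  exact Finset.analyticAt_fun_sum _ fun i _ => Finset.analyticAt_fun_sum _ fun j _ =>
    (hf i j).smul analyticAt_const

end Matrix

section Cocycle

/-- The iterates `A (T^[n-1] x) * ⋯ * A (T x) * A x` of the cocycle `(T, A)` over the dynamical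
system `T`, acting by left multiplication. -/
def cocycle {X M : Type*} [Monoid M] (T : X → X) (A : X → M) : ℕ → X → M
  | 0, _ => 1
  | n + 1, x => A (T^[n] x) * cocycle T A n x

section Monoid

variable {X Y M : Type*} [Monoid M]

lemma cocycle_eq_pow {T : X → X} (A : X → M) {x : X} (hx : Function.IsFixedPt T x) (n : ℕ) :
    cocycle T A n x = A x ^ n := by
  induction n with
  | zero => rw [cocycle, pow_zero]
  | succ n ih => rw [cocycle, ih, (hx.iterate n).eq, pow_succ']

lemma exists_cocycle_eq_smul {G : Type*} [Monoid G] [MulAction G M] [IsScalarTower G M M]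
    [SMulCommClass G M M] {S : X → X} {T : Y → Y} {A : X → M} {B : Y → M} {φ : X → Y}
    (hφ : Function.Semiconj φ S T) (hAB : ∀ x, ∃ c : G, B (φ x) = c • A x) (n : ℕ) (x : X) :
    ∃ c : G, cocycle T B n (φ x) = c • cocycle S A n x := by
  induction n with
  | zero => exact ⟨1, (one_smul G 1).symm⟩
  | succ n ih =>
    obtain ⟨c, hc⟩ := ih
    obtain ⟨d, hd⟩ := hAB (S^[n] x)
    exact ⟨d * c, by rw [cocycle, cocycle, ← hφ.iterate_right n, hd, hc, smul_mul_smul_comm]⟩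

end Monoid

lemma analyticOnNhd_cocycle {𝕜 X R : Type*} [NontriviallyNormedField 𝕜] [NormedAddCommGroup X]
    [NormedSpace 𝕜 X] [NormedRing R] [NormedAlgebra 𝕜 R] {T : X → X} {A : X → R} {U : Set X}
    (hT : AnalyticOnNhd 𝕜 T U) (hTU : Set.MapsTo T U U) (hA : AnalyticOnNhd 𝕜 A U) (n : ℕ) :
    AnalyticOnNhd 𝕜 (cocycle T A n) U := by
  have hTn (k : ℕ) : AnalyticOnNhd 𝕜 T^[k] U := by
    induction k with
    | zero => exact analyticOnNhd_id
    | succ k ih => exact Function.iterate_succ' T k ▸ hT.comp ih (hTU.iterate k)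
  induction n with
  | zero => exact analyticOnNhd_const
  | succ n ih => exact (hA.comp (hTn n) (hTU.iterate n)).mul ih

lemma tProd_eq_cocycle (V : ℝ → ℝ) (b : ℝ) (n : ℕ) (x : ℝ) (z : ℂ) :
    tProd V b n x z = cocycle (· + b) (fun y => tMat V y z) n x := by
  induction n with
  | zero => simp [tProd, cocycle]
  | succ n ih =>
    rw [cocycle, ← ih, add_right_iterate_apply, nsmul_eq_mul]
    simp [tProd, List.range_succ]

lemma opNorm2_eq_norm (M : Matrix (Fin 2) (Fin 2) ℂ) : opNorm2 M = ‖M‖ := rfl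

lemma circleMap_zero_one_semiconj_mul (b : ℝ) :
    Function.Semiconj (fun x : ℝ => circleMap 0 1 (2 * π * x)) (· + b)
      (circleMap 0 1 (2 * π * b) * ·) := by
  intro x
  simp only [circleMap_zero_mul, mul_add, mul_one, add_comm]

section Herman

variable {V : ℝ → ℝ} {z : ℂ} {B : ℂ → Matrix (Fin 2) (Fin 2) ℂ}

lemma mul_log_norm_le_integral_log_opNorm2_tProd (hB : AnalyticOnNhd ℂ B (closedBall 0 1))
    (hBV : ∀ x : ℝ, ∃ c : Circle, B (circleMap 0 1 (2 * π * x)) = c • tMat V x z)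
    {μ : ℂ} (hμB : μ ∈ spectrum ℂ (B 0)) (hμ : μ ≠ 0) (b : ℝ) (n : ℕ) :
    n * Real.log ‖μ‖ ≤ ∫ x in (0 : ℝ)..1, Real.log (opNorm2 (tProd V b n x z)) := by
  set ω := circleMap 0 1 (2 * π * b)
  have hω : Set.MapsTo (ω * ·) (closedBall 0 1) (closedBall 0 1) := fun w hw => by
    simpa [ω] using hw
  have hP : AnalyticOnNhd ℂ (cocycle (ω * ·) B n) (closedBall 0 |1|) := by
    rw [abs_one]
    exact analyticOnNhd_cocycle (analyticOnNhd_const.mul analyticOnNhd_id) hω hB n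
  have hP₀ : cocycle (ω * ·) B n 0 = B 0 ^ n := cocycle_eq_pow B (mul_zero ω) n
  have hμn : ‖μ ^ n‖ ≤ ‖B 0 ^ n‖ :=
    spectrum.norm_le_norm_of_mem (spectrum.pow_mem_pow (B 0) n hμB)
  have hμn₀ : 0 < ‖μ ^ n‖ := norm_pos_iff.2 (pow_ne_zero n hμ)
  have hcircle (x : ℝ) :
      ‖cocycle (ω * ·) B n (circleMap 0 1 (2 * π * x))‖ = opNorm2 (tProd V b n x z) := by
    obtain ⟨c, hc⟩ := exists_cocycle_eq_smul (circleMap_zero_one_semiconj_mul b) hBV n x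
    rw [hc, ← tProd_eq_cocycle, opNorm2_eq_norm, Circle.smul_def, norm_smul, Circle.norm_coe,
      one_mul]
  calc n * Real.log ‖μ‖ = Real.log ‖μ ^ n‖ := by rw [norm_pow, Real.log_pow]
    _ ≤ Real.log ‖cocycle (ω * ·) B n 0‖ := by
      rw [hP₀]
      exact Real.log_le_log hμn₀ hμn
    _ ≤ Real.circleAverage (fun w => Real.log ‖cocycle (ω * ·) B n w‖) 0 1 :=
      log_norm_le_circleAverage_log_norm hP <|
        norm_pos_iff.1 (hP₀ ▸ hμn₀.trans_le hμn)
    _ = ∫ x in (0 : ℝ)..1, Real.log (opNorm2 (tProd V b n x z)) := by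
      simp only [circleAverage_eq_integral_zero_one, hcircle]

theorem log_norm_le_lyap (hB : AnalyticOnNhd ℂ B (closedBall 0 1))
    (hBV : ∀ x : ℝ, ∃ c : Circle, B (circleMap 0 1 (2 * π * x)) = c • tMat V x z)
    {μ : ℂ} (hμB : μ ∈ spectrum ℂ (B 0)) (hμ : μ ≠ 0) (b : ℝ) :
    Real.log ‖μ‖ ≤ lyap V b z :=
  le_ciInf fun n => (le_inv_mul_iff₀ (mod_cast n.pos)).2 <|
    mul_log_norm_le_integral_log_opNorm2_tProd hB hBV hμB hμ b n

end Herman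

end Cocycle

section Potential

lemma exists_abs_lt_one_mul_one_add_sq_eq {α : ℝ} (hα : |α| < 1) :
    ∃ β : ℝ, |β| < 1 ∧ α * (1 + β ^ 2) = 2 * β := by
  obtain ⟨s, hs₀, hs⟩ : ∃ s : ℝ, 0 ≤ s ∧ s ^ 2 = 1 - α ^ 2 :=
    ⟨_, Real.sqrt_nonneg _, Real.sq_sqrt (sub_nonneg.2 ((sq_le_one_iff_abs_le_one α).2 hα.le))⟩
  have hpos : 0 < 1 + s := by positivity
  refine ⟨α / (1 + s), ?_, ?_⟩
  · rw [abs_div, abs_of_pos hpos, div_lt_one hpos]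
    linarith
  · rw [div_pow, ← sub_eq_zero]
    field_simp
    linear_combination α * hs

lemma one_sub_mul_ne_zero {𝕜 : Type*} [NormedField 𝕜] {β w : 𝕜} (hβ : ‖β‖ < 1)
    (hw : ‖w‖ ≤ 1) : 1 - β * w ≠ 0 := by
  refine sub_ne_zero.2 fun h => ?_
  have hlt : ‖β * w‖ < 1 := by
    rw [norm_mul]
    exact mul_lt_one_of_nonneg_of_lt_one_left (norm_nonneg β) hβ hw
  rw [← h, norm_one] at hlt
  exact hlt.false

/-- The Blaschke factor `(w - β) / (1 - β w)` of the unit disc with real zero `β`. -/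
noncomputable def blaschkeFactor (β : ℝ) (w : ℂ) : ℂ := (w - β) / (1 - β * w)

lemma norm_sub_eq_norm_one_sub_mul (β : ℝ) {w : ℂ} (hw : ‖w‖ = 1) : ‖w - β‖ = ‖1 - β * w‖ := by
  have hconj : w * starRingEnd ℂ w = 1 := by
    rw [mul_conj, normSq_eq_norm_sq, hw, one_pow, ofReal_one]
  calc ‖w - β‖ = ‖w * starRingEnd ℂ (w - β)‖ := by rw [norm_mul, hw, one_mul, norm_conj]
    _ = ‖1 - β * w‖ := by rw [map_sub, conj_ofReal, mul_sub, hconj, mul_comm w]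

lemma norm_blaschkeFactor {β : ℝ} (hβ : |β| < 1) {w : ℂ} (hw : ‖w‖ = 1) :
    ‖blaschkeFactor β w‖ = 1 := by
  rw [blaschkeFactor, norm_div, norm_sub_eq_norm_one_sub_mul β hw]
  exact div_self (norm_ne_zero_iff.2 (one_sub_mul_ne_zero (by simpa using hβ) hw.le))

/-- The analytic continuation to the disc of `blaschkeFactor β w • tMat (potV α lam) x z`, where
`w = exp (2πix)`. The parameters satisfy `α * (1 + β ^ 2) = 2 * β`, so that the pole `β` of the
potential inside the disc is cancelled by the Blaschke factor. -/
noncomputable def discTMat (α lam β : ℝ) (z w : ℂ) : Matrix (Fin 2) (Fin 2) ℂ :=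
  !![(1 + β ^ 2) * (z * w - (α * z + 2 * lam) * (w ^ 2 + 1) / 2) / (1 - β * w) ^ 2,
      -blaschkeFactor β w;
    blaschkeFactor β w, 0]

lemma analyticOnNhd_discTMat (α lam : ℝ) {β : ℝ} (hβ : |β| < 1) (z : ℂ) :
    AnalyticOnNhd ℂ (discTMat α lam β z) (closedBall 0 1) := by
  intro w hw
  have hne : 1 - β * w ≠ 0 := one_sub_mul_ne_zero (by simpa using hβ) (by simpa using hw)
  have hne' : (1 - β * w) ^ 2 ≠ 0 := pow_ne_zero 2 hne
  have hblaschke : AnalyticAt ℂ (blaschkeFactor β) w := by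
    unfold blaschkeFactor
    fun_prop (disch := assumption)
  have hentry : AnalyticAt ℂ (fun w => (1 + β ^ 2) *
      (z * w - (α * z + 2 * lam) * (w ^ 2 + 1) / 2) / (1 - β * w) ^ 2) w := by
    fun_prop (disch := assumption)
  exact analyticAt_matrix <| Fin.forall_fin_two.2
    ⟨Fin.forall_fin_two.2 ⟨hentry, hblaschke.neg⟩,
      Fin.forall_fin_two.2 ⟨hblaschke, analyticAt_const⟩⟩

lemma two_mul_cos_mul_circleMap (t : ℝ) :
    2 * (Real.cos t : ℂ) * circleMap 0 1 t = circleMap 0 1 t ^ 2 + 1 := by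
  have hexp : cexp (-(t * I)) * cexp (t * I) = 1 := by rw [← exp_add, neg_add_cancel, exp_zero]
  rw [circleMap_zero, ofReal_one, one_mul, ofReal_cos, two_cos, neg_mul]
  linear_combination hexp

lemma one_add_sq_mul_one_sub_mul_cos {α β : ℝ} (hαβ : α * (1 + β ^ 2) = 2 * β) (t : ℝ) :
    (1 + β ^ 2) * (circleMap 0 1 t * (1 - α * (Real.cos t : ℂ))) =
      (1 - β * circleMap 0 1 t) * (circleMap 0 1 t - β) := by
  have hαβ' : (α : ℂ) * (1 + β ^ 2) = 2 * β := mod_cast hαβ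
  linear_combination (-circleMap 0 1 t * (Real.cos t : ℂ)) * hαβ' -
    β * two_mul_cos_mul_circleMap t

lemma discTMat_circleMap {α β : ℝ} (hβ : |β| < 1) (hαβ : α * (1 + β ^ 2) = 2 * β) (lam : ℝ)
    (z : ℂ) (x : ℝ) :
    discTMat α lam β z (circleMap 0 1 (2 * π * x)) =
      blaschkeFactor β (circleMap 0 1 (2 * π * x)) • tMat (potV α lam) x z := by
  set w := circleMap 0 1 (2 * π * x)
  set C : ℂ := (Real.cos (2 * π * x) : ℂ) with hC
  have hw : ‖w‖ = 1 := by simp [w]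
  have hne : 1 - β * w ≠ 0 := one_sub_mul_ne_zero (by simpa using hβ) hw.le
  have hfac : (1 + β ^ 2) * (w * (1 - α * C)) = (1 - β * w) * (w - β) :=
    one_add_sq_mul_one_sub_mul_cos hαβ (2 * π * x)
  have hCw : 2 * C * w = w ^ 2 + 1 := two_mul_cos_mul_circleMap (2 * π * x)
  have hwβ : w - β ≠ 0 := by
    rwa [← norm_ne_zero_iff, norm_sub_eq_norm_one_sub_mul β hw, norm_ne_zero_iff]
  have hαC : 1 - α * C ≠ 0 := fun h => mul_ne_zero hne hwβ (by rw [← hfac, h]; ring)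
  have hpot : (potV α lam x : ℂ) = 2 * lam * C / (1 - α * C) := by
    rw [potV]
    push_cast [hC]
    rfl
  have hentry : (1 + β ^ 2) * (z * w - (α * z + 2 * lam) * (w ^ 2 + 1) / 2) / (1 - β * w) ^ 2 =
      blaschkeFactor β w * (z - potV α lam x) := by
    rw [hpot, blaschkeFactor, ← hCw]
    field_simp
    linear_combination (z - (α * z + 2 * lam) * C) * hfac
  ext i j
  fin_cases i <;> fin_cases j <;> simp [discTMat, tMat, hentry]

lemma exists_circle_discTMat_eq_smul {α β : ℝ} (hβ : |β| < 1) (hαβ : α * (1 + β ^ 2) = 2 * β)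
    (lam : ℝ) (z : ℂ) (x : ℝ) :
    ∃ c : Circle, discTMat α lam β z (circleMap 0 1 (2 * π * x)) =
      c • tMat (potV α lam) x z :=
  ⟨⟨blaschkeFactor β (circleMap 0 1 (2 * π * x)),
    mem_sphere_zero_iff_norm.2 (norm_blaschkeFactor hβ (by simp))⟩,
    discTMat_circleMap hβ hαβ lam z x⟩

lemma trace_discTMat_zero (α lam β : ℝ) (z : ℂ) :
    (discTMat α lam β z 0).trace = -((1 + β ^ 2 : ℝ) * (α * z + 2 * lam) / 2) := by
  simp [discTMat, Matrix.trace_fin_two]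
  ring

lemma det_discTMat_zero (α lam β : ℝ) (z : ℂ) : (discTMat α lam β z 0).det = (β ^ 2 : ℝ) := by
  simp [discTMat, Matrix.det_fin_two, blaschkeFactor]
  ring

theorem lyap_potV_pos {α lam : ℝ} {z : ℂ} (hα : |α| < 1) (hz : 2 < ‖α * z + 2 * lam‖) (b : ℝ) :
    0 < lyap (potV α lam) b z := by
  obtain ⟨β, hβ, hαβ⟩ := exists_abs_lt_one_mul_one_add_sq_eq hα
  have hpos : 0 < 1 + β ^ 2 := by positivity
  have htrace : 1 + ‖(discTMat α lam β z 0).det‖ < ‖(discTMat α lam β z 0).trace‖ := by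
    rw [det_discTMat_zero, trace_discTMat_zero, norm_neg, norm_div, norm_mul, norm_real, norm_real,
      Real.norm_of_nonneg hpos.le, Real.norm_of_nonneg (sq_nonneg β), RCLike.norm_ofNat,
      lt_div_iff₀ two_pos]
    gcongr
  obtain ⟨μ, hμ, hμ₁⟩ := exists_mem_spectrum_one_lt_norm htrace
  exact (Real.log_pos hμ₁).trans_le <| log_norm_le_lyap (analyticOnNhd_discTMat α lam hβ z)
    (exists_circle_discTMat_eq_smul hβ hαβ lam z) hμ (norm_pos_iff.1 (one_pos.trans hμ₁)) b

end Potential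

section Spectrum

section Lp

variable {ι κ 𝕜 F : Type*} {p : ENNReal}

lemma memℓp_comp_equiv [NormedAddCommGroup F] (e : κ ≃ ι) {f : ι → F}
    (hf : Memℓp f p) : Memℓp (fun k => f (e k)) p := by
  rcases p.trichotomy with rfl | rfl | hp
  · rw [memℓp_zero_iff] at hf ⊢
    exact hf.preimage e.injective.injOn
  · rw [memℓp_infty_iff] at hf ⊢
    exact hf.mono (Set.range_comp_subset_range e fun i => ‖f i‖)
  · rw [memℓp_gen_iff hp] at hf ⊢
    exact (e.summable_iff (f := fun i => ‖f i‖ ^ p.toReal)).2 hf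

variable [NormedAddCommGroup F] [Fact (1 ≤ p)]

lemma norm_lp_comp_equiv_le (e : κ ≃ ι) (u : lp (fun _ : ι => F) p) :
    ‖(⟨fun k => u (e k), memℓp_comp_equiv e (lp.memℓp u)⟩ : lp (fun _ : κ => F) p)‖ ≤ ‖u‖ := by
  rcases p.dichotomy with rfl | hp
  · exact lp.norm_le_of_forall_le (norm_nonneg u)
      fun k => lp.norm_apply_le_norm ENNReal.top_ne_zero u (e k)
  · have hp₀ : 0 < p.toReal := one_pos.trans_le hp
    refine lp.norm_le_of_tsum_le hp₀ (norm_nonneg u) ?_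
    rw [lp.norm_rpow_eq_tsum hp₀]
    exact (e.tsum_eq fun i => ‖u i‖ ^ p.toReal).le

/-- Composition with a bijection `e` of the index sets, as an operator on `ℓᵖ`; for
`e = Equiv.addRight k` on `ℤ` this is a shift. -/
noncomputable def lpCompEquiv (𝕜 : Type*) (F : Type*) (p : ENNReal) [Fact (1 ≤ p)]
    [NontriviallyNormedField 𝕜] [NormedAddCommGroup F] [NormedSpace 𝕜 F] (e : κ ≃ ι) :
    lp (fun _ : ι => F) p →L[𝕜] lp (fun _ : κ => F) p :=
  LinearMap.mkContinuous
    { toFun := fun u => ⟨fun k => u (e k), memℓp_comp_equiv e (lp.memℓp u)⟩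
      map_add' := fun _ _ => rfl
      map_smul' := fun _ _ => rfl } 1
    fun u => (norm_lp_comp_equiv_le e u).trans_eq (one_mul ‖u‖).symm

variable [NontriviallyNormedField 𝕜] [NormedSpace 𝕜 F]

lemma lpCompEquiv_apply (e : κ ≃ ι) (u : lp (fun _ : ι => F) p) (k : κ) :
    lpCompEquiv 𝕜 F p e u k = u (e k) := rfl

lemma norm_lpCompEquiv_le (e : κ ≃ ι) : ‖lpCompEquiv 𝕜 F p e‖ ≤ 1 :=
  LinearMap.mkContinuous_norm_le _ zero_le_one _

end Lp

lemma isUnit_add_of_diagonal {ι 𝕜 : Type*} {p : ENNReal} [Fact (1 ≤ p)]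
    [NontriviallyNormedField 𝕜] [CompleteSpace 𝕜] {m : ι → 𝕜}
    {T K : lp (fun _ : ι => 𝕜) p →L[𝕜] lp (fun _ : ι => 𝕜) p} {δ : ℝ}
    (hT : ∀ u i, T u i = m i * u i) (hm : ∀ i, δ ≤ ‖m i‖) (hK : ‖K‖ < δ) : IsUnit (T + K) := by
  have hδ : 0 < δ := (norm_nonneg K).trans_lt hK
  have hm₀ (i : ι) : m i ≠ 0 := norm_pos_iff.1 (hδ.trans_le (hm i))
  let A : ι → 𝕜 →L[𝕜] 𝕜 := fun i => ContinuousLinearMap.mul 𝕜 𝕜 (m i)⁻¹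
  have hA (i : ι) : ‖A i‖ ≤ δ⁻¹ := by
    rw [ContinuousLinearMap.opNorm_mul_apply, norm_inv]
    exact inv_anti₀ hδ (hm i)
  let S := lp.mapCLM p A (inv_nonneg.2 hδ.le) hA
  have hS : ‖S‖ ≤ δ⁻¹ := lp.norm_mapCLM_le p A (inv_nonneg.2 hδ.le) hA
  have hTS : T * S = 1 := by
    ext u i
    exact (hT (S u) i).trans (mul_inv_cancel_left₀ (hm₀ i) (u i))
  have hST : S * T = 1 := by
    ext u i
    exact (congrArg ((m i)⁻¹ * ·) (hT u i)).trans (inv_mul_cancel_left₀ (hm₀ i) (u i))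
  have hSK : ‖-(S * K)‖ < 1 := by
    rw [norm_neg]
    calc ‖S * K‖ ≤ ‖S‖ * ‖K‖ := norm_mul_le S K
      _ ≤ δ⁻¹ * ‖K‖ := by gcongr
      _ < 1 := (inv_mul_lt_one₀ hδ).2 hK
  have hfac : T + K = T * (1 - -(S * K)) := by
    rw [sub_neg_eq_add, mul_add, mul_one, ← mul_assoc, hTS, one_mul]
  have hTunit : IsUnit T := ⟨⟨T, S, hTS, hST⟩, rfl⟩
  exact hfac ▸ hTunit.mul (isUnit_one_sub_of_norm_lt_one hSK)

theorem exists_norm_potential_sub_lt_of_mem_spectrum {𝕜 : Type*} [NontriviallyNormedField 𝕜]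
    [CompleteSpace 𝕜] {p : ENNReal} [Fact (1 ≤ p)] {W : ℤ → 𝕜}
    {H : lp (fun _ : ℤ => 𝕜) p →L[𝕜] lp (fun _ : ℤ => 𝕜) p}
    (hH : ∀ u n, H u n = u (n + 1) + u (n - 1) + W n * u n)
    {E : 𝕜} (hE : E ∈ spectrum 𝕜 H) {δ : ℝ} (hδ : 2 < δ) : ∃ n, ‖W n - E‖ < δ := by
  by_contra! hW
  let S : ℤ → lp (fun _ : ℤ => 𝕜) p →L[𝕜] lp (fun _ : ℤ => 𝕜) p :=
    fun k => lpCompEquiv 𝕜 𝕜 p (Equiv.addRight k)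
  have hS (k : ℤ) : ‖S k‖ ≤ 1 := norm_lpCompEquiv_le (Equiv.addRight k)
  have hK : ‖S 1 + S (-1)‖ < δ :=
    (norm_add_le_of_le (hS 1) (hS (-1))).trans_lt (by linarith)
  have hD (u : lp (fun _ : ℤ => 𝕜) p) (n : ℤ) :
      (H - algebraMap 𝕜 _ E - (S 1 + S (-1))) u n = (W n - E) * u n :=
    calc (H - algebraMap 𝕜 _ E - (S 1 + S (-1))) u n
        = H u n - E * u n - (u (n + 1) + u (n - 1)) := rfl
      _ = (W n - E) * u n := by rw [hH]; ring
  have hunit : IsUnit (H - algebraMap 𝕜 _ E) := by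
    simpa only [sub_add_cancel] using isUnit_add_of_diagonal hD hW hK
  exact spectrum.notMem_iff.2 (neg_sub H (algebraMap 𝕜 _ E) ▸ hunit.neg) hE

lemma two_mul_abs_div_le_abs_mul_potV_add {α : ℝ} (hα : |α| < 1) (lam x : ℝ) :
    2 * |lam| / (1 + |α|) ≤ |α * potV α lam x + 2 * lam| := by
  have hαc : |α * Real.cos (2 * π * x)| ≤ |α| := by
    rw [abs_mul]
    exact mul_le_of_le_one_right (abs_nonneg α) (Real.abs_cos_le_one _)
  obtain ⟨hge, hle⟩ := abs_le.1 hαc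
  have hden : 0 < 1 - α * Real.cos (2 * π * x) := by linarith
  have hmob : α * potV α lam x + 2 * lam = 2 * lam / (1 - α * Real.cos (2 * π * x)) := by
    rw [potV]
    field_simp
    ring
  rw [hmob, abs_div, abs_mul, abs_two, abs_of_pos hden]
  gcongr
  linarith

theorem two_lt_norm_mul_add_of_mem_spectrum {α lam b θ : ℝ} (hα : |α| < 1)
    (hlam : (1 + |α|) ^ 2 < |lam|) {H : lp (fun _ : ℤ => ℂ) 2 →L[ℂ] lp (fun _ : ℤ => ℂ) 2}
    (hH : IsSchrodingerOp (potV α lam) b θ H) {E : ℂ} (hE : E ∈ spectrum ℂ H) :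
    2 < ‖α * E + 2 * lam‖ := by
  set m := 2 * |lam| / (1 + |α|)
  have hm : 2 * (1 + |α|) < m := by
    rw [lt_div_iff₀ (by positivity)]
    linarith
  obtain ⟨n, hn⟩ :=
    exists_norm_potential_sub_lt_of_mem_spectrum hH hE (show 2 < m - 2 * |α| by linarith)
  set v : ℝ := potV α lam (n * b + θ)
  have hv : m ≤ ‖(α * v + 2 * lam : ℂ)‖ := by
    have habs := two_mul_abs_div_le_abs_mul_potV_add hα lam (n * b + θ)
    rw [← Real.norm_eq_abs, ← norm_real] at habs
    exact_mod_cast habs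
  calc 2 < m - |α| * (m - 2 * |α|) := by nlinarith
    _ ≤ ‖(α * v + 2 * lam : ℂ)‖ - ‖α * (v - E)‖ := by
      rw [norm_mul, norm_real, Real.norm_eq_abs]
      gcongr
    _ ≤ ‖(α * v + 2 * lam) - α * (v - E)‖ := norm_sub_norm_le _ _
    _ = ‖α * E + 2 * lam‖ := by ring_nf

end Spectrum

theorem lyapunov_pos_of_large_coupling_general {α lam b θ : ℝ} (hα : |α| < 1)
    (hlam : (1 + |α|) ^ 2 < |lam|) {H : lp (fun _ : ℤ => ℂ) 2 →L[ℂ] lp (fun _ : ℤ => ℂ) 2}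
    (hH : IsSchrodingerOp (potV α lam) b θ H) {E : ℂ} (hE : E ∈ spectrum ℂ H) :
    0 < lyap (potV α lam) b E :=
  lyap_potV_pos hα (two_lt_norm_mul_add_of_mem_spectrum hα hlam hH hE) b

/-- if `|λ| > (1+|α|)²`, then for every `θ` and every `E` in the spectrum of
`H_{α,θ,b}`, the Lyapunov exponent `L(E)` is strictly positive. -/
theorem lyapunov_pos_of_large_coupling (α lam b θ : ℝ) (hα : α ∈ Set.Ioo (-1 : ℝ) 1)
    (hb : Irrational b) (hlam : (1 + |α|) ^ 2 < |lam|)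
    (H : lp (fun _ : ℤ => ℂ) 2 →L[ℂ] lp (fun _ : ℤ => ℂ) 2)
    (hH : IsSchrodingerOp (potV α lam) b θ H)
    (E : ℝ) (hE : (E : ℂ) ∈ spectrum ℂ H) :
    0 < lyap (potV α lam) b (E : ℂ) := by
  exact lyapunov_pos_of_large_coupling_general (abs_lt.2 hα) hlam hH hE
end

section
/- Let α = 0, so that the operator is the almost Mathieu operator with potential v(x) = 2λcos(2πx). Then for every θ ∈ ℝ and every E ∈ σ(H_{0,θ,b}), the Lyapunov exponent satisfies L(E) = max{ log|λ|, 0 }. -/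
open scoped Real

/-! Write `L(ρ)` for the Lyapunov exponent at energy `E` with `exp (2πix)` replaced by `ρ exp
(2πix)` in the potential.

*Aubry duality.* In the rotation algebra, exchanging hopping and potential is an automorphism
that preserves the trace, so `T* T`, for `T` the complexified operator minus `E`, and its
analogue for the dual operator have the same moments. Hence `log det (T* T + δ)` has, up to
`o(n)`, the same average over the phase for truncations of the two operators to `[0, n)`. The
cocycle of one operator bounds this determinant from below and that of the other bounds it from
above, because the minors of a tridiagonal matrix are entries of transfer matrices. Comparing the
couplings `λ` and `1 / λ` gives `log |λ| ≤ L(1)` and `L(ρ) ≤ max (L(1)) (log |λ| + |log ρ|)`.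

*Spectrum.* If `‖A_{2h}(x)‖ > 3 (‖A_h(x)‖ + ‖A_h(x + hb)‖)` for all `x`, then every Cauchy datum
of an almost solution is dominated by those `h` sites away, `H - E` is bounded below, and `E` is
not in the spectrum. So for `E` in the spectrum and every `h` the opposite inequality holds at
some `x`.

*Interpolation.* Suppose that `L = L(1)` exceeds both `0` and `log |λ|`. For `h = Ks` with `K` a
large constant, `‖A_{2h}‖` is then of size only about `exp (hL)`, instead of `exp (2hL)`, along
`2s` points of an orbit. The entries of `A_{2h}` are Laurent polynomials in `exp (2πix)`, bounded
by about `exp (2hL)` on an annulus containing the unit circle because `L(ρ) ≤ L` for `ρ` near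
`1`. For infinitely many `s` the orbit points are well separated, and Lagrange interpolation with
the maximum principle on the annulus makes `‖A_{2h}‖` exponentially smaller than `exp (2hL)` on
the whole circle, which contradicts the subadditivity bound `exp (2hL) ≤ sup ‖A_{2h}‖`.
-/

namespace AlmostMathieu

open Filter Topology Matrix MeasureTheory intervalIntegral
open scoped Matrix.Norms.L2Operator FourierTransform
open Finset.HasAntidiagonal (antidiagonal)

section MatrixNorm

variable {m n 𝕜 : Type*} [Fintype m] [Fintype n] [DecidableEq n] [RCLike 𝕜]

lemma norm_entry_le_l2_opNorm (M : Matrix m n 𝕜) (i : m) (j : n) : ‖M i j‖ ≤ ‖M‖ := by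
  have h := M.l2_opNorm_mulVec (EuclideanSpace.single j 1)
  rw [PiLp.norm_single, norm_one, mul_one] at h
  simpa using (PiLp.norm_apply_le _ i).trans h

lemma l2_opNorm_single [DecidableEq m] (i : m) (j : n) (a : 𝕜) :
    ‖(single i j a : Matrix m n 𝕜)‖ = ‖a‖ := by
  have h : ‖(single i j a : Matrix m n 𝕜)‖ * ‖(single i j a : Matrix m n 𝕜)‖ = ‖a‖ * ‖a‖ := by
    rw [← l2_opNorm_conjTranspose_mul_self, conjTranspose_single, single_mul_single_same,
      ← diagonal_single, l2_opNorm_diagonal, Pi.norm_single, norm_mul, norm_star]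
  exact (mul_self_inj (norm_nonneg _) (norm_nonneg _)).1 h

lemma l2_opNorm_le_sum_norm_entry (M : Matrix m n 𝕜) : ‖M‖ ≤ ∑ i, ∑ j, ‖M i j‖ := by
  classical
  conv_lhs => rw [matrix_eq_sum_single M]
  refine (norm_sum_le _ _).trans (Finset.sum_le_sum fun i _ => (norm_sum_le _ _).trans ?_)
  simp only [l2_opNorm_single, le_refl]

lemma one_le_l2_opNorm_of_det_eq_one [Nonempty n] {M : Matrix n n 𝕜} (hM : M.det = 1) :
    1 ≤ ‖M‖ := by
  by_contra! h
  have h0 : Tendsto (fun k : ℕ => (M ^ k).det) atTop (𝓝 (0 : Matrix n n 𝕜).det) :=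
    ((continuous_id.matrix_det).tendsto 0).comp (tendsto_pow_atTop_nhds_zero_of_norm_lt_one h)
  simp only [det_pow, hM, one_pow, det_zero] at h0
  exact zero_ne_one (tendsto_nhds_unique h0 tendsto_const_nhds)

lemma exists_l2_opNorm_le_four_mul (M : Matrix (Fin 2) (Fin 2) 𝕜) :
    ∃ i j, ‖M‖ ≤ 4 * ‖M i j‖ := by
  by_contra! h
  have := l2_opNorm_le_sum_norm_entry M
  simp only [Fin.sum_univ_two] at this
  linarith [h 0 0, h 0 1, h 1 0, h 1 1]

lemma l2_opNorm_adjugate_fin_two_le (M : Matrix (Fin 2) (Fin 2) 𝕜) :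
    ‖M.adjugate‖ ≤ 4 * ‖M‖ := by
  refine (l2_opNorm_le_sum_norm_entry _).trans ?_
  simp only [Fin.sum_univ_two, adjugate_fin_two, of_apply, cons_val', cons_val_zero, cons_val_one,
    norm_neg, cons_val_fin_one]
  linarith [norm_entry_le_l2_opNorm M 0 0, norm_entry_le_l2_opNorm M 0 1,
    norm_entry_le_l2_opNorm M 1 0, norm_entry_le_l2_opNorm M 1 1]

end MatrixNorm

section Cocycle

/-- The transfer matrix of the difference equation `u (k + 1) = z * u k - u (k - 1)`. -/
def transferMatrix (z : ℂ) : Matrix (Fin 2) (Fin 2) ℂ := !![z, -1; 1, 0]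

/-- The Schrödinger cocycle of `g` over the rotation by `b`: its `n`-th iterate at `x` is
`T (g (x + (n - 1) b)) ⋯ T (g x)` with `T = transferMatrix`. At energy `E` the almost Mathieu
cocycle is the one of `g = E - v`; complex values of `g` arise from complexified phases. -/
def cocycle (g : ℝ → ℂ) (b : ℝ) : ℕ → ℝ → Matrix (Fin 2) (Fin 2) ℂ
  | 0, _ => 1
  | n + 1, x => transferMatrix (g (x + n * b)) * cocycle g b n x

variable {g : ℝ → ℂ} {b : ℝ}

lemma cocycle_succ (g : ℝ → ℂ) (b : ℝ) (n : ℕ) (x : ℝ) :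
    cocycle g b (n + 1) x = transferMatrix (g (x + n * b)) * cocycle g b n x := rfl

lemma cocycle_add (g : ℝ → ℂ) (b : ℝ) (m n : ℕ) (x : ℝ) :
    cocycle g b (m + n) x = cocycle g b m (x + n * b) * cocycle g b n x := by
  induction m with
  | zero => simp [cocycle]
  | succ m ih =>
    rw [add_right_comm, cocycle_succ, ih, cocycle_succ, Matrix.mul_assoc]
    push_cast
    ring_nf

lemma det_cocycle (g : ℝ → ℂ) (b : ℝ) (n : ℕ) (x : ℝ) : (cocycle g b n x).det = 1 := by
  induction n with
  | zero => simp [cocycle]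
  | succ n ih => rw [cocycle_succ, det_mul, ih, transferMatrix, det_fin_two_of]; ring

lemma one_le_norm_cocycle (g : ℝ → ℂ) (b : ℝ) (n : ℕ) (x : ℝ) : 1 ≤ ‖cocycle g b n x‖ :=
  one_le_l2_opNorm_of_det_eq_one (det_cocycle g b n x)

lemma norm_cocycle_pos (g : ℝ → ℂ) (b : ℝ) (n : ℕ) (x : ℝ) : 0 < ‖cocycle g b n x‖ :=
  one_pos.trans_le (one_le_norm_cocycle g b n x)

lemma continuous_cocycle (hg : Continuous g) (b : ℝ) (n : ℕ) : Continuous (cocycle g b n) := by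
  induction n with
  | zero => exact continuous_const
  | succ n ih =>
    have hT : Continuous transferMatrix := continuous_matrix <|
      Fin.forall_fin_two.2 ⟨Fin.forall_fin_two.2 ⟨continuous_id, continuous_const⟩,
        Fin.forall_fin_two.2 ⟨continuous_const, continuous_const⟩⟩
    exact (hT.comp (by fun_prop : Continuous fun x => g (x + n * b))).mul ih

lemma periodic_cocycle (hg : Function.Periodic g 1) (b : ℝ) (n : ℕ) :
    Function.Periodic (cocycle g b n) 1 := by
  intro x
  induction n with
  | zero => rfl
  | succ n ih => rw [cocycle_succ, cocycle_succ, ih, add_right_comm, hg]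

lemma continuous_log_norm_cocycle (hg : Continuous g) (b : ℝ) (n : ℕ) :
    Continuous fun x => Real.log ‖cocycle g b n x‖ :=
  (continuous_cocycle hg b n).norm.log fun x => (norm_cocycle_pos g b n x).ne'

/-- The Lyapunov exponent of the cocycle of `g`. As in `lyap`, the limit of the averaged
logarithmic growth rates is encoded as their infimum, to which it is equal by subadditivity. -/
noncomputable def lyapunovExponent (g : ℝ → ℂ) (b : ℝ) : ℝ :=
  ⨅ n : ℕ+, (n : ℝ)⁻¹ * ∫ x in (0 : ℝ)..1, Real.log ‖cocycle g b n x‖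

lemma tProd_eq_cocycle (V : ℝ → ℝ) (b : ℝ) (n : ℕ) (x : ℝ) (z : ℂ) :
    tProd V b n x z = cocycle (fun t => z - (V t : ℝ)) b n x := by
  induction n with
  | zero => simp [tProd, cocycle]
  | succ n ih =>
    rw [cocycle_succ, ← ih, tProd, tProd, List.range_succ]
    simp [tMat, transferMatrix]

lemma lyap_eq_lyapunovExponent (V : ℝ → ℝ) (b : ℝ) (z : ℂ) :
    lyap V b z = lyapunovExponent (fun t => z - (V t : ℝ)) b := by
  simp only [lyap, lyapunovExponent, tProd_eq_cocycle, opNorm2, l2_opNorm_def]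
  rfl

lemma lyapunovExponent_average_nonneg (g : ℝ → ℂ) (b : ℝ) (n : ℕ) :
    0 ≤ (n : ℝ)⁻¹ * ∫ x in (0 : ℝ)..1, Real.log ‖cocycle g b n x‖ :=
  mul_nonneg (by positivity) <| integral_nonneg zero_le_one fun x _ =>
    Real.log_nonneg (one_le_norm_cocycle g b n x)

lemma lyapunovExponent_nonneg (g : ℝ → ℂ) (b : ℝ) : 0 ≤ lyapunovExponent g b :=
  Real.iInf_nonneg fun n => lyapunovExponent_average_nonneg g b n

lemma lyapunovExponent_le_average (g : ℝ → ℂ) (b : ℝ) (n : ℕ+) :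
    lyapunovExponent g b ≤ (n : ℝ)⁻¹ * ∫ x in (0 : ℝ)..1, Real.log ‖cocycle g b n x‖ :=
  ciInf_le ⟨0, Set.forall_mem_range.2 fun n : ℕ+ => lyapunovExponent_average_nonneg g b n⟩ n

end Cocycle

section Equidistribution

/-- Composition with the rotation by `b`, as an operator on the continuous functions on `ℝ / ℤ`. -/
noncomputable def koopman (b : ℝ) : C(UnitAddCircle, ℂ) →L[ℂ] C(UnitAddCircle, ℂ) :=
  ContinuousMap.compCLM ℂ ℂ (ContinuousMap.addRight (b : UnitAddCircle))

/-- Integration against the Haar probability measure of `ℝ / ℤ`. -/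
noncomputable def circleMean : C(UnitAddCircle, ℂ) →L[ℂ] ℂ where
  toFun F := ∫ t in (0 : ℝ)..1, F (t : UnitAddCircle)
  map_add' F G := integral_add
    ((F.continuous.comp (AddCircle.continuous_mk' 1)).intervalIntegrable _ _)
    ((G.continuous.comp (AddCircle.continuous_mk' 1)).intervalIntegrable _ _)
  map_smul' a F := integral_smul a fun t : ℝ => F (t : UnitAddCircle)
  cont := continuous_parametric_intervalIntegral_of_continuous' (by fun_prop) 0 1

lemma circleMean_apply (F : C(UnitAddCircle, ℂ)) :
    circleMean F = ∫ t in (0 : ℝ)..1, F (t : UnitAddCircle) := rfl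

lemma koopman_iterate_apply (b : ℝ) (F : C(UnitAddCircle, ℂ)) (l : ℕ) (x : ℝ) :
    (koopman b)^[l] F x = F (x + l * b : ℝ) := by
  induction l generalizing x with
  | zero => simp
  | succ l ih =>
    rw [Function.iterate_succ_apply']
    change (koopman b)^[l] F (x + b : UnitAddCircle) = _
    rw [← AddCircle.coe_add, ih]
    push_cast
    ring_nf

lemma lipschitzWith_koopman (b : ℝ) : LipschitzWith 1 (koopman b) := by
  refine (koopman b).lipschitz.weaken ?_
  refine NNReal.coe_le_coe.1 ((koopman b).opNorm_le_bound zero_le_one fun F => ?_)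
  rw [NNReal.coe_one, one_mul, ContinuousMap.norm_le _ (norm_nonneg _)]
  exact fun x => F.norm_coe_le_norm _

lemma fourierChar_intCast (k : ℤ) : (𝐞 (k : ℝ) : ℂ) = 1 := by
  rw [Real.fourierChar_apply, Complex.exp_eq_one_iff]
  exact ⟨k, by push_cast; ring⟩

lemma periodic_fourierChar : Function.Periodic 𝐞 1 := by
  intro x
  have h : 𝐞 1 = 1 := Circle.ext (by simpa using fourierChar_intCast 1)
  rw [AddChar.map_add_eq_mul, h, mul_one]

lemma fourier_eq_fourierChar (k : ℤ) (x : ℝ) :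
    (fourier k (x : UnitAddCircle) : ℂ) = 𝐞 (k * x) := by
  rw [fourier_coe_apply, Real.fourierChar_apply]
  push_cast
  ring_nf

lemma fourierChar_intCast_mul_ne_one {b : ℝ} (hb : Irrational b) {k : ℤ} (hk : k ≠ 0) :
    (𝐞 (k * b) : ℂ) ≠ 1 := by
  rw [Real.fourierChar_apply, Ne, Complex.exp_eq_one_iff]
  rintro ⟨n, hn⟩
  refine (hb.intCast_mul hk).ne_int n ?_
  have h : ((k * b : ℝ) : ℂ) = n := mul_right_cancel₀ Complex.two_pi_I_ne_zero <| by
    rw [← hn]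
    push_cast
    ring
  exact_mod_cast h

lemma integral_fourierChar (k : ℤ) :
    ∫ t in (0 : ℝ)..1, (𝐞 (k * t) : ℂ) = if k = 0 then 1 else 0 := by
  split_ifs with hk
  · simp [hk]
  · have hc : (2 * π * k * Complex.I : ℂ) ≠ 0 := by simp [Real.pi_ne_zero, hk]
    have h : ∀ t : ℝ, (𝐞 (k * t) : ℂ) = Complex.exp (2 * π * k * Complex.I * t) := fun t => by
      rw [Real.fourierChar_apply]
      push_cast
      ring_nf
    have h1 := h 1
    rw [mul_one, fourierChar_intCast] at h1
    simp_rw [h, integral_exp_mul_complex hc, ← h1]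
    simp

lemma koopman_iterate_fourier (b : ℝ) (k : ℤ) (l : ℕ) :
    (koopman b)^[l] (fourier k) = (𝐞 (k * b) : ℂ) ^ l • fourier k := by
  ext x
  induction x using QuotientAddGroup.induction_on with | H x =>
  rw [koopman_iterate_apply, ContinuousMap.smul_apply, fourier_eq_fourierChar,
    fourier_eq_fourierChar, ← Circle.coe_pow, ← AddChar.map_nsmul_eq_pow, smul_eq_mul,
    ← Circle.coe_mul, ← AddChar.map_add_eq_mul, nsmul_eq_mul]
  ring_nf

lemma tendsto_birkhoffAverage_koopman_fourier {b : ℝ} (hb : Irrational b) (k : ℤ) :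
    Tendsto (birkhoffAverage ℂ (koopman b) id · (fourier k)) atTop
      (𝓝 (.const _ (circleMean (fourier k)))) := by
  have hmean : circleMean (fourier k) = if k = 0 then 1 else 0 := by
    rw [← integral_fourierChar, circleMean_apply]
    simp_rw [fourier_eq_fourierChar]
  rw [hmean]
  split_ifs with hk
  · subst hk
    have hfix : Function.IsFixedPt (koopman b) (fourier 0) := by
      simpa [Function.IsFixedPt] using koopman_iterate_fourier b 0 1
    have hone : (fourier 0 : C(UnitAddCircle, ℂ)) = .const _ 1 := ContinuousMap.ext fun _ =>
      fourier_zero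
    simpa [hone] using hfix.tendsto_birkhoffAverage ℂ id
  · have hc := fourierChar_intCast_mul_ne_one hb hk
    refine NormedField.tendsto_zero_smul_of_tendsto_zero_of_bounded
      (tendsto_inv_atTop_nhds_zero_nat (𝕜 := ℂ))
      (isBoundedUnder_of ⟨2 / ‖(𝐞 (k * b) : ℂ) - 1‖, fun n => ?_⟩)
    simp only [Function.comp_apply, birkhoffSum, id, koopman_iterate_fourier, ← Finset.sum_smul,
      geom_sum_eq hc, norm_smul, norm_div, fourier_norm, mul_one]
    gcongr
    refine (norm_sub_le _ _).trans_eq ?_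
    rw [norm_pow, Circle.norm_coe, one_pow, norm_one, one_add_one_eq_two]

lemma tendsto_birkhoffAverage_koopman {b : ℝ} (hb : Irrational b) (F : C(UnitAddCircle, ℂ)) :
    Tendsto (birkhoffAverage ℂ (koopman b) id · F) atTop
      (𝓝 (.const _ (circleMean F))) := by
  let mean := (ContinuousLinearMap.const ℂ UnitAddCircle).comp circleMean
  have hF : F ∈ closure (Submodule.span ℂ (Set.range (@fourier 1)) : Set C(UnitAddCircle, ℂ)) := by
    rw [← Submodule.topologicalClosure_coe, span_fourier_closure_eq_top]
    trivial
  refine closure_minimal (fun G hG => ?_) (isClosed_setOfPred_tendsto_birkhoffAverage ℂ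
    (lipschitzWith_koopman b) uniformContinuous_id mean.continuous) hF
  induction hG using Submodule.span_induction with
  | mem G hG =>
    obtain ⟨k, rfl⟩ := hG
    exact tendsto_birkhoffAverage_koopman_fourier hb k
  | zero => simp [birkhoffAverage, birkhoffSum, iterate_map_zero]
  | add G H _ _ hG hH =>
    simp only [Set.mem_ofPred_eq, birkhoffAverage, birkhoffSum, iterate_map_add, map_add, id,
      Finset.sum_add_distrib, smul_add] at hG hH ⊢
    exact hG.add hH
  | smul a G _ hG =>
    have hsmul : ∀ l, (koopman b)^[l] (a • G) = a • (koopman b)^[l] G := fun l => by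
      simp only [← FunLike.coe_pow_eq_iterate, map_smul]
    simp only [Set.mem_ofPred_eq, birkhoffAverage, birkhoffSum, hsmul, map_smul, id,
      ← Finset.smul_sum, smul_comm _ a] at hG ⊢
    exact hG.const_smul a

lemma exists_abs_sum_sub_integral_le {b : ℝ} (hb : Irrational b) {φ : ℝ → ℝ}
    (hc : Continuous φ) (hp : Function.Periodic φ 1) {η : ℝ} (hη : 0 < η) :
    ∃ C, ∀ (n : ℕ) (x : ℝ),
      |∑ l ∈ Finset.range n, φ (x + l * b) - n * ∫ t in (0 : ℝ)..1, φ t| ≤ n * η + C := by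
  let F : C(UnitAddCircle, ℂ) :=
    ⟨fun x => (hp.lift x : ℝ), Complex.continuous_ofReal.comp (continuous_coinduced_dom.2 hc)⟩
  have hF : ∀ (l : ℕ) (x : ℝ), (koopman b)^[l] F x = φ (x + l * b) := fun l x =>
    koopman_iterate_apply b F l x
  have hmean : circleMean F = (∫ t in (0 : ℝ)..1, φ t : ℝ) := integral_ofReal
  let err : ℕ → C(UnitAddCircle, ℂ) := fun n =>
    birkhoffAverage ℂ (koopman b) id n F - .const _ (circleMean F)
  have he : ∀ (n : ℕ) (x : ℝ),
      |∑ l ∈ Finset.range n, φ (x + l * b) - n * ∫ t in (0 : ℝ)..1, φ t| ≤ n * ‖err n‖ := by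
    intro n x
    have h : n * ‖err n x‖ ≤ n * ‖err n‖ := by gcongr; exact (err n).norm_coe_le_norm x
    rcases n.eq_zero_or_pos with rfl | hn
    · simp
    have hn' : (n : ℂ) ≠ 0 := by exact_mod_cast hn.ne'
    refine le_of_eq_of_le ?_ h
    rw [← Real.norm_eq_abs, ← Complex.norm_real, ← Complex.norm_natCast, ← norm_mul]
    simp [err, birkhoffAverage, birkhoffSum, hmean, hF, mul_sub, mul_inv_cancel_left₀ hn']
  have hlim := (tendsto_birkhoffAverage_koopman hb F).sub_const (.const _ (circleMean F))
  rw [sub_self] at hlim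
  obtain ⟨N, hN⟩ := eventually_atTop.1 (hlim.norm.eventually_lt_const (norm_zero.trans_lt hη))
  refine ⟨∑ k ∈ Finset.range N, k * ‖err k‖, fun n x => (he n x).trans ?_⟩
  have hnonneg : ∀ k ∈ Finset.range N, 0 ≤ k * ‖err k‖ := fun k _ => by positivity
  rcases lt_or_ge n N with hn | hn
  · have := Finset.single_le_sum hnonneg (Finset.mem_range.2 hn)
    have : 0 ≤ n * η := by positivity
    linarith
  · exact le_add_of_le_of_nonneg (by gcongr; exact (hN n hn).le) (Finset.sum_nonneg hnonneg)

end Equidistribution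

section UniformBound

variable {g : ℝ → ℂ} {b : ℝ}

lemma norm_cocycle_mul_le (g : ℝ → ℂ) (b : ℝ) (s N : ℕ) (x : ℝ) :
    ‖cocycle g b (s * N) x‖ ≤
      Real.exp (∑ l ∈ Finset.range s, Real.log ‖cocycle g b N (x + l * (N * b))‖) := by
  induction s with
  | zero => simp [cocycle]
  | succ s ih =>
    rw [Finset.sum_range_succ, Real.exp_add, Real.exp_log (norm_cocycle_pos _ _ _ _),
      Nat.succ_mul, add_comm, cocycle_add, Nat.cast_mul, mul_assoc, mul_comm]
    exact (norm_mul_le _ _).trans (by rw [mul_comm]; gcongr)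

lemma exists_norm_cocycle_le_pow (hg : Continuous g) (hp : Function.Periodic g 1) (b : ℝ) :
    ∃ K ≥ 1, ∀ n x, ‖cocycle g b n x‖ ≤ K ^ n := by
  obtain ⟨K, hK⟩ := isBounded_iff_forall_norm_le.1
    ((periodic_cocycle hp b 1).isBounded_of_continuous one_ne_zero (continuous_cocycle hg b 1))
  rw [Set.forall_mem_range] at hK
  refine ⟨K, (one_le_norm_cocycle g b 1 0).trans (hK 0), fun n => ?_⟩
  induction n with
  | zero => simp [cocycle]
  | succ n ih =>
    intro x
    rw [add_comm n, cocycle_add, add_comm 1, pow_succ']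
    exact (norm_mul_le _ _).trans
      (mul_le_mul (hK _) (ih x) (norm_nonneg _) ((norm_nonneg _).trans (hK 0)))

lemma exists_norm_cocycle_le_exp (hb : Irrational b) (hg : Continuous g)
    (hp : Function.Periodic g 1) {Λ : ℝ} (hΛ : lyapunovExponent g b < Λ) :
    ∃ C > 0, ∀ n x, ‖cocycle g b n x‖ ≤ C * Real.exp (n * Λ) := by
  obtain ⟨⟨N, hN⟩, hNΛ⟩ := exists_lt_of_ciInf_lt hΛ
  have hN' : (0 : ℝ) < N := by exact_mod_cast hN
  have hΛ0 : 0 < Λ := (lyapunovExponent_nonneg g b).trans_lt hΛ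
  rw [PNat.mk_coe, inv_mul_lt_iff₀ hN'] at hNΛ
  obtain ⟨C, hC⟩ := exists_abs_sum_sub_integral_le (hb.natCast_mul hN.ne')
    (continuous_log_norm_cocycle hg b N)
    (fun x => by simp only [periodic_cocycle hp b N x]) (sub_pos.2 hNΛ)
  obtain ⟨K, hK1, hK⟩ := exists_norm_cocycle_le_pow hg hp b
  refine ⟨K ^ N * Real.exp C, by positivity, fun n x => ?_⟩
  have hmul : ‖cocycle g b (n / N * N) x‖ ≤ Real.exp ((n / N : ℕ) * (N * Λ) + C) :=
    (norm_cocycle_mul_le g b _ N x).trans <| Real.exp_le_exp.2 <| by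
      linarith [(abs_le.1 (hC (n / N) x)).2]
  have hn : ((n / N : ℕ) * (N * Λ) : ℝ) ≤ n * Λ := by
    rw [← mul_assoc]
    gcongr
    exact_mod_cast Nat.div_mul_le_self n N
  calc ‖cocycle g b n x‖
      = ‖cocycle g b (n % N + n / N * N) x‖ := by rw [mul_comm, Nat.mod_add_div]
    _ ≤ K ^ (n % N) * Real.exp ((n / N : ℕ) * (N * Λ) + C) := by
      rw [cocycle_add]
      exact (norm_mul_le _ _).trans (mul_le_mul (hK _ _) hmul (norm_nonneg _) (by positivity))
    _ ≤ K ^ N * Real.exp (n * Λ + C) := by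
      gcongr
      exact (Nat.mod_lt n hN).le
    _ = K ^ N * Real.exp C * Real.exp (n * Λ) := by rw [Real.exp_add]; ring

end UniformBound

section BandMatrix

lemma det_add_single {n : ℕ} {R : Type*} [CommRing R] (A : Matrix (Fin (n + 1)) (Fin (n + 1)) R)
    (i : Fin (n + 1)) (c : R) :
    (A + single i i c).det = A.det + c * (A.submatrix i.succAbove i.succAbove).det := by
  have h : A + single i i c = A.updateRow i (A i + c • Pi.single i 1) := by
    ext k l
    rcases eq_or_ne k i with rfl | hk
    · simp [single_apply, Pi.single_apply, eq_comm]
    · simp [updateRow_ne hk, hk.symm]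
  rw [h, det_updateRow_add, updateRow_eq_self, det_updateRow_smul, ← adjugate_apply,
    adjugate_fin_succ_eq_det_submatrix, Even.neg_one_pow ⟨_, rfl⟩, one_mul]

lemma det_gram_of_row_eq_zero {m n : ℕ} (M : Matrix (Fin (m + 1)) (Fin (n + 1)) ℂ)
    (i : Fin (m + 1)) (j : Fin (n + 1)) (hM : ∀ l ≠ j, M i l = 0) :
    (Mᴴ * M).det = ((M.submatrix i.succAbove id)ᴴ * M.submatrix i.succAbove id).det
      + ‖M i j‖ ^ 2 * ((M.submatrix i.succAbove j.succAbove)ᴴ *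
        M.submatrix i.succAbove j.succAbove).det := by
  have h : Mᴴ * M = (M.submatrix i.succAbove id)ᴴ * M.submatrix i.succAbove id +
      single j j ((‖M i j‖ ^ 2 : ℝ) : ℂ) := by
    ext k l
    simp only [mul_apply, Fin.sum_univ_succAbove _ i, Matrix.add_apply, submatrix_apply,
      conjTranspose_apply, id, single_apply]
    rw [add_comm]
    congr 1
    split_ifs with hkl
    · rw [← hkl.1, ← hkl.2, Complex.ofReal_pow, ← Complex.conj_mul']
      rfl
    · rcases ne_or_eq k j with hk | rfl
      · rw [hM k hk, star_zero, zero_mul]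
      · rw [hM l fun hl => hkl ⟨rfl, hl.symm⟩, mul_zero]
  rw [h, det_add_single]
  push_cast
  rfl

/-- The matrix, with rows numbered from `-1` to `n` and columns from `0` to `n - 1`, of the
difference operator `(T u) i = α * u (i + 1) + d i * u i + β * u (i - 1)` acting on sequences
supported in `[0, n)`. -/
def bandMatrix (α β : ℂ) (d : ℕ → ℂ) (n : ℕ) : Matrix (Fin (n + 2)) (Fin n) ℂ :=
  of fun r l => if (r : ℕ) = l then α else if (r : ℕ) = l + 1 then d l else
    if (r : ℕ) = l + 2 then β else 0

/-- The square truncation of the difference operator of `bandMatrix` to `[0, n)`. -/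
def tridiagonal (α β : ℂ) (d : ℕ → ℂ) (n : ℕ) : Matrix (Fin n) (Fin n) ℂ :=
  (bandMatrix α β d n).submatrix (fun i => i.castSucc.succ) id

/-- The Gram matrix of the columns of `bandMatrix`, that is, the truncation to `[0, n)` of `T* T`
for the difference operator `T`. -/
def bandGram (α β : ℂ) (d : ℕ → ℂ) (n : ℕ) : Matrix (Fin n) (Fin n) ℂ :=
  (bandMatrix α β d n)ᴴ * bandMatrix α β d n

variable (α β : ℂ)

lemma tridiagonal_apply (d : ℕ → ℂ) (n : ℕ) (r l : Fin n) :
    tridiagonal α β d n r l = if (r : ℕ) + 1 = l then α else if (r : ℕ) = l then d l else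
      if (r : ℕ) = l + 1 then β else 0 := by
  simp [tridiagonal, bandMatrix]

lemma det_tridiagonal_succ_succ (d : ℕ → ℂ) (n : ℕ) :
    (tridiagonal α β d (n + 2)).det =
      d 0 * (tridiagonal α β (fun j => d (j + 1)) (n + 1)).det
        - α * β * (tridiagonal α β (fun j => d (j + 2)) n).det := by
  have h1 : (tridiagonal α β d (n + 2)).submatrix Fin.succ Fin.succ =
      tridiagonal α β (fun j => d (j + 1)) (n + 1) := by
    ext i l
    simp [tridiagonal_apply]
  have h2 : (tridiagonal α β d (n + 2)).submatrix (Fin.succ ∘ Fin.succ) (Fin.succ ∘ Fin.succ) =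
      tridiagonal α β (fun j => d (j + 2)) n := by
    ext i l
    simp [tridiagonal_apply, add_assoc]
  have h3 : ((tridiagonal α β d (n + 2)).submatrix Fin.succ (Fin.succAbove 1)).det =
      β * (tridiagonal α β (fun j => d (j + 2)) n).det := by
    rw [det_succ_column_zero, Fin.sum_univ_succ, Finset.sum_eq_zero, submatrix_submatrix,
      Fin.succAbove_zero, ← h2]
    · have hcomp : Fin.succAbove (1 : Fin (n + 2)) ∘ Fin.succ = Fin.succ ∘ Fin.succ :=
        funext fun i => Fin.succ_succAbove_succ 0 i
      simp [tridiagonal_apply, hcomp]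
    · intro i _
      simp [tridiagonal_apply]
  rw [det_succ_row_zero, Fin.sum_univ_succ, Fin.sum_univ_succ, Fin.succAbove_zero, h1,
    Fin.succ_zero_eq_one, h3, Finset.sum_eq_zero]
  · simp [tridiagonal_apply]
    ring
  · intro i _
    simp [tridiagonal_apply]

lemma det_gram_bandMatrix_tail (d : ℕ → ℂ) (n : ℕ) :
    (((bandMatrix α β d n).submatrix Fin.succ id)ᴴ * (bandMatrix α β d n).submatrix Fin.succ id).det
      = ((∑ p ∈ antidiagonal n,
        ‖β‖ ^ (2 * p.1) * ‖(tridiagonal α β d p.2).det‖ ^ 2 : ℝ) : ℂ) := by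
  induction n with
  | zero => simp
  | succ n ih =>
    have hS : ((bandMatrix α β d (n + 1)).submatrix Fin.succ id).submatrix Fin.castSucc id =
        tridiagonal α β d (n + 1) := rfl
    have hX : ((bandMatrix α β d (n + 1)).submatrix Fin.succ id).submatrix Fin.castSucc
        Fin.castSucc = (bandMatrix α β d n).submatrix Fin.succ id := by
      ext i l
      simp [bandMatrix]
    rw [det_gram_of_row_eq_zero _ (Fin.last _) (Fin.last _), Fin.succAbove_last,
      Fin.succAbove_last, hS, hX, ih, det_mul, det_conjTranspose, Finset.Nat.sum_antidiagonal_succ]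
    · have hβ : bandMatrix α β d (n + 1) (Fin.last (n + 1)).succ (Fin.last n) = β := by
        simp only [bandMatrix, of_apply, Fin.val_succ, Fin.val_last]
        rw [if_neg (by omega), if_neg (by omega), if_pos trivial]
      have hdet : star (tridiagonal α β d (n + 1)).det * (tridiagonal α β d (n + 1)).det =
        ‖(tridiagonal α β d (n + 1)).det‖ ^ 2 := Complex.conj_mul' _
      push_cast
      simp only [submatrix_apply, id, hβ, hdet, Finset.mul_sum, mul_add, pow_add, pow_zero,
        one_mul, mul_one, mul_assoc, mul_left_comm]
    · intro l hl
      have hl' : (l : ℕ) < n := Fin.val_lt_last hl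
      simp only [bandMatrix, submatrix_apply, of_apply, Fin.val_succ, Fin.val_last, id]
      rw [if_neg (by omega), if_neg (by omega), if_neg (by omega)]

lemma det_bandGram (d : ℕ → ℂ) (n : ℕ) :
    (bandGram α β d n).det = ((∑ p ∈ antidiagonal n, ‖α‖ ^ (2 * p.1) *
      ∑ q ∈ antidiagonal p.2, ‖β‖ ^ (2 * q.1) *
        ‖(tridiagonal α β (fun j => d (j + p.1)) q.2).det‖ ^ 2 : ℝ) : ℂ) := by
  induction n generalizing d with
  | zero => simp
  | succ n ih =>
    have h : (bandMatrix α β d (n + 1)).submatrix Fin.succ Fin.succ =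
        bandMatrix α β (fun j => d (j + 1)) n := by
      ext i l
      simp [bandMatrix]
    have hα : bandMatrix α β d (n + 1) 0 0 = α := by simp [bandMatrix]
    rw [bandGram, det_gram_of_row_eq_zero _ 0 0, Fin.succAbove_zero, Fin.succAbove_zero, h, hα,
      det_gram_bandMatrix_tail, ← bandGram, ih, Finset.Nat.sum_antidiagonal_succ (n := n)
        (f := fun p => ‖α‖ ^ (2 * p.1) * _)]
    · push_cast
      simp only [Finset.mul_sum, mul_add, pow_add, pow_zero, one_mul, add_zero, mul_one,
        mul_assoc, mul_left_comm, add_assoc]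
    · intro l hl
      have hl' : (l : ℕ) ≠ 0 := fun h => hl (Fin.ext h)
      simp [bandMatrix, hl'.symm]

lemma norm_det_bandGram (d : ℕ → ℂ) (n : ℕ) :
    ‖(bandGram α β d n).det‖ = ∑ p ∈ antidiagonal n, ‖α‖ ^ (2 * p.1) *
      ∑ q ∈ antidiagonal p.2, ‖β‖ ^ (2 * q.1) *
        ‖(tridiagonal α β (fun j => d (j + p.1)) q.2).det‖ ^ 2 := by
  rw [det_bandGram, Complex.norm_real, Real.norm_of_nonneg (by positivity)]

variable {α β} {d : ℕ → ℂ}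

lemma le_norm_det_bandGram {i j k n : ℕ} (h : i + (j + k) = n) :
    ‖α‖ ^ (2 * i) * (‖β‖ ^ (2 * j) * ‖(tridiagonal α β (fun l => d (l + i)) k).det‖ ^ 2) ≤
      ‖(bandGram α β d n).det‖ := by
  rw [norm_det_bandGram]
  refine le_trans ?_ (Finset.single_le_sum (fun p _ => by positivity)
    (Finset.HasAntidiagonal.mem_antidiagonal.2 h : (i, j + k) ∈ antidiagonal n))
  gcongr
  exact Finset.single_le_sum (f := fun q : ℕ × ℕ => ‖β‖ ^ (2 * q.1) *
    ‖(tridiagonal α β (fun l => d (l + i)) q.2).det‖ ^ 2) (fun q _ => by positivity)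
    (Finset.HasAntidiagonal.mem_antidiagonal.2 rfl : (j, k) ∈ antidiagonal (j + k))

lemma norm_det_bandGram_le {C μ : ℝ} (hα : ‖α‖ ≤ μ) (hβ : ‖β‖ ≤ μ)
    (hd : ∀ i k, ‖(tridiagonal α β (fun j => d (j + i)) k).det‖ ≤ C * μ ^ k) (n : ℕ) :
    ‖(bandGram α β d n).det‖ ≤ (n + 1) ^ 2 * (C ^ 2 * μ ^ (2 * n)) := by
  have hμ : 0 ≤ μ := (norm_nonneg _).trans hα
  have hterm : ∀ p ∈ antidiagonal n, ∀ q ∈ antidiagonal p.2,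
      ‖α‖ ^ (2 * p.1) * (‖β‖ ^ (2 * q.1) *
        ‖(tridiagonal α β (fun j => d (j + p.1)) q.2).det‖ ^ 2) ≤ C ^ 2 * μ ^ (2 * n) := by
    intro p hp q hq
    rw [Finset.HasAntidiagonal.mem_antidiagonal] at hp hq
    calc _ ≤ μ ^ (2 * p.1) * (μ ^ (2 * q.1) * (C * μ ^ q.2) ^ 2) := by
          gcongr
          exact hd _ _
      _ = C ^ 2 * μ ^ (2 * n) := by rw [← hp, ← hq]; ring
  have hrow : ∀ p ∈ antidiagonal n, ‖α‖ ^ (2 * p.1) * ∑ q ∈ antidiagonal p.2, ‖β‖ ^ (2 * q.1) *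
      ‖(tridiagonal α β (fun j => d (j + p.1)) q.2).det‖ ^ 2 ≤
        (n + 1) * (C ^ 2 * μ ^ (2 * n)) := by
    intro p hp
    rw [Finset.mul_sum]
    refine (Finset.sum_le_card_nsmul _ _ _ (hterm p hp)).trans ?_
    rw [Finset.Nat.card_antidiagonal, nsmul_eq_mul]
    gcongr
    exact_mod_cast Nat.succ_le_succ (Finset.HasAntidiagonal.antidiagonal.snd_le hp)
  rw [norm_det_bandGram]
  refine (Finset.sum_le_card_nsmul _ _ _ hrow).trans_eq ?_
  rw [Finset.Nat.card_antidiagonal, nsmul_eq_mul]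
  push_cast
  ring

open scoped ComplexOrder in
lemma posSemidef_bandGram (n : ℕ) : (bandGram α β d n).PosSemidef :=
  posSemidef_conjTranspose_mul_self _

end BandMatrix

section CocycleEntries

variable (g : ℝ → ℂ) (b : ℝ)

lemma cocycle_succ' (n : ℕ) (x : ℝ) :
    cocycle g b (n + 1) x = cocycle g b n (x + b) * transferMatrix (g x) := by
  simpa [cocycle] using cocycle_add g b n 1 x

lemma cocycle_succ_zero_one (n : ℕ) (x : ℝ) :
    cocycle g b (n + 1) x 0 1 = -cocycle g b n (x + b) 0 0 := by
  simp [cocycle_succ', transferMatrix, mul_apply]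

lemma cocycle_succ_one_zero (n : ℕ) (x : ℝ) :
    cocycle g b (n + 1) x 1 0 = cocycle g b n x 0 0 := by
  simp [cocycle_succ, transferMatrix, mul_apply]

lemma cocycle_succ_one_one (n : ℕ) (x : ℝ) :
    cocycle g b (n + 1) x 1 1 = -cocycle g b n (x + b) 1 0 := by
  simp [cocycle_succ', transferMatrix, mul_apply]

lemma cocycle_succ_succ_zero_zero (n : ℕ) (x : ℝ) :
    cocycle g b (n + 2) x 0 0 =
      g x * cocycle g b (n + 1) (x + b) 0 0 - cocycle g b n (x + b + b) 0 0 := by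
  rw [cocycle_succ', mul_apply, Fin.sum_univ_two, cocycle_succ_zero_one]
  simp [transferMatrix]
  ring

lemma exists_norm_cocycle_apply_eq (n : ℕ) (x : ℝ) (i j : Fin 2) :
    ∃ p q k : ℕ, p + (q + k) = n + 2 ∧
      ‖cocycle g b (n + 2) x i j‖ = ‖cocycle g b k (x + p * b) 0 0‖ := by
  fin_cases i <;> fin_cases j
  · exact ⟨0, 0, n + 2, by omega, by simp⟩
  · exact ⟨1, 0, n + 1, by omega, by simp [cocycle_succ_zero_one]⟩
  · exact ⟨0, 1, n + 1, by omega, by simp [cocycle_succ_one_zero]⟩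
  · exact ⟨1, 1, n, by omega, by simp [cocycle_succ_one_one, cocycle_succ_one_zero]⟩

variable {g b} {α β a : ℂ}

lemma det_tridiagonal_eq_cocycle (h : α * β = a ^ 2) : ∀ (n : ℕ) (x : ℝ),
    (tridiagonal α β (fun j => -a * g (x + j * b)) n).det = (-a) ^ n * cocycle g b n x 0 0
  | 0, x => by simp [cocycle]
  | 1, x => by simp [tridiagonal_apply, cocycle, transferMatrix]
  | n + 2, x => by
    have h1 := det_tridiagonal_eq_cocycle h (n + 1) (x + b)
    have h2 := det_tridiagonal_eq_cocycle h n (x + b + b)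
    rw [det_tridiagonal_succ_succ, cocycle_succ_succ_zero_zero, h]
    simp only [Nat.cast_add, Nat.cast_one, Nat.cast_ofNat, add_mul, one_mul, two_mul,
      Nat.cast_zero, zero_mul, add_zero, add_comm _ b, add_left_comm _ b, add_assoc] at h1 h2 ⊢
    rw [h1, h2]
    ring

lemma norm_cocycle_sq_mul_le (a : ℂ) (n : ℕ) (x : ℝ) :
    ‖cocycle g b (n + 2) x‖ ^ 2 * ‖a‖ ^ (2 * (n + 2)) ≤
      16 * ‖(bandGram a a (fun j => -a * g (x + j * b)) (n + 2)).det‖ := by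
  obtain ⟨i, j, hij⟩ := exists_l2_opNorm_le_four_mul (cocycle g b (n + 2) x)
  obtain ⟨p, q, k, hk, hpqk⟩ := exists_norm_cocycle_apply_eq g b n x i j
  have h := le_norm_det_bandGram (α := a) (β := a) (d := fun j => -a * g (x + j * b)) hk
  have hd : (fun l : ℕ => -a * g (x + (l + p : ℕ) * b)) =
      fun l : ℕ => -a * g (x + p * b + l * b) := by
    ext l
    push_cast
    ring_nf
  rw [hd, det_tridiagonal_eq_cocycle (sq a).symm, norm_mul, norm_pow, norm_neg,
    ← hpqk] at h
  calc ‖cocycle g b (n + 2) x‖ ^ 2 * ‖a‖ ^ (2 * (n + 2))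
      ≤ (4 * ‖cocycle g b (n + 2) x i j‖) ^ 2 * ‖a‖ ^ (2 * (n + 2)) := by gcongr
    _ = 16 * (‖a‖ ^ (2 * p) * (‖a‖ ^ (2 * q) *
          (‖a‖ ^ k * ‖cocycle g b (n + 2) x i j‖) ^ 2)) := by rw [← hk]; ring
    _ ≤ _ := by gcongr

end CocycleEntries

section PosSemidef

open scoped ComplexOrder

lemma posDef_add_smul_one {n : Type*} [DecidableEq n] {M : Matrix n n ℂ}
    (hM : M.PosSemidef) {δ : ℝ} (hδ : 0 < δ) : (M + (δ : ℂ) • (1 : Matrix n n ℂ)).PosDef :=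
  PosDef.posSemidef_add hM (PosDef.one.smul (by exact_mod_cast hδ))

variable {n : Type*} [Fintype n] [DecidableEq n] {M : Matrix n n ℂ}

lemma det_add_smul_one_eq_prod (hM : M.IsHermitian) (δ : ℝ) :
    (M + (δ : ℂ) • (1 : Matrix n n ℂ)).det = ∏ i, ((hM.eigenvalues i + δ : ℝ) : ℂ) := by
  have h : M + (δ : ℂ) • (1 : Matrix n n ℂ) =
      Unitary.conjStarAlgAut ℂ _ hM.eigenvectorUnitary
        (diagonal fun i => ((hM.eigenvalues i + δ : ℝ) : ℂ)) := by
    conv_lhs => rw [hM.spectral_theorem]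
    rw [← map_one (Unitary.conjStarAlgAut ℂ _ hM.eigenvectorUnitary), ← map_smul, ← map_add,
      smul_one_eq_diagonal, diagonal_add]
    simp
  rw [h, Unitary.conjStarAlgAut_apply, det_mul_comm, ← mul_assoc]
  simp

lemma trace_pow_eq_sum_eigenvalues_pow (hM : M.IsHermitian) (r : ℕ) :
    (M ^ r).trace = ∑ i, ((hM.eigenvalues i ^ r : ℝ) : ℂ) := by
  conv_lhs => rw [hM.spectral_theorem, ← map_pow, diagonal_pow]
  rw [Unitary.conjStarAlgAut_apply, trace_mul_comm, ← mul_assoc]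
  simp [trace]

lemma norm_det_add_smul_one (hM : M.PosSemidef) {δ : ℝ} (hδ : 0 ≤ δ) :
    ‖(M + (δ : ℂ) • (1 : Matrix n n ℂ)).det‖ = ∏ i, (hM.isHermitian.eigenvalues i + δ) := by
  rw [det_add_smul_one_eq_prod hM.isHermitian, norm_prod]
  refine Finset.prod_congr rfl fun i _ => ?_
  rw [Complex.norm_real, Real.norm_of_nonneg (add_nonneg (hM.eigenvalues_nonneg i) hδ)]

lemma norm_det_le_norm_det_add_smul_one (hM : M.PosSemidef) {δ : ℝ} (hδ : 0 ≤ δ) :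
    ‖M.det‖ ≤ ‖(M + (δ : ℂ) • (1 : Matrix n n ℂ)).det‖ := by
  have h := norm_det_add_smul_one hM le_rfl
  rw [Complex.ofReal_zero, zero_smul, add_zero] at h
  rw [h, norm_det_add_smul_one hM hδ]
  exact Finset.prod_le_prod (fun i _ => by simpa using hM.eigenvalues_nonneg i) fun i _ => by
    simpa using hδ

lemma norm_det_le_exp_trace_sub_card (hM : M.PosDef) :
    ‖M.det‖ ≤ Real.exp (M.trace.re - Fintype.card n) := by
  have htr : M.trace.re - Fintype.card n = ∑ i, (hM.isHermitian.eigenvalues i - 1) := by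
    rw [hM.isHermitian.trace_eq_sum_eigenvalues, Finset.sum_sub_distrib]
    simp
  rw [hM.isHermitian.det_eq_prod_eigenvalues, norm_prod, htr, Real.exp_sum]
  refine Finset.prod_le_prod (fun i _ => norm_nonneg _) fun i _ => ?_
  rw [RCLike.norm_ofReal, abs_of_pos (hM.eigenvalues_pos i)]
  simpa using Real.add_one_le_exp (hM.isHermitian.eigenvalues i - 1)

open scoped MatrixOrder in
lemma norm_det_le_of_trace_inv_mul {D : Matrix n n ℂ} (hM : M.PosDef) (hD : D.PosDef)
    (htr : (D⁻¹ * M).trace = Fintype.card n) : ‖M.det‖ ≤ ‖D.det‖ := by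
  obtain ⟨y, hy, rfl⟩ := CStarAlgebra.isStrictlyPositive_iff_eq_star_mul_self.mp
    hD.isStrictlyPositive
  have hdet := (isUnit_iff_isUnit_det _).1 hy
  have hinv : IsUnit y⁻¹ := (isUnit_nonsing_inv_iff).2 hy
  have hle := norm_det_le_exp_trace_sub_card
    (hM.conjTranspose_mul_mul_same (mulVec_injective_of_isUnit hinv))
  have htr' : ((y⁻¹)ᴴ * M * y⁻¹).trace = Fintype.card n := by
    rw [trace_mul_comm, ← mul_assoc, conjTranspose_nonsing_inv, ← Matrix.mul_inv_rev]
    exact htr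
  rw [htr', Complex.natCast_re, sub_self, Real.exp_zero, det_mul, det_mul, det_conjTranspose,
    det_nonsing_inv, Ring.inverse_eq_inv', norm_mul, norm_mul, norm_star, norm_inv] at hle
  have hpos : 0 < ‖y.det‖ := norm_pos_iff.2 hdet.ne_zero
  rw [star_eq_conjTranspose, det_mul, det_conjTranspose, norm_mul, norm_star]
  field_simp at hle
  nlinarith

lemma norm_det_le_mul_norm_det_toBlocks {m : Type*} [Fintype m] [DecidableEq m]
    {M : Matrix (m ⊕ n) (m ⊕ n) ℂ} (hM : M.PosDef) :
    ‖M.det‖ ≤ ‖M.toBlocks₁₁.det‖ * ‖M.toBlocks₂₂.det‖ := by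
  have hA : M.toBlocks₁₁.PosDef := hM.submatrix Sum.inl_injective
  have hD : M.toBlocks₂₂.PosDef := hM.submatrix Sum.inr_injective
  have hAu := (isUnit_iff_isUnit_det _).1 hA.isUnit
  have hDu := (isUnit_iff_isUnit_det _).1 hD.isUnit
  have hblock : (fromBlocks M.toBlocks₁₁ 0 0 M.toBlocks₂₂).PosDef := by
    let := hA.isUnit.invertible
    have hS := (PosDef.fromBlocks₁₁ (0 : Matrix m n ℂ) M.toBlocks₂₂ hA).2
      (by simpa using hD.posSemidef)
    rw [conjTranspose_zero] at hS
    refine hS.posDef_iff_isUnit.2 ((isUnit_iff_isUnit_det _).2 ?_)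
    rw [det_fromBlocks_zero₂₁]
    exact hAu.mul hDu
  have hinv : (fromBlocks M.toBlocks₁₁ 0 0 M.toBlocks₂₂)⁻¹ =
      fromBlocks M.toBlocks₁₁⁻¹ 0 0 M.toBlocks₂₂⁻¹ :=
    inv_eq_right_inv (by simp [fromBlocks_multiply, mul_nonsing_inv _ hAu, mul_nonsing_inv _ hDu])
  have h := norm_det_le_of_trace_inv_mul hM hblock (by
    conv_lhs => rw [hinv, ← fromBlocks_toBlocks M, fromBlocks_multiply]
    simp [trace, Fintype.sum_sum_type, diag_apply,nonsing_inv_mul _ hAu, nonsing_inv_mul _ hDu])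
  rwa [det_fromBlocks_zero₂₁, norm_mul] at h

end PosSemidef

section RegularizedDet

open scoped ComplexOrder

variable (α β : ℂ)

lemma bandGram_apply (d : ℕ → ℂ) (n : ℕ) (i l : Fin n) :
    bandGram α β d n i l = star (bandMatrix α β d n l.castSucc.castSucc i) * α +
      star (bandMatrix α β d n l.castSucc.succ i) * d l +
      star (bandMatrix α β d n l.succ.succ i) * β := by
  have hcol : ∀ r, bandMatrix α β d n r l = (if r = l.castSucc.castSucc then α else 0) +
      (if r = l.castSucc.succ then d l else 0) + if r = l.succ.succ then β else 0 := by
    intro r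
    simp only [bandMatrix, of_apply, Fin.ext_iff, Fin.val_castSucc, Fin.val_succ]
    split_ifs <;> first | omega | simp
  simp only [bandGram, mul_apply, conjTranspose_apply, hcol, mul_add, Finset.sum_add_distrib,
    mul_ite, mul_zero, Finset.sum_ite_eq', Finset.mem_univ, if_true]

lemma l2_opNorm_bandMatrix_le {d : ℕ → ℂ} {D : ℝ} (hd : ∀ j, ‖d j‖ ≤ D) (n : ℕ) :
    ‖bandMatrix α β d n‖ ≤ ‖α‖ + D + ‖β‖ := by
  have hD : 0 ≤ D := (norm_nonneg _).trans (hd 0)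
  let J : (Fin n → Fin (n + 2)) → Matrix (Fin (n + 2)) (Fin n) ℂ := fun f => submatrix 1 id f
  have hJ : ∀ f : Fin n → Fin (n + 2), f.Injective → ‖J f‖ ≤ 1 := by
    intro f hf
    have h : (J f)ᴴ * J f = 1 := by
      ext i l
      simp [J, mul_apply, one_apply, hf.eq_iff]
    have h' := l2_opNorm_conjTranspose_mul_self (J f)
    have h1 : ‖(1 : Matrix (Fin n) (Fin n) ℂ)‖ ≤ 1 := by
      rw [← diagonal_one, l2_opNorm_diagonal]
      exact (pi_norm_le_iff_of_nonneg zero_le_one).2 fun _ => by simp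
    rw [h] at h'
    nlinarith
  have hsum : bandMatrix α β d n = α • J (fun l => l.castSucc.castSucc) +
      J (fun l => l.castSucc.succ) * diagonal (fun l : Fin n => d l) +
      β • J (fun l => l.succ.succ) := by
    ext r l
    simp only [bandMatrix, of_apply, Matrix.add_apply, Matrix.smul_apply, mul_diagonal, J,
      submatrix_apply, one_apply, id, smul_eq_mul, Fin.ext_iff, Fin.val_castSucc, Fin.val_succ]
    split_ifs <;> first | omega | simp
  have hdiag : ‖diagonal fun l : Fin n => d l‖ ≤ D := by
    rw [l2_opNorm_diagonal]
    exact (pi_norm_le_iff_of_nonneg hD).2 fun l => hd l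
  rw [hsum]
  refine (norm_add₃_le).trans ?_
  gcongr
  · rw [norm_smul]
    exact mul_le_of_le_one_right (norm_nonneg _) (hJ _ fun _ _ => by simp)
  · refine (l2_opNorm_mul _ _).trans ?_
    simpa using mul_le_mul (hJ _ fun _ _ => by simp) hdiag (norm_nonneg _) zero_le_one
  · rw [norm_smul]
    exact mul_le_of_le_one_right (norm_nonneg _) (hJ _ fun _ _ => by simp)

/-- The determinant `det (T* T + δ)` of the truncation to `[0, n)`, for the difference operator `T`
of `bandMatrix`: unlike `det (T* T)`, its logarithm is continuous in `d`. -/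
noncomputable def regDet (δ : ℝ) (d : ℕ → ℂ) (n : ℕ) : ℝ :=
  ‖(bandGram α β d n + (δ : ℂ) • (1 : Matrix (Fin n) (Fin n) ℂ)).det‖

variable {α β} {δ : ℝ}

lemma regDet_pos (hδ : 0 < δ) (d : ℕ → ℂ) (n : ℕ) : 0 < regDet α β δ d n :=
  norm_pos_iff.2 (posDef_add_smul_one (posSemidef_bandGram n) hδ).det_pos.ne'

lemma regDet_add_le (hδ : 0 < δ) (d : ℕ → ℂ) (m n : ℕ) :
    regDet α β δ d (m + n) ≤ regDet α β δ d m * regDet α β δ (fun j => d (j + m)) n := by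
  have hpos : ((bandGram α β d (m + n) + (δ : ℂ) • 1).submatrix
      finSumFinEquiv finSumFinEquiv).PosDef :=
    (posDef_add_smul_one (posSemidef_bandGram _) hδ).submatrix finSumFinEquiv.injective
  have hfst : ((bandGram α β d (m + n) + (δ : ℂ) • 1).submatrix
      finSumFinEquiv finSumFinEquiv).toBlocks₁₁ = bandGram α β d m + (δ : ℂ) • 1 := by
    ext i l
    simp [bandGram_apply, bandMatrix, one_apply, toBlocks₁₁]
  have hsnd : ((bandGram α β d (m + n) + (δ : ℂ) • 1).submatrix finSumFinEquiv
      finSumFinEquiv).toBlocks₂₂ = bandGram α β (fun j => d (j + m)) n + (δ : ℂ) • 1 := by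
    ext i l
    simp [bandGram_apply, bandMatrix, one_apply, toBlocks₂₂, add_assoc, add_comm _ m]
  have h := norm_det_le_mul_norm_det_toBlocks hpos
  rwa [det_submatrix_equiv_self, hfst, hsnd] at h

lemma regDet_mul_le (hδ : 0 < δ) {m : ℕ} {B : ℝ} (s : ℕ) {d : ℕ → ℂ}
    (h : ∀ k, regDet α β δ (fun j => d (j + k)) m ≤ B) : regDet α β δ d (s * m) ≤ B ^ s := by
  induction s generalizing d with
  | zero => rw [Nat.zero_mul]; simp [regDet]
  | succ s ih =>
    have hB : 0 ≤ B := (norm_nonneg _).trans (h 0)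
    rw [Nat.succ_mul, add_comm, pow_succ']
    refine (regDet_add_le hδ d m _).trans ?_
    gcongr
    · exact norm_nonneg _
    · simpa using h 0
    · exact ih fun k => by simpa [add_assoc] using h (k + m)

end RegularizedDet

section RotationAlgebra

open Module (End)
open Finsupp (single)

/-- The magnetic translations of the lattice `ℤ²` with flux `b`, in the symmetric gauge. They form
a projective representation of `ℤ²`, the regular representation of the rotation algebra. -/
noncomputable def magneticTranslation (b : ℝ) (p : ℤ × ℤ) : End ℂ ((ℤ × ℤ) →₀ ℂ) :=
  Finsupp.lsum ℂ fun m =>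
    (𝐞 (b / 2 * (m.1 * p.2 - m.2 * p.1)) : ℂ) • Finsupp.lsingle (m + p)

/-- The projective representation of `ℤ²` on sequences obtained from the magnetic translations by
fixing the quasi-momentum `x` in the second direction: `(1, 0)` acts by translation and `(0, 1)`
by multiplication by `𝐞 (x + m * b)` at the site `m`. -/
noncomputable def fiberTranslation (b x : ℝ) (p : ℤ × ℤ) : End ℂ (ℤ →₀ ℂ) :=
  Finsupp.lsum ℂ fun m =>
    (𝐞 ((x + (m + p.1 / 2) * b) * p.2) : ℂ) • Finsupp.lsingle (m + p.1)

/-- The Bloch transform at quasi-momentum `x`, intertwining `magneticTranslation` with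
`fiberTranslation`. -/
noncomputable def blochTransform (b x : ℝ) : ((ℤ × ℤ) →₀ ℂ) →ₗ[ℂ] ℤ →₀ ℂ :=
  Finsupp.lsum ℂ fun m => (𝐞 (m.2 * x + b / 2 * (m.1 * m.2)) : ℂ) • Finsupp.lsingle m.1

/-- The rotation of `ℤ²` by a quarter turn. -/
def quarterTurn (p : ℤ × ℤ) : ℤ × ℤ := (-p.2, p.1)

variable {b x : ℝ}

lemma magneticTranslation_single (p m : ℤ × ℤ) (c : ℂ) : magneticTranslation b p (single m c) =
    single (m + p) ((𝐞 (b / 2 * (m.1 * p.2 - m.2 * p.1)) : ℂ) * c) := by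
  simp [magneticTranslation]

lemma fiberTranslation_single (p : ℤ × ℤ) (m : ℤ) (c : ℂ) : fiberTranslation b x p (single m c) =
    single (m + p.1) ((𝐞 ((x + (m + p.1 / 2) * b) * p.2) : ℂ) * c) := by
  simp [fiberTranslation]

lemma blochTransform_single (m : ℤ × ℤ) (c : ℂ) : blochTransform b x (single m c) =
    single m.1 ((𝐞 (m.2 * x + b / 2 * (m.1 * m.2)) : ℂ) * c) := by
  simp [blochTransform]

lemma fourierChar_mul_mul (s t : ℝ) (c : ℂ) : (𝐞 s : ℂ) * (𝐞 t * c) = 𝐞 (s + t) * c := by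
  rw [AddChar.map_add_eq_mul, Circle.coe_mul, mul_assoc]

lemma blochTransform_magneticTranslation (p : ℤ × ℤ) :
    blochTransform b x ∘ₗ magneticTranslation b p =
      fiberTranslation b x p ∘ₗ blochTransform b x := by
  refine Finsupp.lhom_ext fun m c => ?_
  simp only [LinearMap.comp_apply, magneticTranslation_single, blochTransform_single,
    fiberTranslation_single, fourierChar_mul_mul, Prod.fst_add, Prod.snd_add]
  congr 4
  push_cast
  ring

lemma lmapDomain_quarterTurn_magneticTranslation (p : ℤ × ℤ) :
    Finsupp.lmapDomain ℂ ℂ quarterTurn ∘ₗ magneticTranslation b p =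
      magneticTranslation b (quarterTurn p) ∘ₗ Finsupp.lmapDomain ℂ ℂ quarterTurn := by
  refine Finsupp.lhom_ext fun m c => ?_
  simp only [LinearMap.comp_apply, magneticTranslation_single, Finsupp.lmapDomain_apply,
    Finsupp.mapDomain_single]
  congr 4
  · simp [quarterTurn, add_comm]
  · simp only [quarterTurn]
    push_cast
    ring

lemma magneticTranslation_neg_comm (p q : ℤ × ℤ) :
    magneticTranslation (-b) q ∘ₗ magneticTranslation b p =
      magneticTranslation b p ∘ₗ magneticTranslation (-b) q := by
  refine Finsupp.lhom_ext fun m c => ?_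
  simp only [LinearMap.comp_apply, magneticTranslation_single, fourierChar_mul_mul, Prod.fst_add,
    Prod.snd_add, add_right_comm m p q]
  congr 4
  push_cast
  ring

/-- The coefficients of the generalised Harper operator
`(T u) m = α * u (m + 1) + β * u (m - 1) + (κ * 𝐞 (x + m * b) + μ * 𝐞 (-(x + m * b)) - z) * u m`. -/
structure HarperCoeff where
  (α β κ μ z : ℂ)

namespace HarperCoeff

variable (P : HarperCoeff)

/-- The coefficients of the adjoint operator. -/
def adjoint : HarperCoeff := ⟨star P.β, star P.α, star P.μ, star P.κ, star P.z⟩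

/-- The Aubry dual, in which hopping and potential are exchanged. -/
def dual : HarperCoeff := ⟨P.κ, P.μ, P.β, P.α, P.z⟩

/-- The diagonal of the Harper operator. -/
noncomputable def diag (x : ℝ) : ℂ := P.κ * 𝐞 x + P.μ * 𝐞 (-x) - P.z

/-- The Harper operator in a projective representation `ρ` of `ℤ²`. -/
def op {W : Type*} [AddCommGroup W] [Module ℂ W] (ρ : ℤ × ℤ → End ℂ W) : End ℂ W :=
  P.α • ρ (-1, 0) + P.β • ρ (1, 0) + P.κ • ρ (0, 1) + P.μ • ρ (0, -1) - P.z • 1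

/-- The operator `T* T`, for the Harper operator `T` in the representation `ρ`. -/
def gram {W : Type*} [AddCommGroup W] [Module ℂ W] (ρ : ℤ × ℤ → End ℂ W) : End ℂ W :=
  P.adjoint.op ρ * P.op ρ

section Intertwining

variable {W W' : Type*} [AddCommGroup W] [Module ℂ W] [AddCommGroup W'] [Module ℂ W']
  {ρ : ℤ × ℤ → End ℂ W} {ρ' : ℤ × ℤ → End ℂ W'} {Φ : W →ₗ[ℂ] W'}

lemma map_gram_pow (h : ∀ p, Φ ∘ₗ ρ p = ρ' p ∘ₗ Φ) (r : ℕ) (w : W) :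
    Φ ((P.gram ρ ^ r) w) = (P.gram ρ' ^ r) (Φ w) := by
  have hop : ∀ (Q : HarperCoeff) w, Φ (Q.op ρ w) = Q.op ρ' (Φ w) := fun Q w => by
    have h' : ∀ p w, Φ (ρ p w) = ρ' p (Φ w) := fun p w => LinearMap.congr_fun (h p) w
    simp [op, h']
  induction r generalizing w with
  | zero => rfl
  | succ r ih =>
    rw [pow_succ, pow_succ, Module.End.mul_apply, Module.End.mul_apply, ih]
    simp only [gram, Module.End.mul_apply, hop]

lemma gram_comp_quarterTurn : P.gram (ρ ∘ quarterTurn) = P.dual.gram ρ := by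
  have hop : ∀ Q : HarperCoeff, Q.op (ρ ∘ quarterTurn) = Q.dual.op ρ := fun Q => by
    simp only [op, dual, quarterTurn, Function.comp_apply, neg_zero, neg_neg]
    abel
  rw [gram, gram, hop, hop]
  rfl

end Intertwining

/-- The moment `τ ((T* T) ^ r)` of the canonical trace `τ` of the rotation algebra. -/
noncomputable def moment (b : ℝ) (r : ℕ) : ℂ :=
  (P.gram (magneticTranslation b) ^ r) (single 0 1) 0

lemma gram_pow_single_self (r : ℕ) (q : ℤ × ℤ) :
    (P.gram (magneticTranslation b) ^ r) (single q 1) q = P.moment b r := by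
  have hsingle : magneticTranslation (-b) q (single 0 1) = single q 1 := by
    simp [magneticTranslation_single]
  have heval : ∀ w, magneticTranslation (-b) q w q = w 0 := fun w => by
    induction w using Finsupp.induction_linear with
    | zero => simp
    | add u v hu hv => simp [hu, hv]
    | single m c =>
      rw [magneticTranslation_single, Finsupp.single_apply, Finsupp.single_apply]
      by_cases hm : m = 0 <;> simp [hm]
  rw [← hsingle, ← P.map_gram_pow (fun p => magneticTranslation_neg_comm p q), heval, moment]

lemma moment_dual (r : ℕ) : P.dual.moment b r = P.moment b r := by
  have hsingle : Finsupp.lmapDomain ℂ ℂ quarterTurn (single 0 1) = single 0 1 := by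
    rw [Finsupp.lmapDomain_apply, Finsupp.mapDomain_single]
    rfl
  have hinj : quarterTurn.Injective := fun p q h => by
    simp only [quarterTurn, Prod.mk.injEq, neg_inj] at h
    exact Prod.ext h.2 h.1
  rw [moment, ← gram_comp_quarterTurn, ← hsingle,
    ← P.map_gram_pow (ρ' := magneticTranslation b ∘ quarterTurn)
      lmapDomain_quarterTurn_magneticTranslation, moment]
  exact Finsupp.mapDomain_apply hinj _ 0

lemma continuous_blochTransform_apply (f : (ℤ × ℤ) →₀ ℂ) (m : ℤ) :
    Continuous fun x => blochTransform b x f m := by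
  induction f using Finsupp.induction_linear with
  | zero => simp [continuous_const]
  | add u v hu hv =>
    simp only [map_add, Finsupp.add_apply]
    exact hu.add hv
  | single p c =>
    simp only [blochTransform_single, Finsupp.single_apply]
    split_ifs
    · have := Real.continuous_fourierChar
      fun_prop
    · exact continuous_const

lemma integral_blochTransform_apply (f : (ℤ × ℤ) →₀ ℂ) (m : ℤ) :
    ∫ x in (0 : ℝ)..1, blochTransform b x f m = f (m, 0) := by
  induction f using Finsupp.induction_linear with
  | zero => simp
  | add u v hu hv =>
    have hint : ∀ w, IntervalIntegrable (fun x => blochTransform b x w m) volume 0 1 := fun w =>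
      (continuous_blochTransform_apply w m).intervalIntegrable 0 1
    simp [integral_add (hint u) (hint v), hu, hv]
  | single p c =>
    obtain ⟨k, l⟩ := p
    simp only [blochTransform_single, Finsupp.single_apply, Prod.mk.injEq]
    by_cases hk : k = m
    · simp only [hk, if_true, AddChar.map_add_eq_mul, Circle.coe_mul, mul_assoc,
        intervalIntegral.integral_mul_const, integral_fourierChar, true_and]
      split_ifs with hl <;> simp [hl]
    · simp [hk]

lemma integral_gram_fiberTranslation_pow (r : ℕ) (m : ℤ) :
    ∫ x in (0 : ℝ)..1, (P.gram (fiberTranslation b x) ^ r) (single m 1) m = P.moment b r := by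
  have h : ∀ x, (P.gram (fiberTranslation b x) ^ r) (single m 1) =
      blochTransform b x ((P.gram (magneticTranslation b) ^ r) (single (m, 0) 1)) := fun x => by
    rw [P.map_gram_pow blochTransform_magneticTranslation, blochTransform_single]
    simp
  simp only [h, integral_blochTransform_apply, gram_pow_single_self]

end HarperCoeff

end RotationAlgebra

section FiniteSection

open Module (End)
open Finsupp (single)

variable {T : End ℂ (ℤ →₀ ℂ)} {w : ℕ}

lemma end_apply_eq_sum (T : End ℂ (ℤ →₀ ℂ)) (v : ℤ →₀ ℂ) (i : ℤ) :
    T v i = v.sum fun j c => c * T (single j 1) i := by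
  conv_lhs => rw [← v.sum_single, map_finsuppSum, Finsupp.sum_apply]
  refine Finsupp.sum_congr fun j _ => ?_
  rw [← mul_one (v j), ← smul_eq_mul, ← Finsupp.smul_single, map_smul, Finsupp.smul_apply,
    smul_eq_mul, smul_eq_mul, mul_one]

lemma abs_sub_le_of_pow_single_apply_ne_zero
    (hT : ∀ i j, T (single j 1) i ≠ 0 → |i - j| ≤ w) (r : ℕ) {i l : ℤ}
    (h : (T ^ r) (single l 1) i ≠ 0) : |i - l| ≤ r * w := by
  induction r generalizing i with
  | zero =>
    obtain rfl : l = i := by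
      by_contra hne
      simp [hne] at h
    simp
  | succ r ih =>
    rw [pow_succ', Module.End.mul_apply, end_apply_eq_sum] at h
    obtain ⟨j, hj, hij⟩ := Finset.exists_ne_zero_of_sum_ne_zero h
    calc |i - l| ≤ |i - j| + |j - l| := abs_sub_le i j l
      _ ≤ w + r * w :=
        add_le_add (hT i j (right_ne_zero_of_mul hij)) (ih (Finsupp.mem_support_iff.1 hj))
      _ = ↑(r + 1) * w := by push_cast; ring

lemma pow_apply_eq_pow_single_apply (hT : ∀ i j, T (single j 1) i ≠ 0 → |i - j| ≤ w) {n : ℕ}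
    {M : Matrix (Fin n) (Fin n) ℂ} (hM : ∀ i l : Fin n, M i l = T (single (l : ℤ) 1) i)
    {r : ℕ} {l : Fin n} (hl : r * w ≤ l) (hl' : l + r * w < n) (i : Fin n) :
    (M ^ r) i l = (T ^ r) (single (l : ℤ) 1) i := by
  induction r generalizing i with
  | zero => simp [one_apply, Finsupp.single_apply, Fin.ext_iff, eq_comm]
  | succ r ih =>
    rw [Nat.succ_mul] at hl hl'
    have hsupp : ((T ^ r) (single (l : ℤ) 1)).support ⊆
        Finset.univ.map (Fin.valEmbedding.trans Nat.castEmbedding : Fin n ↪ ℤ) := fun j hj => by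
      have hjl := abs_le.1
        (abs_sub_le_of_pow_single_apply_ne_zero hT r (Finsupp.mem_support_iff.1 hj))
      exact Finset.mem_map.2
        ⟨⟨j.toNat, by omega⟩, Finset.mem_univ _, Int.toNat_of_nonneg (by omega)⟩
    rw [pow_succ', pow_succ', Module.End.mul_apply, end_apply_eq_sum,
      Finsupp.sum_of_support_subset _ hsupp _ (by simp), Finset.sum_map, mul_apply]
    refine Finset.sum_congr rfl fun j _ => ?_
    rw [ih (by omega) (by omega), hM, mul_comm]
    rfl

lemma card_filter_boundary_le (n s : ℕ) :
    (Finset.univ.filter fun l : Fin n => ¬(s ≤ l ∧ l + s < n)).card ≤ 2 * s := by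
  have h : (Finset.univ.filter fun l : Fin n => ¬(s ≤ l ∧ l + s < n)).map Fin.valEmbedding ⊆
      Finset.range s ∪ Finset.Ico (n - s) n := by
    intro j hj
    simp only [Finset.mem_map, Finset.mem_filter, Finset.mem_univ, true_and,
      Fin.valEmbedding_apply] at hj
    obtain ⟨l, hl, rfl⟩ := hj
    simp only [Finset.mem_union, Finset.mem_range, Finset.mem_Ico]
    omega
  calc _ ≤ _ := (Finset.card_map _).symm.trans_le (Finset.card_le_card h)
    _ ≤ (Finset.range s).card + (Finset.Ico (n - s) n).card := Finset.card_union_le _ _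
    _ = s + (n - (n - s)) := by rw [Finset.card_range, Nat.card_Ico]
    _ ≤ 2 * s := by omega

end FiniteSection

section TraceAsymptotics

open scoped ComplexOrder

open Finsupp (single)

variable {b : ℝ}

lemma eigenvalues_le_l2_opNorm {n : Type*} [Fintype n] [DecidableEq n] {M : Matrix n n ℂ}
    (hM : M.IsHermitian) (i : n) : hM.eigenvalues i ≤ ‖M‖ := by
  have h : ‖hM.eigenvalues i • hM.eigenvectorBasis i‖ ≤ ‖M‖ * ‖hM.eigenvectorBasis i‖ := by
    have h' := l2_opNorm_mulVec M (hM.eigenvectorBasis i)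
    rwa [hM.mulVec_eigenvectorBasis] at h'
  rw [norm_smul, hM.eigenvectorBasis.norm_eq_one, mul_one, mul_one] at h
  exact (le_abs_self _).trans h

namespace HarperCoeff

variable (P : HarperCoeff)

lemma op_fiberTranslation_single (x : ℝ) (l : ℤ) (c : ℂ) :
    P.op (fiberTranslation b x) (single l c) =
      single (l - 1) (P.α * c) + single (l + 1) (P.β * c) + single l (P.diag (x + l * b) * c) := by
  simp only [op, fiberTranslation_single, LinearMap.add_apply, LinearMap.sub_apply,
    LinearMap.smul_apply, Finsupp.smul_single, smul_eq_mul, Module.End.one_apply, diag]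
  simp only [Int.cast_neg, Int.cast_one, Int.cast_zero, mul_zero, zero_div, mul_one, mul_neg,
    AddChar.map_zero_eq_one, Circle.coe_one, one_mul, add_zero, sub_eq_add_neg, mul_assoc, neg_mul,
    add_mul, Finsupp.single_add, Finsupp.single_neg]
  abel

lemma diag_adjoint (x : ℝ) : P.adjoint.diag x = star (P.diag x) := by
  simp [diag, adjoint, add_comm]

lemma bandGram_apply_eq_gram (x : ℝ) {n : ℕ} (i l : Fin n) :
    bandGram P.α P.β (fun j => P.diag (x + j * b)) n i l =
      P.gram (fiberTranslation b x) (single (l : ℤ) 1) i := by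
  simp only [bandGram_apply, bandMatrix, of_apply, gram, Module.End.mul_apply,
    op_fiberTranslation_single, map_add, Finsupp.add_apply, Finsupp.single_apply, diag_adjoint]
  have hcases : (i : ℕ) = l ∨ (i : ℕ) = l + 1 ∨ (i : ℕ) = l + 2 ∨ (l : ℕ) = i + 1 ∨
    (l : ℕ) = i + 2 ∨ (i : ℕ) + 2 < l ∨ (l : ℕ) + 2 < i := by omega
  rcases hcases with h | h | h | h | h | h | h <;>
    simp (disch := omega) only [if_pos, if_neg, Fin.val_castSucc, Fin.val_succ, adjoint, star_zero]
  all_goals simp [h]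
  all_goals ring_nf

lemma abs_sub_le_of_gram_single_apply_ne_zero (x : ℝ) (i l : ℤ)
    (h : P.gram (fiberTranslation b x) (single l 1) i ≠ 0) : |i - l| ≤ (2 : ℕ) := by
  contrapose! h
  simp only [gram, Module.End.mul_apply, op_fiberTranslation_single, map_add, Finsupp.add_apply,
    Finsupp.single_apply]
  rw [lt_abs] at h
  simp only [Nat.cast_ofNat] at h
  split_ifs <;> first | omega | simp

/-- A bound for the norm of the Harper operator. -/
noncomputable def bound : ℝ := ‖P.α‖ + (‖P.κ‖ + ‖P.μ‖ + ‖P.z‖) + ‖P.β‖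

lemma bound_dual : P.dual.bound = P.bound := by
  simp only [bound, dual]
  ring

lemma norm_diag_le (x : ℝ) : ‖P.diag x‖ ≤ ‖P.κ‖ + ‖P.μ‖ + ‖P.z‖ := by
  refine (norm_sub_le _ _).trans (add_le_add_left ((norm_add_le _ _).trans_eq ?_) _)
  rw [norm_mul, norm_mul, Circle.norm_coe, Circle.norm_coe, mul_one, mul_one]

/-- The truncation of `T* T` to `[0, n)`, for the Harper operator `T` with phase `x`. -/
noncomputable def truncatedGram (b : ℝ) (n : ℕ) (x : ℝ) : Matrix (Fin n) (Fin n) ℂ :=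
  bandGram P.α P.β (fun j => P.diag (x + j * b)) n

lemma posSemidef_truncatedGram (n : ℕ) (x : ℝ) : (P.truncatedGram b n x).PosSemidef :=
  posSemidef_bandGram n

lemma l2_opNorm_truncatedGram_le (n : ℕ) (x : ℝ) : ‖P.truncatedGram b n x‖ ≤ P.bound ^ 2 := by
  rw [truncatedGram, bandGram, l2_opNorm_conjTranspose_mul_self, ← pow_two]
  exact pow_le_pow_left₀ (norm_nonneg _)
    (l2_opNorm_bandMatrix_le _ _ (fun j => P.norm_diag_le _) n) 2

lemma continuous_diag : Continuous P.diag := by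
  have := Real.continuous_fourierChar
  unfold diag
  fun_prop

lemma periodic_diag : Function.Periodic P.diag 1 := fun x => by
  simp only [diag, neg_add, AddChar.map_add_eq_mul, Circle.coe_mul]
  simp [Real.fourierChar_apply, Complex.exp_neg]

lemma continuous_truncatedGram (n : ℕ) : Continuous (P.truncatedGram b n) := by
  have hdiag := P.continuous_diag
  have hband : Continuous fun x => bandMatrix P.α P.β (fun j => P.diag (x + j * b)) n := by
    refine continuous_matrix fun r l => ?_
    simp only [bandMatrix, of_apply]
    split_ifs <;> fun_prop
  exact hband.matrix_conjTranspose.matrix_mul hband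

lemma periodic_truncatedGram (n : ℕ) : Function.Periodic (P.truncatedGram b n) 1 := fun x => by
  simp only [truncatedGram, add_right_comm x 1, P.periodic_diag _]

lemma continuous_truncatedGram_pow_apply (r n : ℕ) (i j : Fin n) :
    Continuous fun x => (P.truncatedGram b n x ^ r) i j :=
  ((P.continuous_truncatedGram n).pow r).matrix_elem i j

lemma norm_truncatedGram_pow_apply_le (r : ℕ) {n : ℕ} (x : ℝ) (i j : Fin n) :
    ‖(P.truncatedGram b n x ^ r) i j‖ ≤ (P.bound ^ 2) ^ r := by
  have : Nonempty (Fin n) := ⟨i⟩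
  calc _ ≤ ‖P.truncatedGram b n x ^ r‖ := norm_entry_le_l2_opNorm _ i j
    _ ≤ ‖P.truncatedGram b n x‖ ^ r := norm_pow_le _ r
    _ ≤ (P.bound ^ 2) ^ r := by gcongr; exact P.l2_opNorm_truncatedGram_le n x

lemma integral_truncatedGram_pow_apply_self (r : ℕ) {n : ℕ} {l : Fin n} (hl : r * 2 ≤ l)
    (hl' : l + r * 2 < n) :
    ∫ x in (0 : ℝ)..1, (P.truncatedGram b n x ^ r) l l = P.moment b r := by
  rw [← P.integral_gram_fiberTranslation_pow r l]
  congr with x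
  exact pow_apply_eq_pow_single_apply (P.abs_sub_le_of_gram_single_apply_ne_zero x)
    (P.bandGram_apply_eq_gram x) hl hl' l

lemma exists_norm_integral_trace_truncatedGram_pow_sub_le (b : ℝ) (r : ℕ) : ∃ C : ℝ, ∀ n : ℕ,
    ‖(∫ x in (0 : ℝ)..1, (P.truncatedGram b n x ^ r).trace) - n * P.moment b r‖ ≤ C := by
  set D := (P.bound ^ 2) ^ r + ‖P.moment b r‖
  refine ⟨(2 * (r * 2) : ℕ) * D, fun n => ?_⟩
  have hterm : ∀ l : Fin n,
      ‖(∫ x in (0 : ℝ)..1, (P.truncatedGram b n x ^ r) l l) - P.moment b r‖ ≤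
        if ¬(r * 2 ≤ l ∧ l + r * 2 < n) then D else 0 := by
    intro l
    split_ifs with h
    · rw [P.integral_truncatedGram_pow_apply_self r h.1 h.2, sub_self, norm_zero]
    · refine (norm_sub_le _ _).trans (add_le_add_left ?_ _)
      simpa using norm_integral_le_of_norm_le_const (a := (0 : ℝ)) (b := 1)
        fun x _ => P.norm_truncatedGram_pow_apply_le (b := b) r x l l
  simp only [trace, diag_apply]
  rw [integral_finsetSum fun l _ =>
    (P.continuous_truncatedGram_pow_apply r n l l).intervalIntegrable 0 1]
  calc _ = ‖∑ l : Fin n, ((∫ x in (0 : ℝ)..1, (P.truncatedGram b n x ^ r) l l) -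
          P.moment b r)‖ := by simp
    _ ≤ ∑ l : Fin n, if ¬(r * 2 ≤ l ∧ l + r * 2 < n) then D else 0 :=
      norm_sum_le_of_le _ fun l _ => hterm l
    _ ≤ (2 * (r * 2) : ℕ) * D := by
      rw [← Finset.sum_filter, Finset.sum_const, nsmul_eq_mul]
      gcongr
      exact card_filter_boundary_le n (r * 2)

lemma sum_eval_eigenvalues (p : Polynomial ℝ) (n : ℕ) (x : ℝ) :
    ∑ i, p.eval ((P.posSemidef_truncatedGram (b := b) n x).isHermitian.eigenvalues i) =
      ∑ r ∈ Finset.range (p.natDegree + 1),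
        p.coeff r * ((P.truncatedGram b n x ^ r).trace).re := by
  simp only [Polynomial.eval_eq_sum_range]
  rw [Finset.sum_comm]
  refine Finset.sum_congr rfl fun r _ => ?_
  rw [trace_pow_eq_sum_eigenvalues_pow (P.posSemidef_truncatedGram n x).isHermitian,
    ← Complex.ofReal_sum, Complex.ofReal_re, Finset.mul_sum]

lemma continuous_sum_eval_eigenvalues (p : Polynomial ℝ) (n : ℕ) : Continuous fun x =>
    ∑ i, p.eval ((P.posSemidef_truncatedGram (b := b) n x).isHermitian.eigenvalues i) := by
  simp only [sum_eval_eigenvalues]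
  refine continuous_finsetSum _ fun r _ => continuous_const.mul (Complex.continuous_re.comp ?_)
  exact ((P.continuous_truncatedGram n).pow r).matrix_trace

lemma exists_abs_integral_sum_eval_eigenvalues_sub_le (b : ℝ) (p : Polynomial ℝ) :
    ∃ C : ℝ, ∀ n : ℕ,
      |(∫ x in (0 : ℝ)..1,
          ∑ i, p.eval ((P.posSemidef_truncatedGram (b := b) n x).isHermitian.eigenvalues i)) -
        n * ∑ r ∈ Finset.range (p.natDegree + 1), p.coeff r * (P.moment b r).re| ≤ C := by
  choose C hC using P.exists_norm_integral_trace_truncatedGram_pow_sub_le b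
  refine ⟨∑ r ∈ Finset.range (p.natDegree + 1), |p.coeff r| * C r, fun n => ?_⟩
  have htrace : ∀ r, Continuous fun x => (P.truncatedGram b n x ^ r).trace := fun r =>
    ((P.continuous_truncatedGram n).pow r).matrix_trace
  have hre : ∀ r, ∫ x in (0 : ℝ)..1, ((P.truncatedGram b n x ^ r).trace).re =
      (∫ x in (0 : ℝ)..1, (P.truncatedGram b n x ^ r).trace).re := fun r =>
    Complex.reCLM.intervalIntegral_comp_comm ((htrace r).intervalIntegrable 0 1)
  simp only [sum_eval_eigenvalues]
  have hint : ∀ r, IntervalIntegrable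
      (fun x => p.coeff r * ((P.truncatedGram b n x ^ r).trace).re) volume 0 1 := fun r =>
    (continuous_const.mul (Complex.continuous_re.comp (htrace r))).intervalIntegrable 0 1
  rw [integral_finsetSum fun r _ => hint r, Finset.mul_sum, ← Finset.sum_sub_distrib]
  refine (Finset.abs_sum_le_sum_abs _ _).trans (Finset.sum_le_sum fun r _ => ?_)
  rw [intervalIntegral.integral_const_mul, hre, mul_left_comm, ← mul_sub, abs_mul]
  gcongr
  refine le_trans (le_of_eq ?_) ((Complex.abs_re_le_norm _).trans (hC r n))
  simp

lemma continuous_log_regDet {δ : ℝ} (hδ : 0 < δ) (n : ℕ) :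
    Continuous fun x => Real.log (regDet P.α P.β δ (fun j => P.diag (x + j * b)) n) :=
  ((P.continuous_truncatedGram n).add continuous_const).matrix_det.norm.log fun _ =>
    (regDet_pos hδ _ n).ne'

lemma exists_polynomial_abs_log_regDet_sub_le {δ η : ℝ} (hδ : 0 < δ) (hη : 0 < η) :
    ∃ p : Polynomial ℝ, ∀ Q : HarperCoeff, Q.bound = P.bound → ∀ (b : ℝ) (n : ℕ) (x : ℝ),
      |Real.log (regDet Q.α Q.β δ (fun j => Q.diag (x + j * b)) n) -
        ∑ i, p.eval ((Q.posSemidef_truncatedGram (b := b) n x).isHermitian.eigenvalues i)| ≤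
          n * η := by
  obtain ⟨p, hp⟩ := exists_polynomial_near_of_continuousOn 0 (P.bound ^ 2)
    (fun t => Real.log (t + δ))
    (ContinuousOn.log (by fun_prop) fun t ht => (add_pos_of_nonneg_of_pos ht.1 hδ).ne') η hη
  refine ⟨p, fun Q hQ b n x => ?_⟩
  have hpsd := Q.posSemidef_truncatedGram (b := b) n x
  have hlog : Real.log (regDet Q.α Q.β δ (fun j => Q.diag (x + j * b)) n) =
      ∑ i, Real.log (hpsd.isHermitian.eigenvalues i + δ) := by
    rw [← Real.log_prod fun i _ => (add_pos_of_nonneg_of_pos (hpsd.eigenvalues_nonneg i) hδ).ne',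
      ← norm_det_add_smul_one hpsd hδ.le]
    rfl
  rw [hlog, ← Finset.sum_sub_distrib]
  refine (Finset.abs_sum_le_sum_abs _ _).trans ((Finset.sum_le_card_nsmul _ _ η ?_).trans ?_)
  · intro i _
    rw [abs_sub_comm]
    exact (hp _ ⟨hpsd.eigenvalues_nonneg i, (eigenvalues_le_l2_opNorm hpsd.isHermitian i).trans
      (hQ ▸ Q.l2_opNorm_truncatedGram_le n x)⟩).le
  · simp

lemma exists_abs_integral_log_regDet_sub_dual_le (b : ℝ) {δ η : ℝ} (hδ : 0 < δ) (hη : 0 < η) :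
    ∃ C : ℝ, ∀ n : ℕ,
      |(∫ x in (0 : ℝ)..1, Real.log (regDet P.α P.β δ (fun j => P.diag (x + j * b)) n)) -
        ∫ x in (0 : ℝ)..1,
          Real.log (regDet P.dual.α P.dual.β δ (fun j => P.dual.diag (x + j * b)) n)| ≤
        n * η + C := by
  obtain ⟨p, hp⟩ := P.exists_polynomial_abs_log_regDet_sub_le hδ (half_pos hη)
  have happrox : ∀ Q : HarperCoeff, Q.bound = P.bound → ∀ n : ℕ,
      |(∫ x in (0 : ℝ)..1, Real.log (regDet Q.α Q.β δ (fun j => Q.diag (x + j * b)) n)) -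
        ∫ x in (0 : ℝ)..1, ∑ i,
          p.eval ((Q.posSemidef_truncatedGram (b := b) n x).isHermitian.eigenvalues i)| ≤
        n * (η / 2) := fun Q hQ n => by
    rw [← integral_sub ((Q.continuous_log_regDet hδ n).intervalIntegrable 0 1)
      ((Q.continuous_sum_eval_eigenvalues p n).intervalIntegrable 0 1)]
    simpa using intervalIntegral.norm_integral_le_of_norm_le_const (C := n * (η / 2))
      (a := 0) (b := 1) fun x _ => (Real.norm_eq_abs _).trans_le (hp Q hQ b n x)
  obtain ⟨C₁, hC₁⟩ := P.exists_abs_integral_sum_eval_eigenvalues_sub_le b p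
  obtain ⟨C₂, hC₂⟩ := P.dual.exists_abs_integral_sum_eval_eigenvalues_sub_le b p
  simp only [moment_dual] at hC₂
  refine ⟨C₁ + C₂, fun n => ?_⟩
  have h₁ := abs_le.1 (happrox P rfl n)
  have h₂ := abs_le.1 (happrox P.dual P.bound_dual n)
  have h₃ := abs_le.1 (hC₁ n)
  have h₄ := abs_le.1 (hC₂ n)
  exact abs_le.2 ⟨by linarith, by linarith⟩

end HarperCoeff

end TraceAsymptotics

section AubryDuality

variable {b : ℝ}

lemma exists_sq_mul_exp_lt (D : ℝ) {Λ Λ' : ℝ} (h : Λ < Λ') :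
    ∃ m : ℕ, 0 < m ∧ (m + 1) ^ 2 * (D * Real.exp Λ ^ (2 * m)) < Real.exp (2 * m * Λ') := by
  have hr : |Real.exp (2 * (Λ - Λ'))| < 1 := by
    rw [Real.abs_exp, Real.exp_lt_one_iff]
    linarith
  have htend := ((tendsto_add_atTop_iff_nat 1).2
    (tendsto_pow_const_mul_const_pow_of_abs_lt_one 2 hr)).const_mul D
  rw [mul_zero] at htend
  obtain ⟨m, hm, hm₀⟩ :=
    ((htend.eventually_lt_const (Real.exp_pos (2 * (Λ - Λ')))).and (eventually_gt_atTop 0)).exists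
  refine ⟨m, hm₀, ?_⟩
  rw [pow_succ (Real.exp _), ← mul_assoc, ← mul_assoc, mul_lt_iff_lt_one_left (Real.exp_pos _),
    ← Real.exp_nat_mul] at hm
  push_cast at hm
  calc (m + 1) ^ 2 * (D * Real.exp Λ ^ (2 * m))
      = D * (m + 1) ^ 2 * Real.exp (m * (2 * (Λ - Λ'))) * Real.exp (2 * m * Λ') := by
        rw [mul_assoc _ (Real.exp _) (Real.exp _), ← Real.exp_add, ← Real.exp_nat_mul]
        push_cast
        ring_nf
    _ < Real.exp (2 * m * Λ') := mul_lt_of_lt_one_left (Real.exp_pos _) hm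

namespace HarperCoeff

variable (P : HarperCoeff) {a a' : ℂ}

/-- The function whose cocycle propagates the solutions of the difference equation
`a * u (j + 1) + P.diag (x + j * b) * u j + a * u (j - 1) = 0`. -/
noncomputable def sampling (a : ℂ) (x : ℝ) : ℂ := -P.diag x / a

lemma neg_mul_sampling (ha : a ≠ 0) (x : ℝ) : -a * P.sampling a x = P.diag x := by
  rw [sampling]
  field_simp

lemma continuous_sampling (a : ℂ) : Continuous (P.sampling a) :=
  P.continuous_diag.neg.div_const a

lemma periodic_sampling (a : ℂ) : Function.Periodic (P.sampling a) 1 := fun x => by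
  simp only [sampling, P.periodic_diag x]

lemma exists_regDet_le {m : ℕ} {T : ℝ}
    (hT : ∀ x, ‖(P.truncatedGram b m x).det‖ < T) :
    ∃ δ > 0, ∀ x, regDet P.α P.β δ (fun j => P.diag (x + j * b)) m ≤ T := by
  have hcont : Continuous fun q : ℝ × ℝ =>
      ‖(P.truncatedGram b m q.2 + (q.1 : ℂ) • (1 : Matrix (Fin m) (Fin m) ℂ)).det‖ :=
    (((P.continuous_truncatedGram m).comp continuous_snd).add
      ((Complex.continuous_ofReal.comp continuous_fst).smul continuous_const)).matrix_det.norm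
  have hev : ∀ᶠ δ : ℝ in 𝓝 0, ∀ x ∈ Set.Icc (0 : ℝ) 1,
      ‖(P.truncatedGram b m x + (δ : ℂ) • (1 : Matrix (Fin m) (Fin m) ℂ)).det‖ < T :=
    isCompact_Icc.eventually_forall_of_forall_eventually fun x _ =>
      (hcont.tendsto (0, x)).eventually_lt_const (by simpa using hT x)
  obtain ⟨δ, hδ, hδ₀⟩ := ((hev.filter_mono nhdsWithin_le_nhds).and
    (self_mem_nhdsWithin (a := (0 : ℝ)) (s := Set.Ioi 0))).exists
  refine ⟨δ, hδ₀, fun x => ?_⟩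
  obtain ⟨y, hy, hxy⟩ := (P.periodic_truncatedGram (b := b) m).exists_mem_Ico₀ one_pos x
  have h := hδ y (Set.Ico_subset_Icc_self hy)
  rw [← hxy] at h
  exact h.le

lemma exists_norm_det_truncatedGram_le (hb : Irrational b) (ha : a ≠ 0)
    (hαβ : P.α * P.β = a ^ 2) {Λ : ℝ} (hα : ‖P.α‖ ≤ Real.exp Λ) (hβ : ‖P.β‖ ≤ Real.exp Λ)
    (hΛ : lyapunovExponent (P.sampling a) b + Real.log ‖a‖ < Λ) :
    ∃ C, ∀ (n : ℕ) (x : ℝ),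
      ‖(P.truncatedGram b n x).det‖ ≤ (n + 1) ^ 2 * (C ^ 2 * Real.exp Λ ^ (2 * n)) := by
  obtain ⟨C, -, hC⟩ := exists_norm_cocycle_le_exp hb (P.continuous_sampling a)
    (P.periodic_sampling a) (lt_sub_iff_add_lt.2 hΛ)
  refine ⟨C, fun n x => norm_det_bandGram_le hα hβ (fun i k => ?_) n⟩
  have hd : (fun j : ℕ => P.diag (x + (j + i : ℕ) * b)) =
      fun j : ℕ => -a * P.sampling a (x + i * b + j * b) := by
    ext j
    rw [P.neg_mul_sampling ha]
    push_cast
    ring_nf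
  have hexp : ‖a‖ ^ k * Real.exp (k * (Λ - Real.log ‖a‖)) = Real.exp Λ ^ k := by
    rw [← Real.exp_log (norm_pos_iff.2 ha), ← Real.exp_nat_mul, ← Real.exp_add, Real.log_exp,
      ← Real.exp_nat_mul]
    ring_nf
  rw [hd, det_tridiagonal_eq_cocycle hαβ, norm_mul, norm_pow, norm_neg, ← hexp, mul_left_comm]
  gcongr
  exact (norm_entry_le_l2_opNorm _ _ _).trans (hC k _)

-- `δ` is chosen after `m`; the block estimate `regDet_mul_le` then gives a bound for this fixed `δ`
-- on arbitrarily large truncations, where the traces of the operator and of its dual agree.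
lemma exists_regDet_mul_le (hb : Irrational b) (ha : a ≠ 0) (hαβ : P.α * P.β = a ^ 2) {Λ : ℝ}
    (hΛ : max (lyapunovExponent (P.sampling a) b + Real.log ‖a‖)
      (max (Real.log ‖P.α‖) (Real.log ‖P.β‖)) < Λ) :
    ∃ δ > 0, ∃ m > 0, ∀ (s : ℕ) (x : ℝ),
      regDet P.α P.β δ (fun j => P.diag (x + j * b)) (s * m) ≤ Real.exp (2 * m * Λ) ^ s := by
  obtain ⟨Λ', hΛ', hlt⟩ := exists_between hΛ
  simp only [max_lt_iff] at hΛ'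
  have hle : ∀ w : ℂ, Real.log ‖w‖ < Λ' → ‖w‖ ≤ Real.exp Λ' := fun w hw =>
    (Real.le_exp_log _).trans (Real.exp_le_exp.2 hw.le)
  obtain ⟨C, hC⟩ := P.exists_norm_det_truncatedGram_le hb ha hαβ (hle _ hΛ'.2.1)
    (hle _ hΛ'.2.2) hΛ'.1
  obtain ⟨m, hm, hmΛ⟩ := exists_sq_mul_exp_lt (C ^ 2) hlt
  obtain ⟨δ, hδ, hδm⟩ := P.exists_regDet_le fun x => (hC m x).trans_lt hmΛ
  refine ⟨δ, hδ, m, hm, fun s x => regDet_mul_le hδ s fun k => ?_⟩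
  have hshift : ∀ j : ℕ, x + (j + k : ℕ) * b = x + k * b + j * b := fun j => by
    push_cast
    ring
  simpa only [hshift] using hδm (x + k * b)

lemma log_norm_cocycle_le_log_regDet {δ : ℝ} (hδ : 0 < δ) (ha : a ≠ 0) (hα : P.α = a)
    (hβ : P.β = a) {n : ℕ} (hn : 2 ≤ n) (x : ℝ) :
    2 * Real.log ‖cocycle (P.sampling a) b n x‖ + (2 * n * Real.log ‖a‖ - Real.log 16) ≤
      Real.log (regDet P.α P.β δ (fun j => P.diag (x + j * b)) n) := by
  obtain ⟨n, rfl⟩ := Nat.exists_eq_add_of_le' hn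
  have : 0 < ‖a‖ := norm_pos_iff.2 ha
  have hA := norm_cocycle_pos (P.sampling a) b (n + 2) x
  have h := norm_cocycle_sq_mul_le (b := b) (g := P.sampling a) a n x
  simp only [P.neg_mul_sampling ha] at h
  have hreg : ‖cocycle (P.sampling a) b (n + 2) x‖ ^ 2 * ‖a‖ ^ (2 * (n + 2)) ≤
      16 * regDet P.α P.β δ (fun j => P.diag (x + j * b)) (n + 2) := by
    rw [hα, hβ]
    exact h.trans (mul_le_mul_of_nonneg_left
      (norm_det_le_norm_det_add_smul_one (posSemidef_bandGram _) hδ.le) (by norm_num))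
  have hlog := Real.log_le_log (by positivity) hreg
  rw [Real.log_mul (by positivity) (by positivity), Real.log_mul (by norm_num)
    (regDet_pos hδ _ _).ne', Real.log_pow, Real.log_pow] at hlog
  push_cast at hlog ⊢
  linarith

lemma lyapunovExponent_sampling_le_integral_log_regDet {δ : ℝ} (hδ : 0 < δ) (ha : a ≠ 0)
    (hα : P.α = a) (hβ : P.β = a) {n : ℕ} (hn : 2 ≤ n) :
    2 * n * (lyapunovExponent (P.sampling a) b + Real.log ‖a‖) - Real.log 16 ≤
      ∫ x in (0 : ℝ)..1, Real.log (regDet P.α P.β δ (fun j => P.diag (x + j * b)) n) := by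
  have hn₀ : (0 : ℝ) < n := by positivity
  have hcont := continuous_log_norm_cocycle (P.continuous_sampling a) b n
  have hL := lyapunovExponent_le_average (P.sampling a) b ⟨n, by omega⟩
  rw [PNat.mk_coe, le_inv_mul_iff₀ hn₀] at hL
  have hint := integral_mono_on (μ := volume) zero_le_one
    (((hcont.const_mul 2).add continuous_const).intervalIntegrable 0 1)
    ((P.continuous_log_regDet (b := b) hδ n).intervalIntegrable 0 1)
    fun x _ => P.log_norm_cocycle_le_log_regDet hδ ha hα hβ hn x
  simp only [Pi.add_apply] at hint
  rw [integral_add ((hcont.const_mul 2).intervalIntegrable 0 1) intervalIntegrable_const,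
    intervalIntegral.integral_const_mul, intervalIntegral.integral_const, sub_zero,
    one_smul] at hint
  linarith

theorem lyapunovExponent_sampling_dual_le (hb : Irrational b) (ha : a ≠ 0)
    (hαβ : P.α * P.β = a ^ 2) (ha' : a' ≠ 0) (hκ : P.κ = a') (hμ : P.μ = a') :
    lyapunovExponent (P.dual.sampling a') b + Real.log ‖a'‖ ≤
      max (lyapunovExponent (P.sampling a) b + Real.log ‖a‖)
        (max (Real.log ‖P.α‖) (Real.log ‖P.β‖)) := by
  set L := lyapunovExponent (P.dual.sampling a') b + Real.log ‖a'‖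
  refine le_of_forall_gt_imp_ge_of_dense fun Λ hΛ => le_of_forall_pos_le_add fun η hη => ?_
  obtain ⟨δ, hδ, m, hm, hupper⟩ := P.exists_regDet_mul_le hb ha hαβ hΛ
  obtain ⟨C, hC⟩ := P.exists_abs_integral_log_regDet_sub_dual_le b hδ hη
  by_contra! hlt
  obtain ⟨s, hs⟩ := exists_nat_gt (max 2 ((C + Real.log 16) / η))
  obtain ⟨hs₂, hsη⟩ := max_lt_iff.1 hs
  rw [div_lt_iff₀ hη] at hsη
  have hsm : s ≤ s * m := Nat.le_mul_of_pos_right s hm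
  have hs₂' : 2 < s := by exact_mod_cast hs₂
  have hlower := P.dual.lyapunovExponent_sampling_le_integral_log_regDet (b := b) hδ ha' hκ hμ
    (hs₂'.le.trans hsm)
  have hupper' : ∫ x in (0 : ℝ)..1,
      Real.log (regDet P.α P.β δ (fun j => P.diag (x + j * b)) (s * m)) ≤ 2 * (s * m : ℕ) * Λ := by
    have h := integral_mono_on (μ := volume) zero_le_one
      ((P.continuous_log_regDet (b := b) hδ (s * m)).intervalIntegrable 0 1)
      intervalIntegrable_const
      fun x _ => Real.log_le_log (regDet_pos hδ _ _) (hupper s x)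
    refine h.trans_eq ?_
    rw [intervalIntegral.integral_const, sub_zero, one_smul, Real.log_pow, Real.log_exp]
    push_cast
    ring
  have hdual := (abs_le.1 (hC (s * m))).1
  have hL : 2 * (s * m : ℕ) * (Λ + η) ≤ 2 * (s * m : ℕ) * L := by gcongr
  have hsmη : s * η ≤ (s * m : ℕ) * η := by gcongr
  linarith

end HarperCoeff

/-- The function `E - v(x + iε)` with `ρ = exp (-2πε)`, for the potential `v(x) = 2λcos(2πx)`. -/
noncomputable def amoSampling (lam E ρ : ℝ) (x : ℝ) : ℂ :=
  E - lam * (ρ * 𝐞 x + ρ⁻¹ * 𝐞 (-x))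

lemma lyapunovExponent_amoSampling_le_of_dual {lam ρ : ℝ} (hb : Irrational b) (hlam : lam ≠ 0)
    (hρ : 0 < ρ) (E : ℝ) :
    lyapunovExponent (amoSampling lam E ρ) b ≤
      max (lyapunovExponent (amoSampling lam⁻¹ (E / lam) 1) b) |Real.log ρ| +
        Real.log |lam| := by
  let P : HarperCoeff := ⟨lam * ρ⁻¹, lam * ρ, 1, 1, E⟩
  have hlam' : (lam : ℂ) ≠ 0 := Complex.ofReal_ne_zero.2 hlam
  have hρ' : (ρ : ℂ) ≠ 0 := Complex.ofReal_ne_zero.2 hρ.ne'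
  have hαβ : P.α * P.β = (lam : ℂ) ^ 2 := by
    simp only [P]
    push_cast
    field_simp
  have hsampling : P.sampling lam = amoSampling lam⁻¹ (E / lam) 1 := by
    ext x
    simp only [HarperCoeff.sampling, HarperCoeff.diag, amoSampling, P]
    push_cast
    field_simp
    ring
  have hdual : P.dual.sampling 1 = amoSampling lam E ρ := by
    ext x
    simp only [HarperCoeff.sampling, HarperCoeff.diag, HarperCoeff.dual, amoSampling, P]
    ring
  have h := P.lyapunovExponent_sampling_dual_le hb hlam' hαβ one_ne_zero rfl rfl
  have hα : Real.log ‖P.α‖ = Real.log |lam| - Real.log ρ := by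
    simp [P, Real.log_mul, hlam, hρ.ne', sub_eq_add_neg]
  have hβ : Real.log ‖P.β‖ = Real.log |lam| + Real.log ρ := by
    simp [P, Real.log_mul, hlam, hρ.ne']
  rw [hsampling, hdual, hα, hβ] at h
  simpa [abs, max_comm, max_add, add_comm, sub_eq_add_neg, max_add_add_left] using h

lemma lyapunovExponent_amoSampling_inv_le {lam : ℝ} (hb : Irrational b) (hlam : lam ≠ 0)
    (E : ℝ) : lyapunovExponent (amoSampling lam⁻¹ (E / lam) 1) b ≤
      lyapunovExponent (amoSampling lam E 1) b - Real.log |lam| := by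
  have h := lyapunovExponent_amoSampling_le_of_dual hb (inv_ne_zero hlam) one_pos (E / lam)
  rwa [inv_inv, div_inv_eq_mul, div_mul_cancel₀ E hlam, Real.log_one, abs_zero,
    max_eq_left (lyapunovExponent_nonneg _ _), abs_inv, Real.log_inv, ← sub_eq_add_neg] at h

lemma log_abs_le_lyapunovExponent_amoSampling {lam : ℝ} (hb : Irrational b) (hlam : lam ≠ 0)
    (E : ℝ) : Real.log |lam| ≤ lyapunovExponent (amoSampling lam E 1) b :=
  sub_nonneg.1 <| (lyapunovExponent_nonneg _ _).trans <|
    lyapunovExponent_amoSampling_inv_le hb hlam E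

theorem lyapunovExponent_amoSampling_le {lam ρ : ℝ} (hb : Irrational b) (hρ : 0 < ρ) (E : ℝ) :
    lyapunovExponent (amoSampling lam E ρ) b ≤
      max (lyapunovExponent (amoSampling lam E 1) b) (Real.log |lam| + |Real.log ρ|) := by
  rcases eq_or_ne lam 0 with rfl | hlam
  · exact le_max_of_le_left (le_of_eq (by congr 1; ext x; simp [amoSampling]))
  have h := lyapunovExponent_amoSampling_le_of_dual hb hlam hρ E
  rw [max_add] at h
  exact h.trans (max_le_max (le_sub_iff_add_le.1 (lyapunovExponent_amoSampling_inv_le hb hlam E))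
    (add_comm _ _).le)

end AubryDuality

section Spectrum

variable {b : ℝ}

lemma isUnit_of_isSymmetric_of_norm_sq_le {𝕜 F : Type*} [RCLike 𝕜] [NormedAddCommGroup F]
    [InnerProductSpace 𝕜 F] [CompleteSpace F] {T : F →L[𝕜] F} (hT : T.IsSymmetric) {K : ℝ}
    (hK : 0 < K) (h : ∀ u, ‖u‖ ^ 2 ≤ K * ‖T u‖ ^ 2) : IsUnit T := by
  have hTT : IsUnit (T * T) := by
    refine (T * T).isUnit_of_forall_le_norm_inner_map (c := ⟨K⁻¹, (inv_pos.2 hK).le⟩)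
      (NNReal.coe_pos.1 (inv_pos.2 hK)) fun u => ?_
    have hinner : ‖inner 𝕜 ((T * T) u) u‖ = ‖T u‖ ^ 2 := by
      rw [mul_apply_eq_comp, show inner 𝕜 (T (T u)) u = inner 𝕜 (T u) (T u) from
        hT (T u) u, inner_self_eq_norm_sq_to_K]
      simp
    rw [hinner]
    exact (mul_inv_le_iff₀' hK).2 (h u)
  exact ((Commute.refl T).isUnit_mul_iff.1 hTT).1

lemma norm_sq_le_two_mul_add {F : Type*} [SeminormedAddCommGroup F] (x y : F) :
    ‖x‖ ^ 2 ≤ 2 * ‖y‖ ^ 2 + 2 * ‖y - x‖ ^ 2 := by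
  have htri : ‖x‖ ≤ ‖y‖ + ‖y - x‖ := by simpa using norm_sub_le y (y - x)
  nlinarith [norm_nonneg x, sq_nonneg (‖y‖ - ‖y - x‖)]

section SchrodingerOp

variable {V : ℝ → ℝ} {θ : ℝ} {H : lp (fun _ : ℤ => ℂ) 2 →L[ℂ] lp (fun _ : ℤ => ℂ) 2}

lemma hasSum_norm_sq_add (u : lp (fun _ : ℤ => ℂ) 2) (k : ℤ) :
    HasSum (fun n => ‖u (n + k)‖ ^ 2) (‖u‖ ^ 2) := by
  have h : HasSum (fun n => ‖u n‖ ^ 2) (‖u‖ ^ 2) := by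
    simpa using lp.hasSum_norm (p := 2) (by norm_num) u
  exact (Equiv.addRight k).hasSum_iff.2 h

lemma isSymmetric_of_isSchrodingerOp (hH : IsSchrodingerOp V b θ H) : H.IsSymmetric := by
  intro u v
  set w : ℤ → ℂ := fun n => inner ℂ (u (n + 1)) (v n) - inner ℂ (u n) (v (n + 1)) with hw
  have hsummable (f g : lp (fun _ : ℤ => ℂ) 2) :
      Summable fun n => inner ℂ (f (n + 1)) (g n) := by
    refine Summable.of_norm_bounded ((hasSum_norm_sq_add f 1).summable.add
      (hasSum_norm_sq_add g 0).summable) fun n => (norm_inner_le_norm _ _).trans ?_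
    rw [add_zero]
    nlinarith [sq_nonneg (‖f (n + 1)‖ - ‖g n‖), sq_nonneg ‖f (n + 1)‖, sq_nonneg ‖g n‖]
  have hw_summable : Summable w := by
    refine (hsummable u v).sub ?_
    have h := ((hsummable v u).map (starRingEnd ℂ) Complex.continuous_conj)
    simpa [Function.comp_def, mul_comm] using h
  have htelescope : ∀ n, inner ℂ (H u n) (v n) - inner ℂ (u n) (H v n) = w n - w (n + -1) := by
    intro n
    rw [hH u n, hH v n]
    simp only [hw, RCLike.inner_apply, map_add, map_mul, Complex.conj_ofReal,
      neg_add_cancel_right, sub_eq_add_neg]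
    ring
  have h₁ := (lp.hasSum_inner (𝕜 := ℂ) (H u) v).sub (lp.hasSum_inner (𝕜 := ℂ) u (H v))
  have h₂ := hw_summable.hasSum.sub ((Equiv.addRight (-1 : ℤ)).hasSum_iff.2 hw_summable.hasSum)
  simp only [htelescope] at h₁
  exact sub_eq_zero.1 ((h₁.unique h₂).trans (sub_self _))

lemma exists_lt_norm_sq_of_mem_spectrum (hH : IsSchrodingerOp V b θ H) {E : ℝ}
    (hE : (E : ℂ) ∈ spectrum ℂ H) {K : ℝ} (hK : 0 < K) :
    ∃ u, K * ‖H u - (E : ℂ) • u‖ ^ 2 < ‖u‖ ^ 2 := by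
  by_contra! h
  have happly : ∀ u, (algebraMap ℂ _ (E : ℂ) - H) u = (E : ℂ) • u - H u := fun u => by
    simp only [Algebra.algebraMap_eq_smul_one, _root_.sub_apply, _root_.smul_apply,
      one_apply_eq_self]
  refine hE (isUnit_of_isSymmetric_of_norm_sq_le (fun u v => ?_) hK fun u => ?_)
  · have hsymm : inner ℂ (H u) v = inner ℂ u (H v) := isSymmetric_of_isSchrodingerOp hH u v
    change inner ℂ ((algebraMap ℂ _ (E : ℂ) - H) u) v = inner ℂ u ((algebraMap ℂ _ (E : ℂ) - H) v)
    rw [happly, happly, inner_sub_left, inner_sub_right, inner_smul_left, inner_smul_right, hsymm,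
      Complex.conj_ofReal]
  · rw [happly, norm_sub_rev]
    exact h u

end SchrodingerOp

lemma l2_opNorm_col_sq (w : Matrix (Fin 2) (Fin 1) ℂ) :
    ‖w‖ ^ 2 = ‖w 0 0‖ ^ 2 + ‖w 1 0‖ ^ 2 := by
  have hw : wᴴ * w = ((‖w 0 0‖ ^ 2 + ‖w 1 0‖ ^ 2 : ℝ) : ℂ) • 1 := by
    ext i j
    fin_cases i
    fin_cases j
    simp [mul_apply, Fin.sum_univ_two, Complex.conj_mul']
  rw [pow_two, ← l2_opNorm_conjTranspose_mul_self, hw, norm_smul, norm_one, mul_one,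
    Complex.norm_real, Real.norm_of_nonneg (by positivity)]

lemma norm_mul_l2_opNorm_mul_le (B C : Matrix (Fin 2) (Fin 2) ℂ) (w : Matrix (Fin 2) (Fin 1) ℂ) :
    ‖w‖ * ‖C * B‖ ≤ ‖C * w‖ * ‖B‖ + ‖C‖ * ‖B.adjugate * w‖ := by
  rcases (norm_nonneg w).eq_or_lt with hw | hw
  · rw [← hw, zero_mul]
    positivity
  obtain ⟨w', hw'₀, hw'₁⟩ : ∃ w' : Matrix (Fin 2) (Fin 1) ℂ,
      w' 0 0 = -star (w 1 0) ∧ w' 1 0 = star (w 0 0) :=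
    ⟨!![-star (w 1 0); star (w 0 0)], rfl, rfl⟩
  have hw' : ‖w'‖ = ‖w‖ := by
    rw [← sq_eq_sq₀ (norm_nonneg _) (norm_nonneg _), l2_opNorm_col_sq, l2_opNorm_col_sq, hw'₀,
      hw'₁, norm_neg, norm_star, norm_star, add_comm]
  have hwB : ‖w'ᴴ * B‖ = ‖B.adjugate * w‖ := by
    rw [← l2_opNorm_conjTranspose, ← sq_eq_sq₀ (norm_nonneg _) (norm_nonneg _), l2_opNorm_col_sq,
      l2_opNorm_col_sq, conjTranspose_apply, conjTranspose_apply, norm_star, norm_star,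
      ← norm_neg ((w'ᴴ * B) 0 0), add_comm]
    congr 3 <;>
      simp [adjugate_fin_two, mul_apply, hw'₀, hw'₁] <;>
      ring
  have hresolution : w * wᴴ + w' * w'ᴴ = ((‖w‖ ^ 2 : ℝ) : ℂ) • 1 := by
    rw [l2_opNorm_col_sq]
    ext i j
    fin_cases i <;> fin_cases j <;>
      simp [mul_apply, hw'₀, hw'₁, Complex.mul_conj', add_comm, mul_comm]
  have hsplit : ((‖w‖ ^ 2 : ℝ) : ℂ) • (C * B) = C * w * (wᴴ * B) + C * w' * (w'ᴴ * B) := by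
    calc ((‖w‖ ^ 2 : ℝ) : ℂ) • (C * B) = C * (w * wᴴ + w' * w'ᴴ) * B := by simp [hresolution]
      _ = _ := by simp only [Matrix.mul_add, Matrix.add_mul, Matrix.mul_assoc]
  have hnorm : ‖w‖ ^ 2 * ‖C * B‖ ≤ ‖C * w‖ * (‖w‖ * ‖B‖) + ‖C‖ * ‖w‖ * ‖B.adjugate * w‖ := by
    calc ‖w‖ ^ 2 * ‖C * B‖ = ‖C * w * (wᴴ * B) + C * w' * (w'ᴴ * B)‖ := by
          rw [← hsplit, norm_smul, Complex.norm_real, Real.norm_of_nonneg (by positivity)]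
      _ ≤ ‖C * w‖ * (‖wᴴ‖ * ‖B‖) + ‖C‖ * ‖w'‖ * ‖w'ᴴ * B‖ := by
          refine (norm_add_le _ _).trans (add_le_add ?_ ?_) <;>
            refine (l2_opNorm_mul _ _).trans ?_ <;> gcongr <;> exact l2_opNorm_mul _ _
      _ = _ := by rw [l2_opNorm_conjTranspose, hw', hwB]
  refine le_of_mul_le_mul_left ?_ hw
  linarith

lemma nine_mul_norm_sq_le {B C : Matrix (Fin 2) (Fin 2) ℂ} (h : 3 * (‖B‖ + ‖C‖) < ‖C * B‖)
    (w : Matrix (Fin 2) (Fin 1) ℂ) : 9 * ‖w‖ ^ 2 ≤ ‖C * w‖ ^ 2 + ‖B.adjugate * w‖ ^ 2 := by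
  have hBC : 0 < ‖B‖ + ‖C‖ := by
    by_contra! hle
    have hB : ‖B‖ = 0 := by linarith [norm_nonneg B, norm_nonneg C]
    rw [norm_eq_zero.1 hB, Matrix.mul_zero, norm_zero] at h
    linarith [norm_nonneg C]
  have hmax : 3 * ‖w‖ ≤ max ‖C * w‖ ‖B.adjugate * w‖ := by
    refine le_of_mul_le_mul_right ?_ hBC
    calc 3 * ‖w‖ * (‖B‖ + ‖C‖) = ‖w‖ * (3 * (‖B‖ + ‖C‖)) := by ring
      _ ≤ ‖w‖ * ‖C * B‖ := by gcongr
      _ ≤ ‖C * w‖ * ‖B‖ + ‖C‖ * ‖B.adjugate * w‖ := norm_mul_l2_opNorm_mul_le B C w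
      _ ≤ max ‖C * w‖ ‖B.adjugate * w‖ * ‖B‖ + ‖C‖ * max ‖C * w‖ ‖B.adjugate * w‖ := by
          gcongr
          exacts [le_max_left _ _, le_max_right _ _]
      _ = _ := by ring
  rcases le_max_iff.1 hmax with hle | hle
  · nlinarith [norm_nonneg w, sq_nonneg ‖B.adjugate * w‖]
  · nlinarith [norm_nonneg w, sq_nonneg ‖C * w‖]

/-- The Cauchy data `(u m, u (m - 1))` of a sequence at the site `m`, as a column. -/
def cauchyData (u : ℤ → ℂ) (m : ℤ) : Matrix (Fin 2) (Fin 1) ℂ := !![u m; u (m - 1)]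

section Solution

variable {V : ℝ → ℝ} {θ E : ℝ} {H : lp (fun _ : ℤ => ℂ) 2 →L[ℂ] lp (fun _ : ℤ => ℂ) 2}

lemma hasSum_norm_sq_cauchyData (u : lp (fun _ : ℤ => ℂ) 2) (k : ℤ) :
    HasSum (fun m => ‖cauchyData u (m + k)‖ ^ 2) (2 * ‖u‖ ^ 2) := by
  rw [two_mul]
  refine ((hasSum_norm_sq_add u k).add (hasSum_norm_sq_add u (k - 1))).congr_fun fun m => ?_
  simp [l2_opNorm_col_sq, cauchyData, add_sub_assoc]

lemma cauchyData_succ (hH : IsSchrodingerOp V b θ H) (u : lp (fun _ : ℤ => ℂ) 2) (m : ℤ) :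
    cauchyData u (m + 1) = transferMatrix (E - (V (m * b + θ) : ℝ)) * cauchyData u m +
      !![(H u - (E : ℂ) • u) m; 0] := by
  ext i j
  fin_cases i <;> fin_cases j
  · have hdefect : (H u - (E : ℂ) • u) m = H u m - E * u m := rfl
    simp [cauchyData, transferMatrix, hdefect, hH u m, -Complex.coe_smul]
    ring
  · simp [cauchyData, transferMatrix]

lemma exists_norm_sq_cauchyData_sub_le (hH : IsSchrodingerOp V b θ H) (hV : Continuous V)
    (hp : Function.Periodic V 1) (E : ℝ) (k : ℕ) :
    ∃ D ≥ 0, ∀ (u : lp (fun _ : ℤ => ℂ) 2) (m : ℤ),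
      ‖cauchyData u (m + k) - cocycle (fun t => E - (V t : ℝ)) b k (m * b + θ) * cauchyData u m‖ ^ 2
        ≤ D * ∑ i ∈ Finset.range k, ‖(H u - (E : ℂ) • u) (m + i)‖ ^ 2 := by
  obtain ⟨K, -, hK⟩ := exists_norm_cocycle_le_pow (g := fun t => (E : ℂ) - (V t : ℝ))
    (by fun_prop) (fun t => by simp [hp t]) b
  induction k with
  | zero => exact ⟨0, le_rfl, fun u m => by simp [cocycle]⟩
  | succ k ih =>
    obtain ⟨D, hD, hk⟩ := ih
    refine ⟨2 * K ^ 2 * D + 2, by positivity, fun u m => ?_⟩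
    set T := transferMatrix (E - (V ((m + k : ℤ) * b + θ) : ℝ))
    have hT : ‖T‖ ≤ K := by simpa [cocycle_succ, cocycle, T] using hK 1 ((m + k : ℤ) * b + θ)
    set err := cauchyData u (m + k) -
      cocycle (fun t => E - (V t : ℝ)) b k (m * b + θ) * cauchyData u m
    set f : Matrix (Fin 2) (Fin 1) ℂ := !![(H u - (E : ℂ) • u) (m + k); 0]
    have hstep : cauchyData u (m + (k + 1 : ℕ)) -
        cocycle (fun t => E - (V t : ℝ)) b (k + 1) (m * b + θ) * cauchyData u m = T * err + f := by
      have hphase : m * b + θ + k * b = (m + k : ℤ) * b + θ := by push_cast; ring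
      rw [Nat.cast_succ, ← add_assoc, cauchyData_succ hH u (m + k), cocycle_succ, hphase,
        Matrix.mul_sub, ← Matrix.mul_assoc]
      abel
    have hf : ‖f‖ ^ 2 = ‖(H u - (E : ℂ) • u) (m + k)‖ ^ 2 := by simp [l2_opNorm_col_sq, f]
    calc ‖cauchyData u (m + (k + 1 : ℕ)) -
          cocycle (fun t => E - (V t : ℝ)) b (k + 1) (m * b + θ) * cauchyData u m‖ ^ 2
        ≤ (‖T‖ * ‖err‖ + ‖f‖) ^ 2 := by
          rw [hstep]
          gcongr
          exact (norm_add_le _ _).trans (add_le_add_left (l2_opNorm_mul _ _) _)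
      _ ≤ 2 * ((‖T‖ * ‖err‖) ^ 2 + ‖f‖ ^ 2) := add_sq_le
      _ ≤ 2 * (K ^ 2 * (D * ∑ i ∈ Finset.range k, ‖(H u - (E : ℂ) • u) (m + i)‖ ^ 2) +
            ‖(H u - (E : ℂ) • u) (m + k)‖ ^ 2) := by
          rw [mul_pow, hf]
          gcongr
          exact hk u m
      _ ≤ _ := by
          rw [Finset.sum_range_succ]
          have hnonneg := Finset.sum_nonneg fun i (_ : i ∈ Finset.range k) =>
            sq_nonneg ‖(H u - (E : ℂ) • u) (m + i)‖
          nlinarith [mul_nonneg (mul_nonneg (sq_nonneg K) hD)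
            (sq_nonneg ‖(H u - (E : ℂ) • u) (m + k)‖)]

lemma exists_nine_mul_norm_sq_cauchyData_le (hH : IsSchrodingerOp V b θ H) (hV : Continuous V)
    (hp : Function.Periodic V 1) {h : ℕ}
    (hlarge : ∀ x, 3 * (‖cocycle (fun t => E - (V t : ℝ)) b h x‖ +
      ‖cocycle (fun t => E - (V t : ℝ)) b h (x + h * b)‖) <
        ‖cocycle (fun t => E - (V t : ℝ)) b (h + h) x‖) :
    ∃ M, ∀ (u : lp (fun _ : ℤ => ℂ) 2) (m : ℤ),
      9 * ‖cauchyData u m‖ ^ 2 ≤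
        2 * ‖cauchyData u (m + h)‖ ^ 2 + 2 * ‖cauchyData u (m + -h)‖ ^ 2 +
          M * (∑ i ∈ Finset.range h, ‖(H u - (E : ℂ) • u) (m + i)‖ ^ 2 +
            ∑ i ∈ Finset.range h, ‖(H u - (E : ℂ) • u) (m + (-h + i))‖ ^ 2) := by
  set g : ℝ → ℂ := fun t => E - (V t : ℝ)
  obtain ⟨D, hD, herr⟩ := exists_norm_sq_cauchyData_sub_le hH hV hp E h
  obtain ⟨K, hK, hKn⟩ := exists_norm_cocycle_le_pow (g := g) (by fun_prop)
    (fun t => by simp [g, hp t]) b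
  refine ⟨2 * ((4 * K ^ h) ^ 2 * D), fun u m => ?_⟩
  set B := cocycle g b h ((m + -h : ℤ) * b + θ) with hB
  set C := cocycle g b h (m * b + θ)
  set U := cauchyData u m
  have hphase : (m + -h : ℤ) * b + θ + h * b = m * b + θ := by push_cast; ring
  have hnine : 9 * ‖U‖ ^ 2 ≤ ‖C * U‖ ^ 2 + ‖B.adjugate * U‖ ^ 2 := by
    refine nine_mul_norm_sq_le ?_ U
    simpa only [cocycle_add, hphase] using hlarge ((m + -h : ℤ) * b + θ)
  have hforward := (norm_sq_le_two_mul_add (C * U) (cauchyData u (m + h))).trans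
    (add_le_add_right (mul_le_mul_of_nonneg_left (herr u m) two_pos.le) _)
  have hB_adj : ‖B.adjugate‖ ≤ 4 * K ^ h :=
    (l2_opNorm_adjugate_fin_two_le B).trans (by gcongr; exact hKn _ _)
  have hback : cauchyData u (m + -h) - B.adjugate * U =
      -(B.adjugate * (U - B * cauchyData u (m + -h))) := by
    rw [Matrix.mul_sub, ← Matrix.mul_assoc, adjugate_mul, hB, det_cocycle, one_smul,
      Matrix.one_mul, neg_sub]
  have hbackward : ‖B.adjugate * U‖ ^ 2 ≤ 2 * ‖cauchyData u (m + -h)‖ ^ 2 + 2 * ((4 * K ^ h) ^ 2 *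
      (D * ∑ i ∈ Finset.range h, ‖(H u - (E : ℂ) • u) (m + (-h + i))‖ ^ 2)) := by
    refine (norm_sq_le_two_mul_add _ (cauchyData u (m + -h))).trans ?_
    have herr' := herr u (m + -h)
    rw [neg_add_cancel_right] at herr'
    simp only [add_assoc m] at herr'
    rw [hback, norm_neg]
    gcongr
    refine (pow_le_pow_left₀ (norm_nonneg _) (l2_opNorm_mul _ _) 2).trans ?_
    rw [mul_pow]
    gcongr
  have hK_one : 1 ≤ (4 * K ^ h) ^ 2 := by
    have := one_le_pow₀ hK (n := h)
    nlinarith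
  have hsum := Finset.sum_nonneg fun i (_ : i ∈ Finset.range h) =>
    sq_nonneg ‖(H u - (E : ℂ) • u) (m + i)‖
  nlinarith [mul_nonneg (sub_nonneg.2 hK_one) (mul_nonneg hD hsum)]

lemma exists_norm_cocycle_add_self_le (hH : IsSchrodingerOp V b θ H) (hV : Continuous V)
    (hp : Function.Periodic V 1) (hE : (E : ℂ) ∈ spectrum ℂ H) (h : ℕ) :
    ∃ x, ‖cocycle (fun t => E - (V t : ℝ)) b (h + h) x‖ ≤
      3 * (‖cocycle (fun t => E - (V t : ℝ)) b h x‖ +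
        ‖cocycle (fun t => E - (V t : ℝ)) b h (x + h * b)‖) := by
  by_contra! hlarge
  obtain ⟨M, hM⟩ := exists_nine_mul_norm_sq_cauchyData_le hH hV hp hlarge
  obtain ⟨u, hu⟩ := exists_lt_norm_sq_of_mem_spectrum hH hE (K := |M| * h + 1) (by positivity)
  set f := H u - (E : ℂ) • u
  have hsum (k : ℤ) :
      HasSum (fun m => ∑ i ∈ Finset.range h, ‖f (m + (k + i))‖ ^ 2) (h * ‖f‖ ^ 2) := by
    simpa using hasSum_sum fun i (_ : i ∈ Finset.range h) => hasSum_norm_sq_add f (k + i)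
  have hsum_zero := hsum 0
  simp only [zero_add] at hsum_zero
  have hle := hasSum_le (hM u) (by simpa using (hasSum_norm_sq_cauchyData u 0).mul_left 9)
    ((((hasSum_norm_sq_cauchyData u h).mul_left 2).add
      ((hasSum_norm_sq_cauchyData u (-h)).mul_left 2)).add
        ((hsum_zero.add (hsum (-h))).mul_left M))
  nlinarith [mul_le_mul_of_nonneg_right (le_abs_self M) (by positivity : 0 ≤ h * ‖f‖ ^ 2),
    sq_nonneg ‖f‖]

end Solution

end Spectrum

section OrbitSeparation

lemma norm_fourierChar_sub_le (x y : ℝ) : ‖(𝐞 x : ℂ) - 𝐞 y‖ ≤ 2 * π * |x - y| := by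
  have hfac : (𝐞 x : ℂ) - 𝐞 y = 𝐞 y * (𝐞 (x - y) - 1) := by
    rw [mul_sub, ← Circle.coe_mul, ← AddChar.map_add_eq_mul, add_sub_cancel, mul_one]
  have hexp : (𝐞 (x - y) : ℂ) = Complex.exp (Complex.I * (2 * π * (x - y) : ℝ)) := by
    rw [Real.fourierChar_apply, mul_comm]
  rw [hfac, norm_mul, Circle.norm_coe, one_mul, hexp]
  simpa [abs_mul, abs_of_pos Real.pi_pos] using
    Real.norm_exp_I_mul_ofReal_sub_one_le (x := 2 * π * (x - y))

lemma one_div_le_norm_one_sub_of_pow_eq_one {ζ : ℂ} {q : ℕ} (hζ : ζ ≠ 1) (hq : ζ ^ q = 1) :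
    1 / (q : ℝ) ≤ ‖1 - ζ‖ := by
  rcases q.eq_zero_or_pos with rfl | hq₀
  · simp
  have hnorm : ‖ζ‖ = 1 := Complex.norm_eq_one_of_pow_eq_one hq hq₀.ne'
  have hsum : ∑ j ∈ Finset.range q, (1 - ζ ^ j) = q := by
    simp [Finset.sum_sub_distrib, geom_sum_eq hζ, hq]
  have hterm : ∀ j ∈ Finset.range q, ‖1 - ζ ^ j‖ ≤ q * ‖1 - ζ‖ := fun j hj => calc
    ‖1 - ζ ^ j‖ = ‖(∑ i ∈ Finset.range j, ζ ^ i) * (1 - ζ)‖ := by rw [geom_sum_mul_neg]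
    _ ≤ (∑ i ∈ Finset.range j, ‖ζ ^ i‖) * ‖1 - ζ‖ :=
      (norm_mul_le _ _).trans (by gcongr; exact norm_sum_le _ _)
    _ ≤ q * ‖1 - ζ‖ := by
      simpa [hnorm] using mul_le_mul_of_nonneg_right
        (Nat.cast_le.2 (Finset.mem_range.1 hj).le) (norm_nonneg (1 - ζ))
  have hle : (q : ℝ) * 1 ≤ q * (q * ‖1 - ζ‖) := calc
    (q : ℝ) * 1 = ‖∑ j ∈ Finset.range q, (1 - ζ ^ j)‖ := by simp [hsum]
    _ ≤ ∑ j ∈ Finset.range q, ‖1 - ζ ^ j‖ := norm_sum_le _ _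
    _ ≤ q * (q * ‖1 - ζ‖) := by simpa using Finset.sum_le_sum hterm
  rw [div_le_iff₀' (Nat.cast_pos.2 hq₀)]
  exact le_of_mul_le_mul_left hle (Nat.cast_pos.2 hq₀)

section PrimitiveRoot

variable {μ : ℂ} {q : ℕ} (hμ : IsPrimitiveRoot μ q) {N l : ℕ}
include hμ

lemma prod_erase_norm_primitiveRoot_sub (hl : l < q) :
    ∏ i ∈ (Finset.range q).erase l, ‖μ ^ l - μ ^ i‖ = q := by
  have hq : 0 < q := l.zero_le.trans_lt hl
  have hnodal : Lagrange.nodal (Finset.range q) (μ ^ ·) = Polynomial.X ^ q - Polynomial.C 1 := by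
    simp only [Lagrange.nodal_eq, X_pow_sub_C_eq_prod hμ hq (one_pow q), mul_one]
  have hder := Lagrange.eval_nodal_derivative_eval_node_eq (v := (μ ^ ·)) (Finset.mem_range.2 hl)
  rw [hnodal, Lagrange.eval_nodal] at hder
  rw [← norm_prod, ← hder]
  simp [Polynomial.derivative_X_pow, hμ.norm'_eq_one hq.ne']

lemma pow_le_prod_erase_norm_primitiveRoot_sub (hN : N ≤ q) (hl : l < N) :
    (1 / 2 : ℝ) ^ q ≤ ∏ i ∈ (Finset.range N).erase l, ‖μ ^ l - μ ^ i‖ := by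
  have hq : q ≠ 0 := by lia
  have hnorm : ‖μ‖ = 1 := hμ.norm'_eq_one hq
  have hsub : (Finset.range N).erase l ⊆ (Finset.range q).erase l :=
    Finset.erase_subset_erase _ (Finset.range_mono hN)
  have hrest : ∏ i ∈ (Finset.range q).erase l \ (Finset.range N).erase l, ‖μ ^ l - μ ^ i‖
      ≤ 2 ^ q := by
    refine (Finset.prod_le_prod (fun _ _ => norm_nonneg _) (g := fun _ => (2 : ℝ))
      fun i _ => ?_).trans ?_
    · exact (norm_sub_le _ _).trans (by norm_num [hnorm])
    · rw [Finset.prod_const]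
      exact pow_le_pow_right₀ one_le_two ((Finset.card_le_card
        (Finset.sdiff_subset.trans (Finset.erase_subset _ _))).trans (Finset.card_range q).le)
  have hone : (1 : ℝ) ≤ 2 ^ q * ∏ i ∈ (Finset.range N).erase l, ‖μ ^ l - μ ^ i‖ := calc
    (1 : ℝ) ≤ q := by exact_mod_cast Nat.one_le_iff_ne_zero.2 hq
    _ = ∏ i ∈ (Finset.range q).erase l, ‖μ ^ l - μ ^ i‖ :=
      (prod_erase_norm_primitiveRoot_sub hμ (hl.trans_le hN)).symm
    _ ≤ _ := by
      rw [← Finset.prod_sdiff hsub]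
      gcongr
  rwa [one_div, inv_pow, inv_le_iff_one_le_mul₀' (by positivity)]

end PrimitiveRoot

lemma isPrimitiveRoot_fourierChar (r : ℚ) : IsPrimitiveRoot (𝐞 (r : ℝ) : ℂ) r.den := by
  have hcop : IsCoprime r.num r.den := by
    simpa [Int.isCoprime_iff_gcd_eq_one, Int.gcd] using r.reduced
  have hexp : (𝐞 (r : ℝ) : ℂ) = Complex.exp (2 * π * Complex.I * (r.num / r.den)) := by
    rw [Real.fourierChar_apply, Rat.cast_def]
    push_cast
    ring_nf
  rw [hexp]
  exact Complex.isPrimitiveRoot_exp_of_isCoprime r.num r.den r.den_nz hcop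

variable {b : ℝ}

lemma exists_rat_abs_sub_le_one_div_den_sq (hb : Irrational b) (N : ℕ) :
    ∃ r : ℚ, N ≤ r.den ∧ |b - r| ≤ 1 / (r.den : ℝ) ^ 2 := by
  obtain ⟨n, hn, hn₀⟩ := (((tendsto_one_div_atTop_nhds_zero_nat (𝕜 := ℝ)).eventually
    (hb.eventually_forall_le_dist_cast_rat_of_den_le N)).and (eventually_gt_atTop 0)).exists
  obtain ⟨r, hr, hrn⟩ := Real.exists_rat_abs_sub_le_and_den_le b hn₀
  have hden : (1 : ℝ) ≤ r.den := by exact_mod_cast r.pos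
  refine ⟨r, le_of_not_ge fun h => ?_, hr.trans ?_⟩
  · refine ((hn r h).trans hr).not_gt (one_div_lt_one_div_of_lt (Nat.cast_pos.2 hn₀) ?_)
    nlinarith
  · rw [sq]
    gcongr
    exact (Nat.cast_le.2 hrn).trans (by simp)

lemma half_norm_one_sub_fourierChar_le {r : ℚ} (hr : |b - r| ≤ 1 / (r.den : ℝ) ^ 2) {k : ℤ}
    (hk : k ≠ 0) (hkr : 16 * k.natAbs ≤ r.den) :
    ‖1 - (𝐞 (k * r) : ℂ)‖ / 2 ≤ ‖1 - (𝐞 (k * b) : ℂ)‖ := by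
  have hroot := isPrimitiveRoot_fourierChar r
  have hpow : (𝐞 (k * r) : ℂ) = (𝐞 (r : ℝ) : ℂ) ^ k := by
    rw [← zsmul_eq_mul, AddChar.map_zsmul_eq_zpow, Circle.coe_zpow]
  have hgap : 1 / (r.den : ℝ) ≤ ‖1 - (𝐞 (k * r) : ℂ)‖ := by
    rw [hpow]
    refine one_div_le_norm_one_sub_of_pow_eq_one (fun h => ?_) ?_
    · have := Nat.le_of_dvd (Int.natAbs_pos.2 hk)
        (Int.natCast_dvd.1 ((hroot.zpow_eq_one_iff_dvd k).1 h))
      lia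
    · rw [← zpow_natCast, ← _root_.zpow_mul, mul_comm, _root_.zpow_mul, zpow_natCast,
        hroot.pow_eq_one, _root_.one_zpow]
  have hclose : ‖(𝐞 (k * b) : ℂ) - 𝐞 (k * r)‖ ≤ 1 / (r.den : ℝ) / 2 := by
    have hk' : |(k : ℝ)| ≤ r.den / 16 := by
      rw [le_div_iff₀' (by norm_num), ← Int.cast_abs, ← Nat.cast_natAbs]
      exact_mod_cast hkr
    calc ‖(𝐞 (k * b) : ℂ) - 𝐞 (k * r)‖ ≤ 2 * π * (|(k : ℝ)| * |b - r|) := by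
          rw [← abs_mul, mul_sub]
          exact norm_fourierChar_sub_le _ _
      _ ≤ 2 * 4 * (r.den / 16 * (1 / (r.den : ℝ) ^ 2)) := by
          gcongr
          exact Real.pi_le_four
      _ = 1 / (r.den : ℝ) / 2 := by
          field_simp
          norm_num
  have htri := norm_sub_le_norm_sub_add_norm_sub 1 (𝐞 (k * b) : ℂ) (𝐞 (k * r))
  linarith

lemma norm_fourierChar_mul_sub (i j : ℕ) (t : ℝ) :
    ‖(𝐞 (i * t) : ℂ) - 𝐞 (j * t)‖ = ‖1 - (𝐞 (((j - i : ℤ) : ℝ) * t) : ℂ)‖ := by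
  have hfac : (𝐞 (j * t) : ℂ) = 𝐞 (i * t) * 𝐞 (((j - i : ℤ) : ℝ) * t) := by
    rw [← Circle.coe_mul, ← AddChar.map_add_eq_mul]
    push_cast
    ring_nf
  rw [hfac, ← mul_one_sub, norm_mul, Circle.norm_coe, one_mul]

-- If `p / q` approximates `b` to within `1 / q ^ 2`, then along an orbit segment of length `q / 16`
-- the distances are at least half of those between powers of `𝐞 (p / q)`, and the product of the
-- distances from one `q`-th root of unity to all the others is `q`.
lemma exists_frequently_pow_le_prod_erase_norm_sub (hb : Irrational b) :
    ∃ c > 0, ∃ᶠ s : ℕ in atTop, ∀ l < 2 * s,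
      c ^ (2 * s) ≤ ∏ i ∈ (Finset.range (2 * s)).erase l, ‖(𝐞 (l * b) : ℂ) - 𝐞 (i * b)‖ := by
  refine ⟨(1 / 2) ^ 33, by positivity, frequently_atTop.2 fun N => ?_⟩
  obtain ⟨r, hNr, hr⟩ := exists_rat_abs_sub_le_one_div_den_sq hb (32 * (N + 1))
  refine ⟨r.den / 32, by lia, fun l hl => ?_⟩
  set s := r.den / 32
  have hpow : ∀ i : ℕ, (𝐞 (r : ℝ) : ℂ) ^ i = 𝐞 (i * (r : ℝ)) := fun i => by
    rw [← nsmul_eq_mul, AddChar.map_nsmul_eq_pow, Circle.coe_pow]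
  have hterm : ∀ i ∈ (Finset.range (2 * s)).erase l,
      1 / 2 * ‖(𝐞 (r : ℝ) : ℂ) ^ l - (𝐞 (r : ℝ) : ℂ) ^ i‖ ≤ ‖(𝐞 (l * b) : ℂ) - 𝐞 (i * b)‖ := by
    intro i hi
    obtain ⟨hil, hi⟩ := Finset.mem_erase.1 hi
    rw [Finset.mem_range] at hi
    rw [hpow, hpow, norm_fourierChar_mul_sub, norm_fourierChar_mul_sub, one_div_mul_eq_div]
    exact half_norm_one_sub_fourierChar_le hr (by omega) (by omega)
  calc ((1 / 2 : ℝ) ^ 33) ^ (2 * s) ≤ (1 / 2) ^ (2 * s - 1 + r.den) := by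
        rw [← pow_mul]
        exact pow_le_pow_of_le_one (by norm_num) (by norm_num) (by lia)
    _ = (1 / 2) ^ (2 * s - 1) * (1 / 2) ^ r.den := pow_add _ _ _
    _ ≤ (1 / 2) ^ (2 * s - 1) * ∏ i ∈ (Finset.range (2 * s)).erase l,
          ‖(𝐞 (r : ℝ) : ℂ) ^ l - (𝐞 (r : ℝ) : ℂ) ^ i‖ := by
        gcongr
        exact pow_le_prod_erase_norm_primitiveRoot_sub (isPrimitiveRoot_fourierChar r) (by lia) hl
    _ = ∏ i ∈ (Finset.range (2 * s)).erase l,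
          (1 / 2 * ‖(𝐞 (r : ℝ) : ℂ) ^ l - (𝐞 (r : ℝ) : ℂ) ^ i‖) := by
        rw [Finset.prod_mul_distrib, Finset.prod_const,
          Finset.card_erase_of_mem (Finset.mem_range.2 hl), Finset.card_range]
    _ ≤ _ := Finset.prod_le_prod (fun _ _ => by positivity) hterm

end OrbitSeparation

section NodeProducts

lemma exists_eq_norm_mul_fourierChar (z : ℂ) : ∃ y : ℝ, z = ‖z‖ * 𝐞 y := by
  refine ⟨z.arg / (2 * π), ?_⟩
  rw [Real.fourierChar_apply, mul_div_cancel₀ _ Real.two_pi_pos.ne', Complex.norm_mul_exp_arg_mul_I]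

lemma norm_sub_le_norm_smul_sub {F : Type*} [NormedAddCommGroup F] [InnerProductSpace ℝ F]
    {z w : F} (hz : ‖z‖ = 1) (hw : ‖w‖ = 1) {R : ℝ} (hR : 1 ≤ R) : ‖z - w‖ ≤ ‖R • z - w‖ := by
  have hinner : inner ℝ z w ≤ 1 := by simpa [hz, hw] using real_inner_le_norm z w
  refine le_of_sq_le_sq ?_ (norm_nonneg _)
  rw [norm_sub_sq_real, norm_sub_sq_real, norm_smul, real_inner_smul_left, hz, hw,
    Real.norm_of_nonneg (zero_le_one.trans hR)]
  nlinarith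

lemma norm_mul_fourierChar_sub (ρ y x : ℝ) :
    ‖(ρ : ℂ) * 𝐞 y - 𝐞 x‖ = ‖(𝐞 (x - y) : ℂ) - ρ‖ := by
  have hfac : (ρ : ℂ) * 𝐞 y - 𝐞 x = -(𝐞 y * (𝐞 (x - y) - ρ)) := by
    rw [mul_sub, ← Circle.coe_mul, ← AddChar.map_add_eq_mul, add_sub_cancel]
    ring
  rw [hfac, norm_neg, norm_mul, Circle.norm_coe, one_mul]

lemma integral_log_norm_fourierChar_sub (a : ℂ) :
    ∫ t in (0 : ℝ)..1, Real.log ‖(𝐞 t : ℂ) - a‖ = Real.posLog ‖a‖ := by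
  have hcircle : ∀ t : ℝ, (𝐞 t : ℂ) = circleMap 0 1 (2 * π * t) := fun t => by
    simp [Real.fourierChar_apply, circleMap]
  simp only [hcircle]
  rw [← circleAverage_log_norm_sub_const_eq_posLog, Real.circleAverage_def,
    intervalIntegral.integral_comp_mul_left (fun θ => Real.log ‖circleMap 0 1 θ - a‖)
      Real.two_pi_pos.ne', mul_zero, mul_one]

variable {b η : ℝ} (hb : Irrational b) (hη : 0 < η)
include hb hη

lemma exists_abs_sum_log_norm_sub_le {ρ : ℝ} (hρ : 0 < ρ) (hρ₁ : ρ ≠ 1) :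
    ∃ C : ℝ, ∀ (N : ℕ) (x : ℝ) (z : ℂ), ‖z‖ = ρ →
      |∑ l ∈ Finset.range N, Real.log ‖z - 𝐞 (x + l * b)‖ - N * Real.posLog ρ| ≤ N * η + C := by
  have hne : ∀ t : ℝ, ‖(𝐞 t : ℂ) - ρ‖ ≠ 0 := fun t h => hρ₁ <| by
    rw [← Real.norm_of_nonneg hρ.le, ← Complex.norm_real, ← sub_eq_zero.1 (norm_eq_zero.1 h),
      Circle.norm_coe]
  have hcont : Continuous fun t : ℝ => Real.log ‖(𝐞 t : ℂ) - ρ‖ :=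
    ((continuous_subtype_val.comp Real.continuous_fourierChar).sub continuous_const).norm.log hne
  have hper : Function.Periodic (fun t : ℝ => Real.log ‖(𝐞 t : ℂ) - ρ‖) 1 := fun t => by
    simp only [periodic_fourierChar t]
  obtain ⟨C, hC⟩ := exists_abs_sum_sub_integral_le hb hcont hper hη
  refine ⟨C, fun N x z hz => ?_⟩
  obtain ⟨y, hy⟩ := exists_eq_norm_mul_fourierChar z
  have h := hC N (x - y)
  rw [integral_log_norm_fourierChar_sub, Complex.norm_real, Real.norm_of_nonneg hρ.le] at h
  have hshift : ∀ l : ℕ, ‖z - 𝐞 (x + l * b)‖ = ‖(𝐞 (x - y + l * b) : ℂ) - ρ‖ := fun l => by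
    rw [hy, hz, norm_mul_fourierChar_sub, sub_add_eq_add_sub]
  simpa only [hshift] using h

lemma exists_exp_le_mul_prod_norm_sub {ρ : ℝ} (hρ : 0 < ρ) (hρ₁ : ρ ≠ 1) :
    ∃ D > 0, ∀ (N : ℕ) (x : ℝ) (z : ℂ), ‖z‖ = ρ →
      Real.exp (N * (Real.posLog ρ - η)) ≤ D * ∏ l ∈ Finset.range N, ‖z - 𝐞 (x + l * b)‖ := by
  obtain ⟨C, hC⟩ := exists_abs_sum_log_norm_sub_le hb hη hρ hρ₁
  refine ⟨Real.exp C, Real.exp_pos C, fun N x z hz => ?_⟩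
  have hpos : ∀ l ∈ Finset.range N, 0 < ‖z - 𝐞 (x + l * b)‖ := fun l _ =>
    norm_pos_iff.2 <| sub_ne_zero.2 fun h => hρ₁ (by rw [← hz, h, Circle.norm_coe])
  rw [← Finset.prod_congr rfl fun l hl => Real.exp_log (hpos l hl), ← Real.exp_sum, ← Real.exp_add]
  refine Real.exp_le_exp.2 ?_
  linarith [(abs_le.1 (hC N x z hz)).1]

lemma exists_prod_norm_sub_le_mul_exp :
    ∃ D > 0, ∀ (N : ℕ) (x : ℝ) (z : ℂ), ‖z‖ = 1 →
      ∏ l ∈ Finset.range N, ‖z - 𝐞 (x + l * b)‖ ≤ D * Real.exp (N * η) := by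
  have hρ : 1 < Real.exp (η / 2) := Real.one_lt_exp_iff.2 (half_pos hη)
  obtain ⟨C, hC⟩ := exists_abs_sum_log_norm_sub_le hb (half_pos hη) (Real.exp_pos _) hρ.ne'
  refine ⟨Real.exp C, Real.exp_pos C, fun N x z hz => ?_⟩
  have hnorm : ‖Real.exp (η / 2) • z‖ = Real.exp (η / 2) := by
    rw [norm_smul, hz, mul_one, Real.norm_of_nonneg (Real.exp_pos _).le]
  have hlog : Real.posLog (Real.exp (η / 2)) = η / 2 := by
    rw [Real.posLog_eq_log (by rw [Real.abs_exp]; exact hρ.le), Real.log_exp]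
  have hsum := (abs_le.1 (hC N x _ hnorm)).2
  rw [hlog] at hsum
  calc ∏ l ∈ Finset.range N, ‖z - 𝐞 (x + l * b)‖
      ≤ ∏ l ∈ Finset.range N, ‖Real.exp (η / 2) • z - 𝐞 (x + l * b)‖ :=
        Finset.prod_le_prod (fun _ _ => norm_nonneg _)
          fun l _ => norm_sub_le_norm_smul_sub hz (Circle.norm_coe _) hρ.le
    _ ≤ ∏ l ∈ Finset.range N, Real.exp (Real.log ‖Real.exp (η / 2) • z - 𝐞 (x + l * b)‖) :=
        Finset.prod_le_prod (fun _ _ => norm_nonneg _) fun l _ => Real.le_exp_log _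
    _ ≤ Real.exp C * Real.exp (N * η) := by
        rw [← Real.exp_sum, ← Real.exp_add]
        exact Real.exp_le_exp.2 (by linarith)

end NodeProducts

section Interpolation

variable {ι : Type*} [DecidableEq ι] {s : Finset ι}

lemma exists_eq_mul_interpolate_add_nodal_mul {K : Type*} [Field K] {w : ι → K}
    (hw : Set.InjOn w s) {G : Polynomial K} (hG : ∀ i ∈ s, G.eval (w i) ≠ 0) (F : Polynomial K) :
    ∃ Q, F = G * Lagrange.interpolate s w (fun i => F.eval (w i) / G.eval (w i))
      + Lagrange.nodal s w * Q := by
  have hdvd : Lagrange.nodal s w ∣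
      F - G * Lagrange.interpolate s w (fun i => F.eval (w i) / G.eval (w i)) := by
    rw [Lagrange.nodal_eq]
    refine Finset.prod_dvd_of_coprime (fun i hi j hj hij => ?_) fun i hi => ?_
    · exact Polynomial.isCoprime_X_sub_C_of_isUnit_sub
        (sub_ne_zero.2 fun h => hij (hw hi hj h)).isUnit
    · rw [Polynomial.dvd_iff_isRoot, Polynomial.IsRoot, Polynomial.eval_sub, Polynomial.eval_mul,
        Lagrange.eval_interpolate_at_node _ hw hi, mul_div_cancel₀ _ (hG i hi), sub_self]
  obtain ⟨Q, hQ⟩ := hdvd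
  exact ⟨Q, by rw [← hQ, add_sub_cancel]⟩

variable {w : ι → ℂ} {d : ℝ}

lemma injOn_of_le_prod_erase_norm_sub (hd : 0 < d)
    (hsep : ∀ l ∈ s, d ≤ ∏ i ∈ s.erase l, ‖w l - w i‖) : Set.InjOn w s := by
  intro i hi j hj hij
  by_contra hne
  refine (hd.trans_le (hsep i hi)).ne'
    (Finset.prod_eq_zero (Finset.mem_erase.2 ⟨Ne.symm hne, hj⟩) ?_)
  rw [hij, sub_self, norm_zero]

lemma norm_eval_interpolate_le {r : ι → ℂ} {V R : ℝ} (hw : ∀ i ∈ s, ‖w i‖ = 1) (hd : 0 < d)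
    (hsep : ∀ l ∈ s, d ≤ ∏ i ∈ s.erase l, ‖w l - w i‖) (hr : ∀ i ∈ s, ‖r i‖ ≤ V)
    {z : ℂ} (hz : ‖z‖ ≤ R) :
    ‖(Lagrange.interpolate s w r).eval z‖ ≤ s.card * (V * ((R + 1) ^ s.card / d)) := by
  have hR : 0 ≤ R := (norm_nonneg z).trans hz
  have hnum : ∀ l ∈ s, ∏ i ∈ s.erase l, ‖z - w i‖ ≤ (R + 1) ^ s.card := fun l _ => calc
    ∏ i ∈ s.erase l, ‖z - w i‖ ≤ ∏ _i ∈ s.erase l, (R + 1) :=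
      Finset.prod_le_prod (fun _ _ => norm_nonneg _) fun i hi =>
        (norm_sub_le _ _).trans (add_le_add hz (hw i (Finset.mem_of_mem_erase hi)).le)
    _ ≤ (R + 1) ^ s.card := by
      rw [Finset.prod_const]
      exact pow_le_pow_right₀ (by linarith) (Finset.card_le_card (Finset.erase_subset _ _))
  have hbasis : ∀ l ∈ s, ‖(Lagrange.basis s w l).eval z‖ ≤ (R + 1) ^ s.card / d := fun l hl => by
    have hfac : ∀ i, ‖(Lagrange.basisDivisor (w l) (w i)).eval z‖ = ‖z - w i‖ / ‖w l - w i‖ :=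
      fun i => by simp [Lagrange.basisDivisor, div_eq_inv_mul]
    simp only [Lagrange.basis, Polynomial.eval_prod, norm_prod, hfac, Finset.prod_div_distrib]
    exact div_le_div₀ (by positivity) (hnum l hl) hd (hsep l hl)
  rw [Lagrange.interpolate_apply, Polynomial.eval_finsetSum, ← nsmul_eq_mul]
  refine (norm_sum_le _ _).trans (Finset.sum_le_card_nsmul _ _ _ fun l hl => ?_)
  rw [Polynomial.eval_mul, Polynomial.eval_C, norm_mul]
  exact mul_le_mul (hr l hl) (hbasis l hl) (norm_nonneg _) ((norm_nonneg _).trans (hr l hl))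

lemma norm_le_of_forall_norm_le_on_annulus_boundary {f : ℂ → ℂ} {R C : ℝ} (hR : 1 < R)
    (hf : ∀ z ≠ 0, DifferentiableAt ℂ f z)
    (hC : ∀ z : ℂ, ‖z‖ = R ∨ ‖z‖ = R⁻¹ → ‖f z‖ ≤ C) {z : ℂ} (hz : ‖z‖ = 1) : ‖f z‖ ≤ C := by
  have hR₀ : 0 < R⁻¹ := by positivity
  have hopen : IsOpen {u : ℂ | R⁻¹ < ‖u‖ ∧ ‖u‖ < R} :=
    (isOpen_lt continuous_const continuous_norm).inter (isOpen_lt continuous_norm continuous_const)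
  have hclosure : closure {u : ℂ | R⁻¹ < ‖u‖ ∧ ‖u‖ < R} ⊆ {u | R⁻¹ ≤ ‖u‖ ∧ ‖u‖ ≤ R} :=
    closure_minimal (fun u hu => ⟨hu.1.le, hu.2.le⟩)
      ((isClosed_le continuous_const continuous_norm).inter
        (isClosed_le continuous_norm continuous_const))
  have hbdd : Bornology.IsBounded {u : ℂ | R⁻¹ < ‖u‖ ∧ ‖u‖ < R} :=
    (Metric.isBounded_ball (x := (0 : ℂ)) (r := R)).subset fun u hu => by simpa using hu.2
  have hdiff : ∀ u ∈ closure {u : ℂ | R⁻¹ < ‖u‖ ∧ ‖u‖ < R}, DifferentiableAt ℂ f u :=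
    fun u hu => hf u (norm_pos_iff.1 (hR₀.trans_le (hclosure hu).1))
  refine Complex.norm_le_of_forall_mem_frontier_norm_le hbdd
    ⟨fun u hu => (hdiff u (subset_closure hu)).differentiableWithinAt,
      fun u hu => (hdiff u hu).continuousAt.continuousWithinAt⟩
    (fun u hu => hC u ?_) (subset_closure ?_)
  · rw [hopen.frontier_eq] at hu
    obtain ⟨hle, hge⟩ := hclosure hu.1
    by_contra! hne
    exact hu.2 ⟨hle.lt_of_ne' hne.2, hge.lt_of_ne hne.1⟩
  · rw [Set.mem_ofPred_eq, hz]
    exact ⟨inv_lt_one_of_one_lt₀ hR, hR⟩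

lemma norm_div_pow_le_of_eq_add_mul {F P Q W u : ℂ} {A B a a' : ℝ} {k m : ℕ} (hu : u ≠ 0)
    (hF : F = u ^ k * P + W * Q) (hA : ‖F‖ ≤ ‖u‖ ^ (k + m) * A) (hP : ‖P‖ ≤ B)
    (ha : ‖u‖ ^ m ≤ a * ‖W‖) (ha' : 1 ≤ a' * ‖W‖) : ‖Q / u ^ k‖ ≤ a * A + a' * B := by
  have hW : 0 < ‖W‖ := (norm_nonneg W).lt_of_ne fun h => by
    rw [← h, mul_zero] at ha'
    exact one_pos.not_ge ha'
  have hA₀ : 0 ≤ A := nonneg_of_mul_nonneg_right ((norm_nonneg F).trans hA) (by positivity)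
  have hB₀ : 0 ≤ B := (norm_nonneg P).trans hP
  rw [norm_div, norm_pow, div_le_iff₀ (by positivity)]
  refine le_of_mul_le_mul_left ?_ hW
  calc ‖W‖ * ‖Q‖ = ‖F - u ^ k * P‖ := by rw [hF, add_sub_cancel_left, norm_mul]
    _ ≤ ‖u‖ ^ (k + m) * A + ‖u‖ ^ k * B := by
      refine (norm_sub_le _ _).trans (add_le_add hA ?_)
      rw [norm_mul, norm_pow]
      gcongr
    _ = ‖u‖ ^ k * (‖u‖ ^ m * A + 1 * B) := by ring
    _ ≤ ‖u‖ ^ k * (a * ‖W‖ * A + a' * ‖W‖ * B) := by gcongr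
    _ = ‖W‖ * ((a * A + a' * B) * ‖u‖ ^ k) := by ring

-- `P` interpolates `F / z ^ k` rather than `F`, so that the error quotient `Q / z ^ k` is
-- holomorphic on the annulus and bounded there however large the degree of `F` is.
lemma norm_eval_le_of_interpolation {F : Polynomial ℂ} {V A R a a' : ℝ} {k m : ℕ} (hR : 1 < R)
    (hw : ∀ i ∈ s, ‖w i‖ = 1) (hd : 0 < d)
    (hsep : ∀ l ∈ s, d ≤ ∏ i ∈ s.erase l, ‖w l - w i‖) (hV : ∀ i ∈ s, ‖F.eval (w i)‖ ≤ V)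
    (hA : ∀ z : ℂ, ‖z‖ = R ∨ ‖z‖ = R⁻¹ → ‖F.eval z‖ ≤ ‖z‖ ^ (k + m) * A)
    (ha : ∀ z : ℂ, ‖z‖ = R ∨ ‖z‖ = R⁻¹ → ‖z‖ ^ m ≤ a * ∏ i ∈ s, ‖z - w i‖)
    (ha' : ∀ z : ℂ, ‖z‖ = R ∨ ‖z‖ = R⁻¹ → 1 ≤ a' * ∏ i ∈ s, ‖z - w i‖) {z : ℂ} (hz : ‖z‖ = 1) :
    ‖F.eval z‖ ≤ s.card * (V * ((R + 1) ^ s.card / d)) + (∏ i ∈ s, ‖z - w i‖) *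
      (a * A + a' * (s.card * (V * ((R + 1) ^ s.card / d)))) := by
  set B := s.card * (V * ((R + 1) ^ s.card / d))
  have hw₀ : ∀ i ∈ s, (Polynomial.X ^ k : Polynomial ℂ).eval (w i) ≠ 0 := fun i hi => by
    rw [Polynomial.eval_pow, Polynomial.eval_X]
    exact pow_ne_zero _ (norm_pos_iff.1 ((hw i hi).symm ▸ one_pos))
  obtain ⟨Q, hQ⟩ := exists_eq_mul_interpolate_add_nodal_mul
    (injOn_of_le_prod_erase_norm_sub hd hsep) hw₀ F
  set P := Lagrange.interpolate s w fun i => F.eval (w i) / (Polynomial.X ^ k).eval (w i)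
  have hP : ∀ u : ℂ, ‖u‖ ≤ R → ‖P.eval u‖ ≤ B := fun u hu =>
    norm_eval_interpolate_le hw hd hsep (fun i hi => by simpa [hw i hi] using hV i hi) hu
  have hF : ∀ u : ℂ, F.eval u = u ^ k * P.eval u + (∏ i ∈ s, (u - w i)) * Q.eval u := fun u => by
    nth_rw 1 [hQ]
    simp [Lagrange.eval_nodal]
  have hQz : ‖Q.eval z / z ^ k‖ ≤ a * A + a' * B := by
    refine norm_le_of_forall_norm_le_on_annulus_boundary (f := fun u => Q.eval u / u ^ k) hR
      (fun u hu => Q.differentiable.differentiableAt.div (by fun_prop) (pow_ne_zero _ hu))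
      (fun u hu => norm_div_pow_le_of_eq_add_mul ?_ (hF u) (hA u hu) (hP u ?_) ?_ ?_) hz
    · exact norm_pos_iff.1 (by rcases hu with h | h <;> rw [h] <;> positivity)
    · rcases hu with h | h <;> rw [h]
      exact (inv_lt_one_of_one_lt₀ hR).le.trans hR.le
    · simpa only [norm_prod] using ha u hu
    · simpa only [norm_prod] using ha' u hu
  rw [norm_div, norm_pow, hz, one_pow, div_one] at hQz
  rw [hF z]
  refine (norm_add_le _ _).trans (add_le_add ?_ ?_)
  · simpa [hz] using hP z (hz.le.trans hR.le)
  · rw [norm_mul, norm_prod]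
    gcongr

end Interpolation

section PolynomialsOnOrbits

lemma norm_fourierChar_add_sub (x y y' : ℝ) :
    ‖(𝐞 (x + y) : ℂ) - 𝐞 (x + y')‖ = ‖(𝐞 y : ℂ) - 𝐞 y'‖ := by
  rw [AddChar.map_add_eq_mul, AddChar.map_add_eq_mul, Circle.coe_mul, Circle.coe_mul, ← mul_sub,
    norm_mul, Circle.norm_coe, one_mul]

lemma natCast_mul_pow_div_pow_le_exp (N : ℕ) {T c : ℝ} (hT : 0 < T) (hc : 0 < c) :
    (N : ℝ) * (T ^ N / c ^ N) ≤ Real.exp (N * (Real.log (T / c) + 1)) := by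
  rw [mul_add, mul_one, Real.exp_add, Real.exp_nat_mul, Real.exp_log (div_pos hT hc), div_pow,
    mul_comm]
  gcongr
  linarith [Real.add_one_le_exp (N : ℝ)]

lemma one_le_of_norm_pow_le {R D η P : ℝ} {s : ℕ} {z : ℂ} (hR : 1 < R)
    (hz : ‖z‖ = R ∨ ‖z‖ = R⁻¹) (h : ‖z‖ ^ s ≤ D * Real.exp (-s * (Real.log R - η)) * P) :
    1 ≤ D * Real.exp (s * η) * P := by
  have hR₀ : 0 < R := one_pos.trans hR
  have hRz : 1 ≤ R * ‖z‖ := by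
    rcases hz with hz | hz <;> rw [hz]
    · exact one_le_mul_of_one_le_of_one_le hR.le hR.le
    · exact (mul_inv_cancel₀ hR₀.ne').ge
  have hexp : R ^ s * Real.exp (-s * (Real.log R - η)) = Real.exp (s * η) := by
    rw [← Real.exp_log hR₀, ← Real.exp_nat_mul, Real.log_exp, ← Real.exp_add]
    ring_nf
  calc 1 ≤ R ^ s * ‖z‖ ^ s := by rw [← mul_pow]; exact one_le_pow₀ hRz
    _ ≤ R ^ s * (D * Real.exp (-s * (Real.log R - η)) * P) := by gcongr
    _ = D * Real.exp (s * η) * P := by rw [← hexp]; ring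

variable {b : ℝ} (hb : Irrational b)
include hb

lemma exists_norm_pow_le_mul_prod_norm_sub {R η : ℝ} (hR : 1 < R) (hη : 0 < η) :
    ∃ D > 0, ∀ (s : ℕ) (x : ℝ) (z : ℂ), ‖z‖ = R ∨ ‖z‖ = R⁻¹ →
      ‖z‖ ^ s ≤ D * Real.exp (-s * (Real.log R - η)) *
        ∏ l ∈ Finset.range (2 * s), ‖z - 𝐞 (x + l * b)‖ := by
  have hR₀ : 0 < R := one_pos.trans hR
  have hR' : R⁻¹ < 1 := inv_lt_one_of_one_lt₀ hR
  obtain ⟨D₁, hD₁, hout⟩ := exists_exp_le_mul_prod_norm_sub hb (half_pos hη) hR₀ hR.ne'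
  obtain ⟨D₂, -, hin⟩ := exists_exp_le_mul_prod_norm_sub hb (half_pos hη) (inv_pos.2 hR₀) hR'.ne
  have hout₀ : Real.posLog R = Real.log R := Real.posLog_eq_log (hR.le.trans (le_abs_self R))
  have hin₀ : Real.posLog R⁻¹ = 0 :=
    (Real.posLog_eq_zero_iff _).2 ((abs_of_pos (inv_pos.2 hR₀)).trans_le hR'.le)
  have hpow : ∀ s : ℕ, R ^ s = Real.exp (s * Real.log R) := fun s => by
    rw [Real.exp_nat_mul, Real.exp_log hR₀]
  refine ⟨max D₁ D₂, lt_max_of_lt_left hD₁, fun s x z hz => ?_⟩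
  rw [mul_right_comm, ← div_le_iff₀ (Real.exp_pos _)]
  rcases hz with hz | hz
  · refine le_trans (le_of_eq ?_) ((hout (2 * s) x z hz).trans
      (mul_le_mul_of_nonneg_right (le_max_left _ _) (by positivity)))
    rw [hz, hout₀, hpow, ← Real.exp_sub]
    push_cast
    ring_nf
  · refine le_trans (le_of_eq ?_) ((hin (2 * s) x z hz).trans
      (mul_le_mul_of_nonneg_right (le_max_right _ _) (by positivity)))
    rw [hz, hin₀, inv_pow, hpow, ← Real.exp_neg, ← Real.exp_sub]
    push_cast
    ring_nf

lemma exists_frequently_norm_eval_le {R : ℝ} (hR : 1 < R) :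
    ∃ δ : ℝ, ∀ η > 0, η ≤ 1 → ∃ C > 0, ∃ᶠ s : ℕ in atTop,
      ∀ (n : ℕ) (F : Polynomial ℂ) (A V x : ℝ), s ≤ n → 0 ≤ A →
        (∀ z : ℂ, ‖z‖ = R ∨ ‖z‖ = R⁻¹ → ‖F.eval z‖ ≤ ‖z‖ ^ n * A) → 0 ≤ V →
        (∀ l < 2 * s, ‖F.eval (𝐞 (x + l * b) : ℂ)‖ ≤ V) →
        ∀ z : ℂ, ‖z‖ = 1 → ‖F.eval z‖ ≤
          C * (Real.exp (s * δ) * V + Real.exp (-s * (Real.log R - η)) * A) := by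
  have : 0 < R := one_pos.trans hR
  obtain ⟨c, hc, hsep⟩ := exists_frequently_pow_le_prod_erase_norm_sub hb
  set β := 2 * (Real.log ((R + 1) / c) + 1)
  refine ⟨β + 1, fun η hη hη₁ => ?_⟩
  obtain ⟨D, hD, hbdry⟩ := exists_norm_pow_le_mul_prod_norm_sub hb hR (half_pos hη)
  obtain ⟨D', hD', hunit⟩ := exists_prod_norm_sub_le_mul_exp hb (by positivity : 0 < η / 4)
  refine ⟨1 + D' * D, by positivity, hsep.mono fun s hs n F A V x hn hA₀ hA hV₀ hV z hz => ?_⟩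
  obtain ⟨k, rfl⟩ := Nat.exists_eq_add_of_le' hn
  have hsep' : ∀ l ∈ Finset.range (2 * s), c ^ (2 * s) ≤
      ∏ i ∈ (Finset.range (2 * s)).erase l, ‖(𝐞 (x + l * b) : ℂ) - 𝐞 (x + i * b)‖ := fun l hl => by
    simpa only [norm_fourierChar_add_sub] using hs l (Finset.mem_range.1 hl)
  have hF := norm_eval_le_of_interpolation hR (fun l _ => Circle.norm_coe _) (by positivity) hsep'
    (fun l hl => hV l (Finset.mem_range.1 hl)) hA (hbdry s x)
    (fun u hu => one_le_of_norm_pow_le hR hu (hbdry s x u hu)) hz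
  rw [Finset.card_range] at hF
  set B := ((2 * s : ℕ) : ℝ) * (V * ((R + 1) ^ (2 * s) / c ^ (2 * s)))
  have hB : B ≤ Real.exp (s * β) * V := by
    have := natCast_mul_pow_div_pow_le_exp (2 * s) (by positivity : 0 < R + 1) hc
    calc B = ((2 * s : ℕ) * ((R + 1) ^ (2 * s) / c ^ (2 * s))) * V := by ring
      _ ≤ Real.exp ((2 * s : ℕ) * (Real.log ((R + 1) / c) + 1)) * V := by gcongr
      _ = Real.exp (s * β) * V := by push_cast; simp only [β]; ring_nf
  have hexp : Real.exp (s * η) ≤ Real.exp s :=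
    Real.exp_le_exp.2 (mul_le_of_le_one_right s.cast_nonneg hη₁)
  calc ‖F.eval z‖
    _ ≤ B + D' * Real.exp ((2 * s : ℕ) * (η / 4)) *
          (D * Real.exp (-s * (Real.log R - η / 2)) * A + D * Real.exp (s * (η / 2)) * B) := by
      refine hF.trans ?_
      gcongr
      exact hunit _ x z hz
    _ = B + D' * D * (Real.exp (s * η) * B + Real.exp (-s * (Real.log R - η)) * A) := by
      rw [show s * η = (2 * s : ℕ) * (η / 4) + s * (η / 2) by push_cast; ring,
        show -s * (Real.log R - η) = (2 * s : ℕ) * (η / 4) + -s * (Real.log R - η / 2) by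
          push_cast; ring, Real.exp_add, Real.exp_add]
      ring
    _ ≤ Real.exp s * (Real.exp (s * β) * V) + D' * D * (Real.exp s * (Real.exp (s * β) * V) +
          Real.exp (-s * (Real.log R - η)) * A) := by
      gcongr
      exact hB.trans (le_mul_of_one_le_left (by positivity) (Real.one_le_exp s.cast_nonneg))
    _ ≤ (1 + D' * D) * (Real.exp (s * (β + 1)) * V + Real.exp (-s * (Real.log R - η)) * A) := by
      rw [mul_add_one, add_comm (s * β), Real.exp_add, ← sub_nonneg]
      ring_nf
      positivity

end PolynomialsOnOrbits

section UpperBound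

section Cocycle

variable {g : ℝ → ℂ} {b : ℝ}

lemma norm_cocycle_add_natCast_mul_le (g : ℝ → ℂ) (b : ℝ) (n j : ℕ) (x : ℝ) :
    ‖cocycle g b n (x + j * b)‖ ≤
      4 * (‖cocycle g b j (x + n * b)‖ * ‖cocycle g b n x‖ * ‖cocycle g b j x‖) := by
  have h : cocycle g b n (x + j * b) =
      cocycle g b j (x + n * b) * cocycle g b n x * (cocycle g b j x).adjugate := by
    rw [← cocycle_add, add_comm j n, cocycle_add, Matrix.mul_assoc, mul_adjugate, det_cocycle,
      one_smul, Matrix.mul_one]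
  calc ‖cocycle g b n (x + j * b)‖
    _ ≤ ‖cocycle g b j (x + n * b) * cocycle g b n x‖ * ‖(cocycle g b j x).adjugate‖ := by
      rw [h]
      exact norm_mul_le _ _
    _ ≤ ‖cocycle g b j (x + n * b)‖ * ‖cocycle g b n x‖ * (4 * ‖cocycle g b j x‖) :=
      mul_le_mul (norm_mul_le _ _) (l2_opNorm_adjugate_fin_two_le _) (norm_nonneg _) (by positivity)
    _ = 4 * (‖cocycle g b j (x + n * b)‖ * ‖cocycle g b n x‖ * ‖cocycle g b j x‖) := by ring

lemma norm_cocycle_add_self_le_of_orbit {C Λ x : ℝ} {h l m : ℕ} (hC : 0 < C) (hΛ : 0 ≤ Λ)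
    (hgrowth : ∀ n y, ‖cocycle g b n y‖ ≤ C * Real.exp (n * Λ))
    (hx : ‖cocycle g b (h + h) x‖ ≤ 3 * (‖cocycle g b h x‖ + ‖cocycle g b h (x + h * b)‖))
    (hl : l ≤ m) :
    ‖cocycle g b (h + h) (x + l * b)‖ ≤ 24 * C ^ 3 * Real.exp ((h + 2 * m) * Λ) := by
  have hx' : ‖cocycle g b (h + h) x‖ ≤ 6 * (C * Real.exp (h * Λ)) := by
    linarith [hgrowth h x, hgrowth h (x + h * b)]
  have hl' : (l : ℝ) ≤ m := by exact_mod_cast hl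
  calc ‖cocycle g b (h + h) (x + l * b)‖
    _ ≤ 4 * (C * Real.exp (l * Λ) * (6 * (C * Real.exp (h * Λ))) * (C * Real.exp (l * Λ))) := by
      refine (norm_cocycle_add_natCast_mul_le g b _ l x).trans ?_
      gcongr
      · exact hgrowth l _
      · exact hgrowth l x
    _ = 24 * C ^ 3 * Real.exp ((h + 2 * l) * Λ) := by
      rw [add_mul, mul_assoc 2, two_mul, Real.exp_add, Real.exp_add]
      ring
    _ ≤ 24 * C ^ 3 * Real.exp ((h + 2 * m) * Λ) := by gcongr

lemma exists_exp_mul_lyapunovExponent_le (hg : Continuous g) (b : ℝ) {n : ℕ} (hn : 0 < n) :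
    ∃ x, Real.exp (n * lyapunovExponent g b) ≤ ‖cocycle g b n x‖ := by
  by_contra! hlt
  have hlog : ∀ x, Real.log ‖cocycle g b n x‖ < n * lyapunovExponent g b := fun x =>
    (Real.log_lt_iff_lt_exp (norm_cocycle_pos g b n x)).2 (hlt x)
  have hint := integral_lt_integral_of_continuousOn_of_le_of_exists_lt (zero_lt_one' ℝ)
    (continuous_log_norm_cocycle hg b n).continuousOn continuousOn_const
    (fun x _ => (hlog x).le) ⟨0, Set.left_mem_Icc.2 zero_le_one, hlog 0⟩
  have hle := lyapunovExponent_le_average g b ⟨n, hn⟩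
  rw [PNat.mk_coe, le_inv_mul_iff₀ (by exact_mod_cast hn)] at hle
  rw [intervalIntegral.integral_const, sub_zero, one_smul] at hint
  exact hint.not_ge hle

end Cocycle

lemma sub_potV_eq_amoSampling (lam E : ℝ) :
    (fun t => (E : ℂ) - (potV 0 lam t : ℝ)) = amoSampling lam E 1 := by
  ext t
  have hcos : (𝐞 t : ℂ) + 𝐞 (-t) = 2 * Complex.cos (2 * π * t) := by
    rw [Complex.two_cos, Real.fourierChar_apply, Real.fourierChar_apply]
    push_cast
    ring_nf
  simp only [amoSampling, potV, zero_mul, sub_zero, div_one, Complex.ofReal_one, one_mul, inv_one,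
    hcos]
  push_cast
  ring

lemma continuous_potV_zero (lam : ℝ) : Continuous (potV 0 lam) := by
  unfold potV
  simp only [zero_mul, sub_zero, div_one]
  fun_prop

lemma periodic_potV_zero (lam : ℝ) : Function.Periodic (potV 0 lam) 1 := fun x => by
  simp only [potV, zero_mul, mul_add, mul_one, Real.cos_add_two_pi]

lemma continuous_amoSampling (lam E ρ : ℝ) : Continuous (amoSampling lam E ρ) := by
  unfold amoSampling
  fun_prop

lemma periodic_amoSampling (lam E ρ : ℝ) : Function.Periodic (amoSampling lam E ρ) 1 := fun x => by
  simp only [amoSampling, AddChar.map_neg_eq_inv, periodic_fourierChar x]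

/-- `X` times the almost Mathieu transfer matrix at `x + n b`, as a matrix of polynomials in the
variable `X = ρ e(x)`, where `e(x) = exp(2πix)`. -/
noncomputable def transferPolynomial (lam E b : ℝ) (n : ℕ) :
    Matrix (Fin 2) (Fin 2) (Polynomial ℂ) :=
  !![.C (E : ℂ) * .X - .C (lam : ℂ) * (.C (𝐞 (n * b) : ℂ) * .X ^ 2 + .C (𝐞 (-(n * b)) : ℂ)), -.X;
    .X, 0]

/-- The matrix of polynomials `P` with `P (ρ e(x)) = (ρ e(x)) ^ n • A_n(x)`, where `A_n` is the
cocycle of `amoSampling lam E ρ` and `e(x) = exp(2πix)`; it does not depend on the radius `ρ`, so it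
carries the complexification of the almost Mathieu cocycle in `x`. -/
noncomputable def cocyclePolynomial (lam E b : ℝ) : ℕ → Matrix (Fin 2) (Fin 2) (Polynomial ℂ)
  | 0 => 1
  | n + 1 => transferPolynomial lam E b n * cocyclePolynomial lam E b n

variable {b : ℝ}

lemma map_eval_transferPolynomial (lam E b : ℝ) {ρ : ℝ} (hρ : ρ ≠ 0) (n : ℕ) (x : ℝ) :
    (transferPolynomial lam E b n).map (Polynomial.evalRingHom (ρ * 𝐞 x : ℂ)) =
      (ρ * 𝐞 x : ℂ) • transferMatrix (amoSampling lam E ρ (x + n * b)) := by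
  have hρ' : (ρ : ℂ) ≠ 0 := by exact_mod_cast hρ
  have hx : (𝐞 x : ℂ) ≠ 0 := Circle.coe_ne_zero _
  ext i j
  fin_cases i <;> fin_cases j
  · simp only [transferPolynomial, transferMatrix, amoSampling, AddChar.map_add_eq_mul,
      AddChar.map_neg_eq_inv, Circle.coe_inv, Circle.coe_mul, Complex.ofReal_inv, neg_add_rev,
      Polynomial.coe_evalRingHom, Polynomial.eval_sub, Polynomial.eval_mul, Polynomial.eval_C,
      Polynomial.eval_X, Polynomial.eval_add, Polynomial.eval_pow, Fin.zero_eta, map_apply,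
      Matrix.smul_apply, of_apply, cons_val', cons_val_zero, cons_val_fin_one, smul_eq_mul]
    field_simp
  all_goals simp [transferPolynomial, transferMatrix]

lemma map_eval_cocyclePolynomial (lam E b : ℝ) {ρ : ℝ} (hρ : ρ ≠ 0) (n : ℕ) (x : ℝ) :
    (cocyclePolynomial lam E b n).map (Polynomial.evalRingHom (ρ * 𝐞 x : ℂ)) =
      (ρ * 𝐞 x : ℂ) ^ n • cocycle (amoSampling lam E ρ) b n x := by
  induction n with
  | zero => simp [cocyclePolynomial, cocycle]
  | succ n ih =>
    rw [cocyclePolynomial, Matrix.map_mul, map_eval_transferPolynomial lam E b hρ, ih, cocycle_succ,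
      Matrix.smul_mul, Matrix.mul_smul, smul_smul, pow_succ']

lemma norm_eval_cocyclePolynomial (lam E b : ℝ) {ρ : ℝ} (hρ : 0 < ρ) (n : ℕ) (x : ℝ) (i j : Fin 2) :
    ‖(cocyclePolynomial lam E b n i j).eval (ρ * 𝐞 x : ℂ)‖ =
      ρ ^ n * ‖cocycle (amoSampling lam E ρ) b n x i j‖ := by
  have h := congrFun₂ (map_eval_cocyclePolynomial lam E b hρ.ne' n x) i j
  rw [map_apply, Polynomial.coe_evalRingHom, Matrix.smul_apply, smul_eq_mul] at h
  rw [h, norm_mul, norm_pow, norm_mul, Circle.norm_coe, mul_one, Complex.norm_real,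
    Real.norm_of_nonneg hρ.le]

lemma exists_norm_cocycle_amoSampling_le {lam E ρ Λ : ℝ} (hb : Irrational b) (hρ : 0 < ρ)
    (hΛ : lyapunovExponent (amoSampling lam E 1) b < Λ)
    (hΛ' : Real.log |lam| + |Real.log ρ| < Λ) :
    ∃ C > 0, ∀ n x, ‖cocycle (amoSampling lam E ρ) b n x‖ ≤ C * Real.exp (n * Λ) :=
  exists_norm_cocycle_le_exp hb (continuous_amoSampling lam E ρ) (periodic_amoSampling lam E ρ)
    ((lyapunovExponent_amoSampling_le hb hρ E).trans_lt (max_lt hΛ hΛ'))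

lemma exists_norm_eval_cocyclePolynomial_le {lam E R Λ : ℝ} (hb : Irrational b) (hR : 1 < R)
    (hΛ : lyapunovExponent (amoSampling lam E 1) b < Λ) (hΛ' : Real.log |lam| + Real.log R < Λ) :
    ∃ C > 0, ∀ (n : ℕ) (i j : Fin 2) (z : ℂ), ‖z‖ = R ∨ ‖z‖ = R⁻¹ →
      ‖(cocyclePolynomial lam E b n i j).eval z‖ ≤ ‖z‖ ^ n * (C * Real.exp (n * Λ)) := by
  have hR₀ : 0 < R := one_pos.trans hR
  have habs : |Real.log R| = Real.log R := abs_of_pos (Real.log_pos hR)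
  have hgrowth : ∀ ρ > 0, |Real.log ρ| = Real.log R →
      ∃ C > 0, ∀ n x, ‖cocycle (amoSampling lam E ρ) b n x‖ ≤ C * Real.exp (n * Λ) :=
    fun ρ hρ hlog => exists_norm_cocycle_amoSampling_le hb hρ hΛ (hlog ▸ hΛ')
  obtain ⟨C₁, hC₁, hout⟩ := hgrowth R hR₀ habs
  obtain ⟨C₂, -, hin⟩ := hgrowth R⁻¹ (inv_pos.2 hR₀) (by rw [Real.log_inv, abs_neg, habs])
  refine ⟨max C₁ C₂, lt_max_of_lt_left hC₁, fun n i j z hz => ?_⟩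
  have hz₀ : 0 < ‖z‖ := by rcases hz with hz | hz <;> rw [hz] <;> positivity
  obtain ⟨y, hy⟩ := exists_eq_norm_mul_fourierChar z
  rw [hy, norm_eval_cocyclePolynomial lam E b hz₀, ← hy]
  refine mul_le_mul_of_nonneg_left ((norm_entry_le_l2_opNorm _ i j).trans ?_) (by positivity)
  rcases hz with hz | hz <;> rw [hz]
  · exact (hout n y).trans (by gcongr; exact le_max_left _ _)
  · exact (hin n y).trans (by gcongr; exact le_max_right _ _)

lemma exists_frequently_norm_cocycle_le {lam E R : ℝ} (hb : Irrational b) (hR : 1 < R)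
    (hdich : ∀ h : ℕ, ∃ x, ‖cocycle (amoSampling lam E 1) b (h + h) x‖ ≤
      3 * (‖cocycle (amoSampling lam E 1) b h x‖ +
        ‖cocycle (amoSampling lam E 1) b h (x + h * b)‖)) :
    ∃ δ : ℝ, ∀ η > 0, η ≤ 1 → ∀ Λ > lyapunovExponent (amoSampling lam E 1) b,
      Real.log |lam| + Real.log R < Λ → ∀ K : ℕ, 0 < K → ∃ C > 0, ∃ᶠ s : ℕ in atTop,
        ∀ y, ‖cocycle (amoSampling lam E 1) b (K * s + K * s) y‖ ≤ C *
          (Real.exp (s * (δ + (K + 4) * Λ)) + Real.exp (s * (2 * K * Λ - (Real.log R - η)))) := by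
  set g := amoSampling lam E 1
  obtain ⟨δ, hδ⟩ := exists_frequently_norm_eval_le hb hR
  refine ⟨δ, fun η hη hη₁ Λ hΛ hΛ' K hK => ?_⟩
  have hΛ₀ : 0 ≤ Λ := (lyapunovExponent_nonneg g b).trans hΛ.le
  obtain ⟨C, hC, hfreq⟩ := hδ η hη hη₁
  obtain ⟨C₁, hC₁, hcircle⟩ := exists_norm_cocycle_le_exp hb (continuous_amoSampling lam E 1)
    (periodic_amoSampling lam E 1) hΛ
  obtain ⟨C₂, hC₂, hannulus⟩ := exists_norm_eval_cocyclePolynomial_le hb hR hΛ hΛ'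
  set D := max (24 * C₁ ^ 3) C₂
  have : 0 < D := lt_max_of_lt_right hC₂
  refine ⟨4 * C * D, by positivity, hfreq.mono fun s hs y => ?_⟩
  obtain ⟨x, hx⟩ := hdich (K * s)
  obtain ⟨i, j, hij⟩ := exists_l2_opNorm_le_four_mul (cocycle g b (K * s + K * s) y)
  have heval : ∀ t : ℝ, ‖(cocyclePolynomial lam E b (K * s + K * s) i j).eval (𝐞 t : ℂ)‖ =
      ‖cocycle g b (K * s + K * s) t i j‖ := fun t => by
    simpa using norm_eval_cocyclePolynomial lam E b one_pos (K * s + K * s) t i j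
  have horbit : ∀ l < 2 * s,
      ‖(cocyclePolynomial lam E b (K * s + K * s) i j).eval (𝐞 (x + l * b) : ℂ)‖ ≤
        24 * C₁ ^ 3 * Real.exp (((K * s : ℕ) + 2 * (2 * s : ℕ)) * Λ) := fun l hl =>
    (heval _).trans_le ((norm_entry_le_l2_opNorm _ i j).trans
      (norm_cocycle_add_self_le_of_orbit hC₁ hΛ₀ hcircle hx hl.le))
  have hbound := hs _ _ _ _ x ((Nat.le_mul_of_pos_left s hK).trans (Nat.le_add_right _ _))
    (by positivity) (hannulus _ i j) (by positivity) horbit (𝐞 y) (Circle.norm_coe _)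
  rw [heval] at hbound
  calc ‖cocycle g b (K * s + K * s) y‖
    _ ≤ 4 * (C * (Real.exp (s * δ) * (D * Real.exp (((K * s : ℕ) + 2 * (2 * s : ℕ)) * Λ)) +
          Real.exp (-s * (Real.log R - η)) * (D * Real.exp ((K * s + K * s : ℕ) * Λ)))) := by
      refine (hij.trans (mul_le_mul_of_nonneg_left hbound zero_le_four)).trans ?_
      gcongr
      · exact le_max_left _ _
      · exact le_max_right _ _
    _ = 4 * C * D * (Real.exp (s * δ + ((K * s : ℕ) + 2 * (2 * s : ℕ)) * Λ) +
          Real.exp (-s * (Real.log R - η) + (K * s + K * s : ℕ) * Λ)) := by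
      rw [Real.exp_add, Real.exp_add]
      ring
    _ = _ := by
      push_cast
      ring_nf

lemma exists_natCast_mul_and_small (δ r : ℝ) {L : ℝ} (hL : 0 < L) (hr : 0 < r) :
    ∃ K : ℕ, 0 < K ∧ ∃ η > 0, η ≤ 1 ∧ δ + (K + 4) * (L + η) ≤ 2 * K * L - r / 2 ∧
      2 * K * (L + η) - (r - η) ≤ 2 * K * L - r / 2 := by
  obtain ⟨K, hK⟩ := exists_nat_gt (max 0 ((δ + 4 * L + r) / L))
  obtain ⟨hK₀, hKL⟩ := max_lt_iff.1 hK
  rw [div_lt_iff₀ hL] at hKL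
  have hη : min 1 (r / 2 / (2 * K + 5)) * (2 * K + 5) ≤ r / 2 :=
    (le_div_iff₀ (by positivity)).1 (min_le_right _ _)
  set η := min 1 (r / 2 / (2 * K + 5))
  have hη₀ : 0 < η := lt_min one_pos (by positivity)
  have hKη : 0 < K * η := by positivity
  exact ⟨K, by exact_mod_cast hK₀, η, hη₀, min_le_left _ _, by linarith, by linarith⟩

theorem lyapunovExponent_amoSampling_one_le {lam E : ℝ} (hb : Irrational b)
    (hdich : ∀ h : ℕ, ∃ x, ‖cocycle (amoSampling lam E 1) b (h + h) x‖ ≤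
      3 * (‖cocycle (amoSampling lam E 1) b h x‖ +
        ‖cocycle (amoSampling lam E 1) b h (x + h * b)‖)) :
    lyapunovExponent (amoSampling lam E 1) b ≤ max (Real.log |lam|) 0 := by
  by_contra! hlt
  obtain ⟨hlam, hL⟩ := max_lt_iff.1 hlt
  set L := lyapunovExponent (amoSampling lam E 1) b
  set r := L - Real.log |lam|
  have hr : 0 < r := sub_pos.2 hlam
  obtain ⟨δ, hδ⟩ := exists_frequently_norm_cocycle_le hb (Real.one_lt_exp_iff.2 hr) hdich
  obtain ⟨K, hK, η, hη, hη₁, hsmall₁, hsmall₂⟩ := exists_natCast_mul_and_small δ r hL hr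
  obtain ⟨C, hC, hfreq⟩ := hδ η hη hη₁ (L + η) (by linarith) (by rw [Real.log_exp]; linarith) K hK
  have hlarge : ∀ᶠ s : ℕ in atTop, 2 * C < Real.exp (s * (r / 2)) :=
    (Real.tendsto_exp_atTop.comp (tendsto_natCast_atTop_atTop.atTop_mul_const
      (half_pos hr))).eventually_gt_atTop _
  obtain ⟨s, hs, hslarge, hs₀⟩ :=
    (hfreq.and_eventually (hlarge.and (eventually_gt_atTop 0))).exists
  obtain ⟨y, hy⟩ := exists_exp_mul_lyapunovExponent_le (continuous_amoSampling lam E 1) b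
    (by positivity : 0 < K * s + K * s)
  rw [Real.log_exp] at hs
  have hle : Real.exp (s * (2 * K * L)) ≤ 2 * C * Real.exp (s * (2 * K * L - r / 2)) := calc
    Real.exp (s * (2 * K * L)) = Real.exp ((K * s + K * s : ℕ) * L) := by push_cast; ring_nf
    _ ≤ C * (Real.exp (s * (2 * K * L - r / 2)) + Real.exp (s * (2 * K * L - r / 2))) :=
      (hy.trans (hs y)).trans (by gcongr)
    _ = 2 * C * Real.exp (s * (2 * K * L - r / 2)) := by ring
  rw [mul_sub, Real.exp_sub, mul_div_left_comm, le_mul_iff_one_le_right (Real.exp_pos _),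
    one_le_div (Real.exp_pos _)] at hle
  exact hle.not_gt hslarge

end UpperBound

end AlmostMathieu

/-- for `α = 0` (the almost Mathieu operator, `v(x) = 2λcos(2πx)`),
for every `θ` and every `E` in the spectrum, `L(E) = max{log|λ|, 0}`. -/
theorem lyapunov_almost_mathieu (lam b θ : ℝ) (hb : Irrational b)
    (H : lp (fun _ : ℤ => ℂ) 2 →L[ℂ] lp (fun _ : ℤ => ℂ) 2)
    (hH : IsSchrodingerOp (potV 0 lam) b θ H)
    (E : ℝ) (hE : (E : ℂ) ∈ spectrum ℂ H) :
    lyap (potV 0 lam) b (E : ℂ) = max (Real.log |lam|) 0 := by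
  have hdich := AlmostMathieu.exists_norm_cocycle_add_self_le hH
    (AlmostMathieu.continuous_potV_zero lam) (AlmostMathieu.periodic_potV_zero lam) hE
  rw [AlmostMathieu.sub_potV_eq_amoSampling] at hdich
  rw [AlmostMathieu.lyap_eq_lyapunovExponent, AlmostMathieu.sub_potV_eq_amoSampling]
  have hnonneg := AlmostMathieu.lyapunovExponent_nonneg (AlmostMathieu.amoSampling lam E 1) b
  refine le_antisymm (AlmostMathieu.lyapunovExponent_amoSampling_one_le hb hdich)
    (max_le ?_ hnonneg)
  rcases eq_or_ne lam 0 with rfl | hlam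
  · rwa [abs_zero, Real.log_zero]
  · exact AlmostMathieu.log_abs_le_lyapunovExponent_amoSampling hb hlam E
end
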